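/- Let μ be an ergodic process on Σ = 𝒜^{ℤ_{≥0}^d} with entropy rate h_μ, let 0 < φ < 1, and let α_0 > 0. For x ∈ Σ set B_{α_0}^+ := {k : M_k(x) ≥ A^{k^d(h_μ+α_0)}}, B_{α_0}^− := {k : M_k(x) ≤ A^{k^d(h_μ−α_0)}}, and B_{α_0} := B_{α_0}^+ ∪ B_{α_0}^−. Then for μ-almost every x, the upper asymptotic density of the set ∪_{k∈B_{α_0}} L_k(x) ⊆ ℤ_{≥0}^d is zero. -/

import Mathlib

open MeasureTheory Filter Topology

namespace SRU1408

/-- A site of the lattice `ℤ_{≥0}^d`. -/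
abbrev Site (d : ℕ) := Fin d → ℕ

/-- An infinite array over the alphabet `Fin A`, i.e. an element of `Σ = 𝒜^{ℤ_{≥0}^d}`. -/
abbrev Config (A d : ℕ) := Site d → Fin A

/-- A cubical `k`-word, i.e. an element of `Σ^k = 𝒜^{Λ_k}`. -/
abbrev Word (A d k : ℕ) := (Fin d → Fin k) → Fin A

variable {A d : ℕ}

/-- The pattern of `x` on the cube `Λ_k + c`, as a `k`-word. -/
def wordAt (x : Config A d) (k : ℕ) (c : Site d) : Word A d k :=
  fun i => x fun j => c j + (i j : ℕ)

/-- The lattice shift `σ_r`. -/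
def shift (r : Site d) (x : Config A d) : Config A d := fun i => x (i + r)

/-- Stationarity: invariance under all shifts. -/
def Stationary (μ : Measure (Config A d)) : Prop := ∀ r : Site d, μ.map (shift r) = μ

/-- Ergodicity: stationary, and every measurable set invariant under all shifts is trivial. -/
def ErgodicShift (μ : Measure (Config A d)) : Prop :=
  Stationary μ ∧ ∀ E : Set (Config A d), MeasurableSet E →
    (∀ r : Site d, shift r ⁻¹' E = E) → μ E = 0 ∨ μ E = 1

/-- The `k`-word marginal distribution `μ^k`, as a probability vector on `Σ^k`. -/
noncomputable def wordDist (μ : Measure (Config A d)) (k : ℕ) : Word A d k → ℝ :=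
  fun w => (μ {x | wordAt x k 0 = w}).toReal

/-- Base-`A` entropy of a probability vector. -/
noncomputable def entH (A : ℕ) {W : Type*} [Fintype W] (p : W → ℝ) : ℝ :=
  -∑ w, p w * Real.logb A (p w)

/-- `μ` has entropy rate `h` (base-`A` logarithms): `H(μ^n)/n^d → h`. -/
def HasEntropyRate (μ : Measure (Config A d)) (h : ℝ) : Prop :=
  Tendsto (fun n : ℕ => entH A (wordDist μ n) / (n : ℝ) ^ d) atTop (𝓝 h)

/-- Lexicographically ordered list of the tuples in `Λ_n ⊂ ℤ_{≥0}^d`. -/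
def tuples : (d : ℕ) → ℕ → List (Fin d → ℕ)
  | 0, _ => [fun i => i.elim0]
  | d + 1, n => (List.range n).flatMap fun a => (tuples d n).map fun t => Fin.cons a t

/-- State of the `SRU_φ` parser: parsed cube `Λ_m`, current block size `k`, and the current
parsing, a list of cubical blocks (corner and side length) in the order they were parsed. -/
structure PState (d : ℕ) where
  m : ℕ
  k : ℕ
  blocks : List ((Fin d → ℕ) × ℕ)

/-- The recurrence quantity `J(P, k)`: the fraction of `k`-blocks of the parsing whose words
occur at least twice among the parsed `k`-words (`0` if there are no `k`-blocks). -/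
noncomputable def Jval (x : Config A d) (P : List ((Fin d → ℕ) × ℕ)) (k : ℕ) : ℝ :=
  let Pk := P.filter fun b => decide (b.2 = k)
  ((Pk.filter fun b =>
      decide (2 ≤ (Pk.filter fun b' =>
        decide (wordAt x k b'.1 = wordAt x k b.1)).length)).length : ℝ) / (Pk.length : ℝ)

open scoped Classical in
/-- One step of the `SRU_φ` parser: if `J(P_m, k) ≥ φ`, increase the block size; otherwise
parse the boundary region `L = Λ_{⌊m/k⌋k+k} \ Λ_{⌊m/k⌋k}` regularly into `k`-blocks,
appending them in lexicographic order of their corners, and set `m := ⌊m/k⌋k + k`. -/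
noncomputable def step (φ : ℝ) (x : Config A d) (s : PState d) : PState d :=
  if φ ≤ Jval x s.blocks s.k then { s with k := s.k + 1 }
  else
    { m := s.m / s.k * s.k + s.k
      k := s.k
      blocks := s.blocks ++
        (((tuples d (s.m / s.k + 1)).filter fun r => decide (¬ ∀ j, r j < s.m / s.k)).map
          fun r => (fun j => s.k * r j, s.k)) }

/-- The `SRU_φ` parser iterated from the initial state `m = 0`, `k = 1`, empty parsing. -/
noncomputable def iter (φ : ℝ) (x : Config A d) : ℕ → PState d
  | 0 => ⟨0, 1, []⟩
  | t + 1 => step φ x (iter φ x t)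

/-- Membership of a site in a block. -/
def inBlock (i : Site d) (b : (Fin d → ℕ) × ℕ) : Prop :=
  ∀ j, b.1 j ≤ i j ∧ i j < b.1 j + b.2

/-- `L_k(x)`: the region parsed with block size `k`. -/
def Lregion (φ : ℝ) (x : Config A d) (k : ℕ) : Set (Site d) :=
  {i | ∃ t, ∃ b ∈ (iter φ x t).blocks, b.2 = k ∧ inBlock i b}

/-- `M_k(x)`: the number of distinct `k`-words parsed in `L_k(x)`. -/
noncomputable def Mk (φ : ℝ) (x : Config A d) (k : ℕ) : ℕ :=
  Set.ncard {w : Word A d k | ∃ t, ∃ b ∈ (iter φ x t).blocks, b.2 = k ∧ wordAt x k b.1 = w}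

/-- The cube `Λ_n` as a set of sites. -/
def cubeSet (d n : ℕ) : Set (Site d) := {i | ∀ j, i j < n}

/-- Upper asymptotic density of a set of sites. -/
noncomputable def upperDensity (S : Set (Site d)) : ℝ :=
  limsup (fun n : ℕ => (Set.ncard (S ∩ cubeSet d n) : ℝ) / (n : ℝ) ^ d) atTop

/-- `k` is a typical scale for `x`: `A^{k^d(h-α₀)} ≤ M_k(x) ≤ A^{k^d(h+α₀)}`. -/
def TypicalScale (φ : ℝ) (x : Config A d) (h α0 : ℝ) (k : ℕ) : Prop :=
  (A : ℝ) ^ ((k : ℝ) ^ d * (h - α0)) ≤ (Mk φ x k : ℝ) ∧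
    (Mk φ x k : ℝ) ≤ (A : ℝ) ^ ((k : ℝ) ^ d * (h + α0))

/-- The total volume `|L_l^u| = Σ_{l ≤ k ≤ u} |L_k(x)|`. -/
noncomputable def volIcc (φ : ℝ) (x : Config A d) (l u : ℕ) : ℝ :=
  ∑ k ∈ Finset.Icc l u, (Set.ncard (Lregion φ x k) : ℝ)

open scoped Classical in
/-- The `i`-th block ever appended by the parser (the block lists grow by appending). -/
noncomputable def blockSeq (φ : ℝ) (x : Config A d) (i : ℕ) : Option ((Fin d → ℕ) × ℕ) :=
  if h : ∃ t, i < (iter φ x t).blocks.length then ((iter φ x h.choose).blocks)[i]? else none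

/-- The side length of the largest leading sub-word of the `i`-th parsed word that occurs as
a leading sub-word of a previously parsed word (`0` if there is none). -/
noncomputable def matchLen (φ : ℝ) (x : Config A d) (i : ℕ) : ℕ :=
  sSup {l : ℕ | ∃ b, blockSeq φ x i = some b ∧ l ≤ b.2 ∧
    ∃ j < i, ∃ b', blockSeq φ x j = some b' ∧ l ≤ b'.2 ∧ wordAt x l b.1 = wordAt x l b'.1}

/-- The length (in alphabet symbols) of the code of the `i`-th parsed word: a pointer to a
previously parsed word, a descriptor of `O(log)` length (side length and position of the
block, and side length of the referenced leading sub-word), and the list of the entries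
outside the referenced leading sub-word. -/
noncomputable def codeLen (φ : ℝ) (x : Config A d) (i : ℕ) : ℕ :=
  match blockSeq φ x i with
  | none => 0
  | some b =>
    (Nat.log A (i + 1) + 1) + (Nat.log A (b.2 + 1) + 1) +
      (∑ j : Fin d, (Nat.log A (b.1 j + 1) + 1)) +
      (Nat.log A (matchLen φ x i + 1) + 1) + (b.2 ^ d - matchLen φ x i ^ d)

/-- The first time at which the parsed region covers `Λ_n`. -/
noncomputable def coverTime (φ : ℝ) (x : Config A d) (n : ℕ) : ℕ :=
  sInf {t | n ≤ (iter φ x t).m}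

/-- `|C_φ(x^n)|`: the total length of the code of the portion of the parsing covering `Λ_n`. -/
noncomputable def codeLength (φ : ℝ) (x : Config A d) (n : ℕ) : ℕ :=
  ∑ i ∈ Finset.range ((iter φ x (coverTime φ x n)).blocks.length), codeLen φ x i

/-!
The blocks parsed at scale `k` fill a shell whose thickness and distance to the origin are
multiples of `k`, and shells of different scales overlap in at most one layer of blocks. A scale
ends when a proportion `φ` of its blocks carries repeated words, and before its last layer it does
not satisfy this condition.

*Many words.* A scale with at least `A ^ (k ^ d * (h + α))` distinct words is either at most `2 * d`
layers thick or exceeds, already without its last layer, the number of typical words by a large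
factor. In the second case a proportion `(1 - φ) / 2` of its blocks carries atypical words, because
unrepeated typical words are few, and disjoint cubes with atypical words have density zero. Thin
shells at exponentially large distance have summable relative volumes.

*Few words.* If a scale has at most `A ^ (k ^ d * (h - α))` distinct words, then at least the
proportion `φ / 2` of its blocks is copied from few representatives. A configuration for which such
copies fill a positive proportion of `Λ_n` is determined by the packing and by the remaining blocks,
of which typical configurations have `A ^ (n ^ d * h)` up to a small error in the exponent. Thus
there are exponentially fewer such patterns than `A ^ (n ^ d * h)`, and a family of exponentially
few patterns is almost surely avoided: otherwise disjoint large cubes carrying these patterns would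
fill a positive proportion of `Λ_N`, and the entropy rate would be smaller than `h`.

The ergodic input is the mean ergodic theorem together with a maximal inequality, which tile most of
`Λ_n` by cubes with prescribed words.
-/

/-! ### Cubes, packings and tilings -/

/-- The cube `Λ_k + c`, with smallest site `c` and side length `k`. -/
def cube (c : Site d) (k : ℕ) : Finset (Site d) :=
  Fintype.piFinset fun j => Finset.Ico (c j) (c j + k)

section Cubes

variable {c c' i : Site d} {k l n : ℕ}

lemma mem_cube : i ∈ cube c k ↔ ∀ j, c j ≤ i j ∧ i j < c j + k := by
  simp [cube]

lemma mem_cube_zero : i ∈ cube 0 k ↔ ∀ j, i j < k := by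
  simp [mem_cube]

lemma card_cube (c : Site d) (k : ℕ) : (cube c k).card = k ^ d := by
  simp [cube, Fintype.card_piFinset]

lemma cube_zero_mono (h : k ≤ l) : cube (0 : Site d) k ⊆ cube 0 l := fun _ hi =>
  mem_cube_zero.2 fun j => (mem_cube_zero.1 hi j).trans_le h

lemma self_mem_cube (c : Site d) (hk : 0 < k) : c ∈ cube c k :=
  mem_cube.2 fun _ => ⟨le_rfl, Nat.lt_add_of_pos_right hk⟩

lemma coe_cube_zero (n : ℕ) : (cube (0 : Site d) n : Set (Site d)) = cubeSet d n := by
  ext i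
  simp [cubeSet, mem_cube_zero]

lemma cube_subset_cube_zero (h : ∀ j, c j + k ≤ n) : cube c k ⊆ cube 0 n := fun _ hi =>
  mem_cube_zero.2 fun j => (mem_cube.1 hi j).2.trans_le (h j)

lemma add_le_of_cube_subset (hk : 0 < k) (h : cube c k ⊆ cube 0 n) (j : Fin d) :
    c j + k ≤ n := by
  have far_corner : (fun l => c l + (k - 1)) ∈ cube c k := mem_cube.2 fun l => by omega
  have := mem_cube_zero.1 (h far_corner) j
  omega

lemma add_mem_cube : i + c ∈ cube c k ↔ i ∈ cube 0 k := by
  simp only [mem_cube, Pi.add_apply, Pi.zero_apply]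
  exact forall_congr' fun j => by omega

lemma card_cube_sdiff_cube (h : cube c k ⊆ cube c' l) :
    ((cube c' l \ cube c k).card : ℝ) = (l : ℝ) ^ d - (k : ℝ) ^ d := by
  rw [Finset.cast_card_sdiff h, card_cube, card_cube]
  push_cast
  rfl

end Cubes

lemma eventually_le_mul_pow {d : ℕ} (hd : 1 ≤ d) {ε : ℝ} (hε : 0 < ε) (c : ℝ) :
    ∀ᶠ n : ℕ in atTop, c ≤ ε * (n : ℝ) ^ d :=
  (((tendsto_pow_atTop (by omega)).comp tendsto_natCast_atTop_atTop).const_mul_atTop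
    hε).eventually_ge_atTop c

lemma eventually_add_pow_sub_pow_le (d p : ℕ) {ε : ℝ} (hε : 0 < ε) :
    ∀ᶠ k : ℕ in atTop, ((k + p : ℕ) : ℝ) ^ d - (k : ℝ) ^ d ≤ ε * (k : ℝ) ^ d := by
  have ratio_tendsto : Tendsto (fun k : ℕ => (1 + (p : ℝ) / k) ^ d) atTop (𝓝 ((1 + 0) ^ d)) :=
    (tendsto_const_nhds.add (tendsto_const_div_atTop_nhds_zero_nat _)).pow d
  rw [add_zero, one_pow] at ratio_tendsto
  filter_upwards [ratio_tendsto.eventually_le_const (lt_add_of_pos_right 1 hε),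
    eventually_gt_atTop 0] with k ratio_le hk
  have hk : (0 : ℝ) < k := by exact_mod_cast hk
  have factor : ((k + p : ℕ) : ℝ) ^ d = (1 + (p : ℝ) / k) ^ d * (k : ℝ) ^ d := by
    rw [← mul_pow]
    push_cast
    congr 1
    field_simp
  rw [factor]
  linarith [mul_le_mul_of_nonneg_right ratio_le (pow_nonneg hk.le d)]

lemma eventually_pow_sub_sub_pow_le (d p : ℕ) {ε : ℝ} (hε : 0 < ε) :
    ∀ᶠ k : ℕ in atTop, (k : ℝ) ^ d - ((k - p : ℕ) : ℝ) ^ d ≤ ε * (k : ℝ) ^ d := by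
  filter_upwards [(tendsto_sub_atTop_nat p).eventually (eventually_add_pow_sub_pow_le d p hε),
    eventually_ge_atTop p] with k hk hpk
  rw [Nat.sub_add_cancel hpk] at hk
  refine hk.trans ?_
  gcongr
  exact Nat.sub_le k p

/-- The total volume of a finite family of cubes, each encoded by its smallest site and its side
length. -/
def vol (Z : Finset (Site d × ℕ)) : ℕ := ∑ b ∈ Z, b.2 ^ d

/-- The set of sites covered by a finite family of cubes. -/
def cover (Z : Finset (Site d × ℕ)) : Finset (Site d) := Z.biUnion fun b => cube b.1 b.2

/-- `Z` is a packing of `Λ_n`: a finite family of pairwise disjoint cubes contained in `Λ_n`. -/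
structure IsPacking (Z : Finset (Site d × ℕ)) (n : ℕ) : Prop where
  cube_subset : ∀ b ∈ Z, cube b.1 b.2 ⊆ cube 0 n
  pairwiseDisjoint : (Z : Set (Site d × ℕ)).PairwiseDisjoint fun b => cube b.1 b.2

lemma mem_cover {Z : Finset (Site d × ℕ)} {i : Site d} :
    i ∈ cover Z ↔ ∃ b ∈ Z, i ∈ cube b.1 b.2 := by
  simp [cover]

lemma card_cover_of_pairwiseDisjoint {Z : Finset (Site d × ℕ)}
    (h : (Z : Set (Site d × ℕ)).PairwiseDisjoint fun b => cube b.1 b.2) :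
    (cover Z).card = vol Z := by
  simp [cover, Finset.card_biUnion h, vol, card_cube]

namespace IsPacking

variable {Z : Finset (Site d × ℕ)} {n : ℕ}

lemma cover_subset (h : IsPacking Z n) : cover Z ⊆ cube 0 n := Finset.biUnion_subset.2 h.1

lemma vol_le (h : IsPacking Z n) : vol Z ≤ n ^ d := by
  rw [← card_cover_of_pairwiseDisjoint h.2, ← card_cube (0 : Site d) n]
  exact Finset.card_le_card h.cover_subset

lemma vol_le_real (h : IsPacking Z n) : (vol Z : ℝ) ≤ (n : ℝ) ^ d := mod_cast h.vol_le

end IsPacking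

lemma exists_disjoint_cubes (R : Finset (Site d)) (n : Site d → ℕ) (hn : ∀ r ∈ R, 0 < n r) :
    ∃ u ⊆ R, (u : Set (Site d)).PairwiseDisjoint (fun r => cube r (n r)) ∧
      R.card ≤ 3 ^ d * ∑ r ∈ u, n r ^ d := by
  obtain ⟨u, hu_subset, hu_disjoint, hu_meets⟩ :=
    Vitali.exists_disjoint_subfamily_covering_enlargement
      (fun r : Site d => (cube r (n r) : Set (Site d))) (R : Set (Site d)) (fun r => (n r : ℝ))
      2 (by norm_num) (fun _ _ => by positivity) ((R.sup n : ℕ) : ℝ)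
      (fun r hr => by exact_mod_cast Finset.le_sup (f := n) hr)
      (fun r hr => ⟨r, by exact_mod_cast self_mem_cube r (hn r hr)⟩)
  lift u to Finset (Site d) using R.finite_toSet.subset hu_subset
  refine ⟨u, by exact_mod_cast hu_subset, fun a ha b hb hab => ?_, ?_⟩
  · simpa [Function.onFun, Finset.disjoint_coe] using hu_disjoint ha hb hab
  have subset_enlarged : R ⊆ u.biUnion fun c => cube (fun j => c j - 2 * n c) (3 * n c) := by
    intro r hr
    obtain ⟨c, hc, ⟨i, hir, hic⟩, side_le⟩ := hu_meets r hr
    simp only [Finset.mem_coe, mem_cube] at hir hic hc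
    have side_le : n r ≤ 2 * n c := by exact_mod_cast side_le
    refine Finset.mem_biUnion.2 ⟨c, hc, mem_cube.2 fun j => ?_⟩
    have := hir j
    have := hic j
    constructor <;> omega
  calc R.card ≤ ∑ c ∈ u, (cube (fun j => c j - 2 * n c) (3 * n c)).card :=
        (Finset.card_le_card subset_enlarged).trans Finset.card_biUnion_le
    _ = 3 ^ d * ∑ r ∈ u, n r ^ d := by
        simp only [card_cube, mul_pow, Finset.mul_sum]

open scoped Classical in
/-- The packings of `Λ_N` by cubes whose side lengths lie between `k` and `N`. -/
noncomputable def packings (d k N : ℕ) : Finset (Finset (Site d × ℕ)) :=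
  ((cube (0 : Site d) N) ×ˢ Finset.Icc k N).powerset.filter (IsPacking · N)

lemma isPacking_of_mem_packings {k N : ℕ} {Z : Finset (Site d × ℕ)} (hZ : Z ∈ packings d k N) :
    IsPacking Z N := by
  classical
  rw [packings, Finset.mem_filter] at hZ
  exact hZ.2

lemma IsPacking.mem_packings {k N : ℕ} {Z : Finset (Site d × ℕ)} (hZ : IsPacking Z N)
    (hd : 1 ≤ d) (hk : 1 ≤ k) (hside : ∀ b ∈ Z, k ≤ b.2) : Z ∈ packings d k N := by
  classical
  rw [packings, Finset.mem_filter, Finset.mem_powerset]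
  refine ⟨fun b hb => ?_, hZ⟩
  have side_pos : 0 < b.2 := hk.trans (hside b hb)
  have := add_le_of_cube_subset side_pos (hZ.cube_subset b hb) ⟨0, hd⟩
  exact Finset.mem_product.2 ⟨hZ.cube_subset b hb (self_mem_cube _ side_pos),
    Finset.mem_Icc.2 ⟨hside b hb, by omega⟩⟩

/- Each packing has weight at least `1` in the generating function
`t ^ (N ^ d) * ∑ Z, t⁻¹ ^ vol Z`, which factors over the available cubes. -/
lemma card_packings_le (d k N : ℕ) {t : ℝ} (ht : 1 ≤ t) :
    ((packings d k N).card : ℝ) ≤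
      t ^ N ^ d * Real.exp ((N : ℝ) ^ d * ∑ j ∈ Finset.Icc k N, (t⁻¹) ^ j ^ d) := by
  classical
  have : 0 < t := zero_lt_one.trans_le ht
  set cubes := (cube (0 : Site d) N) ×ˢ Finset.Icc k N with hcubes
  have one_le_weight : ∀ Z ∈ packings d k N, 1 ≤ t ^ N ^ d * ∏ b ∈ Z, (t⁻¹) ^ b.2 ^ d :=
    fun Z hZ => by
      rw [Finset.prod_pow_eq_pow_sum, ← vol, inv_pow, ← div_eq_mul_inv, one_le_div (by positivity)]
      exact pow_le_pow_right₀ ht (isPacking_of_mem_packings hZ).vol_le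
  calc ((packings d k N).card : ℝ) = ∑ _Z ∈ packings d k N, (1 : ℝ) := by simp
    _ ≤ ∑ Z ∈ packings d k N, t ^ N ^ d * ∏ b ∈ Z, (t⁻¹) ^ b.2 ^ d :=
        Finset.sum_le_sum one_le_weight
    _ ≤ ∑ Z ∈ cubes.powerset, t ^ N ^ d * ∏ b ∈ Z, (t⁻¹) ^ b.2 ^ d :=
        Finset.sum_le_sum_of_subset_of_nonneg (Finset.filter_subset _ _)
          fun _ _ _ => by positivity
    _ = t ^ N ^ d * ∏ b ∈ cubes, (1 + (t⁻¹) ^ b.2 ^ d) := by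
        rw [← Finset.mul_sum, Finset.prod_one_add]
    _ ≤ t ^ N ^ d * ∏ b ∈ cubes, Real.exp ((t⁻¹) ^ b.2 ^ d) := by
        gcongr with b
        rw [add_comm]
        exact Real.add_one_le_exp _
    _ = t ^ N ^ d * Real.exp ((N : ℝ) ^ d * ∑ j ∈ Finset.Icc k N, (t⁻¹) ^ j ^ d) := by
        rw [← Real.exp_sum, hcubes, Finset.sum_product]
        simp [card_cube]

lemma eventually_sum_Icc_pow_le {ρ : ℝ} (hρ0 : 0 ≤ ρ) (hρ1 : ρ < 1) {d : ℕ} (hd : 1 ≤ d)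
    {ε : ℝ} (hε : 0 < ε) :
    ∀ᶠ k : ℕ in atTop, ∀ N : ℕ, ∑ j ∈ Finset.Icc k N, ρ ^ j ^ d ≤ ε := by
  have tail_tendsto : Tendsto (fun k => ρ ^ k / (1 - ρ)) atTop (𝓝 (0 / (1 - ρ))) :=
    (tendsto_pow_atTop_nhds_zero_of_lt_one hρ0 hρ1).div_const _
  rw [zero_div] at tail_tendsto
  filter_upwards [tail_tendsto.eventually_le_const hε] with k hk N
  calc ∑ j ∈ Finset.Icc k N, ρ ^ j ^ d ≤ ∑ j ∈ Finset.Icc k N, ρ ^ j :=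
        Finset.sum_le_sum fun j _ =>
          pow_le_pow_of_le_one hρ0 hρ1.le (Nat.le_self_pow (by omega) j)
    _ = ∑ j ∈ Finset.Ico k (N + 1), ρ ^ j := rfl
    _ ≤ ρ ^ k / (1 - ρ) := geom_sum_Ico_le_of_lt_one hρ0 hρ1
    _ ≤ ε := hk

theorem eventually_card_packings_le {d : ℕ} (hd : 1 ≤ d) {t : ℝ} (ht : 1 < t) :
    ∀ᶠ k : ℕ in atTop, ∀ N : ℕ, ((packings d k N).card : ℝ) ≤ t ^ ((N : ℝ) ^ d) := by
  have ht0 : 0 < t := zero_lt_one.trans ht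
  set s := √t
  have hs1 : 1 < s := Real.lt_sqrt_of_sq_lt (by simpa using ht)
  have hs0 : 0 < s := zero_lt_one.trans hs1
  filter_upwards [eventually_sum_Icc_pow_le (inv_nonneg.2 hs0.le) (inv_lt_one_of_one_lt₀ hs1) hd
    (Real.log_pos hs1)] with k tail_le N
  calc ((packings d k N).card : ℝ)
      ≤ s ^ N ^ d * Real.exp ((N : ℝ) ^ d * ∑ j ∈ Finset.Icc k N, (s⁻¹) ^ j ^ d) :=
        card_packings_le d k N hs1.le
    _ ≤ s ^ N ^ d * Real.exp ((N : ℝ) ^ d * Real.log s) := by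
        gcongr
        exact tail_le N
    _ = t ^ ((N : ℝ) ^ d) := by
        have exp_eq : Real.exp ((N : ℝ) ^ d * Real.log s) = s ^ N ^ d := by
          rw [mul_comm, ← Real.rpow_def_of_pos hs0, ← Nat.cast_pow, Real.rpow_natCast]
        rw [exp_eq, ← mul_pow, Real.mul_self_sqrt ht0.le, ← Nat.cast_pow, Real.rpow_natCast]

open scoped Classical in
/-- The smallest sites of those tiles of the tiling of `ℤ_{≥0}^d` by cubes of side `p` with
offset `v` that are contained in `R`. -/
noncomputable def tiles (v : Site d) (p : ℕ) (R : Finset (Site d)) : Finset (Site d) :=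
  R.filter fun c => (∀ j, c j % p = v j) ∧ cube c p ⊆ R

/-- The part of `R` not covered by the tiles of side `p` and offset `v` contained in `R`. -/
noncomputable def untiled (v : Site d) (p : ℕ) (R : Finset (Site d)) : Finset (Site d) :=
  R \ (tiles v p R).biUnion fun c => cube c p

section Tiles

variable {v c : Site d} {p : ℕ} {R : Finset (Site d)}

lemma mem_tiles (hp : 0 < p) : c ∈ tiles v p R ↔ (∀ j, c j % p = v j) ∧ cube c p ⊆ R := by
  simp only [tiles, Finset.mem_filter, and_iff_right_iff_imp]
  exact fun h => h.2 (self_mem_cube c hp)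

lemma cube_subset_of_mem_tiles (hc : c ∈ tiles v p R) : cube c p ⊆ R :=
  (Finset.mem_filter.1 hc).2.2

lemma mod_eq_of_mem_tiles (hc : c ∈ tiles v p R) (j : Fin d) : c j % p = v j :=
  (Finset.mem_filter.1 hc).2.1 j

lemma tiles_pairwiseDisjoint (v : Site d) (p : ℕ) (R : Finset (Site d)) :
    (tiles v p R : Set (Site d)).PairwiseDisjoint fun c => cube c p := by
  intro a ha b hb hab
  refine Finset.disjoint_left.2 fun i hia hib => hab (funext fun j => ?_)
  have modEq : a j ≡ b j [MOD p] :=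
    (mod_eq_of_mem_tiles ha j).trans (mod_eq_of_mem_tiles hb j).symm
  have := mem_cube.1 hia j
  have := mem_cube.1 hib j
  exact modEq.eq_of_abs_lt (abs_lt.2 (by omega))

lemma card_tiles_mul_le (v : Site d) (p : ℕ) (R : Finset (Site d)) :
    (tiles v p R).card * p ^ d ≤ R.card := by
  calc (tiles v p R).card * p ^ d = ((tiles v p R).biUnion fun c => cube c p).card := by
        simp [Finset.card_biUnion (tiles_pairwiseDisjoint v p R), card_cube]
    _ ≤ R.card := Finset.card_le_card (Finset.biUnion_subset.2 fun _ => cube_subset_of_mem_tiles)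

end Tiles

lemma exists_mod_eq_and_mem_Ico {r p m : ℕ} (hr : r < p) (hm : r ≤ m) :
    ∃ c, c % p = r ∧ c ≤ m ∧ m < c + p := by
  refine ⟨r + p * ((m - r) / p), by simp [Nat.mod_eq_of_lt hr], ?_⟩
  have := Nat.div_add_mod (m - r) p
  have := Nat.mod_lt (m - r) (by omega : 0 < p)
  omega

lemma exists_tile_containing {v i : Site d} {p : ℕ} (hv : v ∈ cube 0 p) (hi : ∀ j, p ≤ i j) :
    ∃ c : Site d, (∀ j, c j % p = v j) ∧ i ∈ cube c p := by
  have (j : Fin d) := exists_mod_eq_and_mem_Ico (mem_cube_zero.1 hv j)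
    ((mem_cube_zero.1 hv j).le.trans (hi j))
  choose c hmod hic using this
  exact ⟨c, hmod, mem_cube.2 hic⟩

lemma untiled_subset {p : ℕ} (hp : 0 < p) {v : Site d} (hv : v ∈ cube 0 p) (n : ℕ)
    (Z : Finset (Site d × ℕ)) :
    untiled v p (cube 0 n \ cover Z) ⊆ (cube 0 n \ cube (fun _ => p) (n - 2 * p)) ∪
      Z.biUnion fun b => cube (fun j => b.1 j - p) (b.2 + 2 * p) \ cube b.1 b.2 := by
  intro i hi
  simp only [untiled, Finset.mem_sdiff, Finset.mem_biUnion, not_exists, not_and] at hi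
  obtain ⟨⟨hin, hiZ⟩, i_untiled⟩ := hi
  simp only [Finset.mem_union, Finset.mem_sdiff]
  refine or_iff_not_imp_left.2 fun h => ?_
  have i_inner : i ∈ cube (fun _ => p) (n - 2 * p) := by_contra fun h' => h ⟨hin, h'⟩
  rw [mem_cube] at i_inner
  obtain ⟨c, hmod, hic⟩ := exists_tile_containing hv fun j => (i_inner j).1
  have tile_not_subset : ¬ cube c p ⊆ cube 0 n \ cover Z := fun hsub =>
    i_untiled c ((mem_tiles hp).2 ⟨hmod, hsub⟩) hic
  obtain ⟨i', hi'c, hi'R⟩ := Finset.not_subset.1 tile_not_subset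
  rw [mem_cube] at hi'c hic
  have hi'n : i' ∈ cube 0 n := mem_cube_zero.2 fun j => by
    have := hic j
    have := hi'c j
    have := i_inner j
    omega
  have hi'Z : i' ∈ cover Z := by_contra fun h => hi'R (Finset.mem_sdiff.2 ⟨hi'n, h⟩)
  obtain ⟨b, hb, hi'b⟩ := mem_cover.1 hi'Z
  refine Finset.mem_biUnion.2 ⟨b, hb, Finset.mem_sdiff.2 ⟨mem_cube.2 fun j => ?_, fun h =>
    hiZ (mem_cover.2 ⟨b, hb, h⟩)⟩⟩
  have := hic j
  have := hi'c j
  have := mem_cube.1 hi'b j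
  constructor <;> omega

lemma eventually_card_boundary_le (d p : ℕ) {ε : ℝ} (hε : 0 < ε) :
    ∀ᶠ n : ℕ in atTop,
      ((cube (0 : Site d) n \ cube (fun _ => p) (n - 2 * p)).card : ℝ) ≤ ε * (n : ℝ) ^ d := by
  filter_upwards [eventually_pow_sub_sub_pow_le d (2 * p) hε, eventually_ge_atTop (2 * p)]
    with n hn hpn
  rwa [card_cube_sdiff_cube (cube_subset_cube_zero fun _ => by omega)]

lemma eventually_card_collars_le (d p : ℕ) {ε : ℝ} (hε : 0 < ε) :
    ∀ᶠ k : ℕ in atTop, ∀ Z : Finset (Site d × ℕ), (∀ b ∈ Z, k ≤ b.2) →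
      ((Z.biUnion fun b => cube (fun j => b.1 j - p) (b.2 + 2 * p) \ cube b.1 b.2).card : ℝ) ≤
        ε * vol Z := by
  filter_upwards [eventually_forall_ge_atTop.2 (eventually_add_pow_sub_pow_le d (2 * p) hε)]
    with k hk Z hside
  have collar_card (b : Site d × ℕ) (hb : b ∈ Z) :
      ((cube (fun j => b.1 j - p) (b.2 + 2 * p) \ cube b.1 b.2).card : ℝ) ≤
        ε * (b.2 : ℝ) ^ d := by
    rw [card_cube_sdiff_cube fun i hi => mem_cube.2 fun j => by
      have := mem_cube.1 hi j
      constructor <;> omega]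
    exact hk b.2 (hside b hb)
  calc _ ≤ ((∑ b ∈ Z, (cube (fun j => b.1 j - p) (b.2 + 2 * p) \ cube b.1 b.2).card : ℕ) : ℝ) :=
        mod_cast Finset.card_biUnion_le
    _ ≤ ∑ b ∈ Z, ε * (b.2 : ℝ) ^ d := by
        push_cast
        exact Finset.sum_le_sum collar_card
    _ = ε * vol Z := by
        rw [← Finset.mul_sum, vol]
        push_cast
        rfl

theorem eventually_card_untiled_le {d p : ℕ} (hp : 0 < p) {ε : ℝ} (hε : 0 < ε) :
    ∀ᶠ k : ℕ in atTop, ∀ n ≥ k, ∀ Z : Finset (Site d × ℕ), IsPacking Z n → (∀ b ∈ Z, k ≤ b.2) →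
      ∀ v ∈ cube (0 : Site d) p,
        ((untiled v p (cube 0 n \ cover Z)).card : ℝ) ≤ ε * (n : ℝ) ^ d := by
  filter_upwards [eventually_forall_ge_atTop.2 (eventually_card_boundary_le d p (half_pos hε)),
    eventually_card_collars_le d p (half_pos hε)] with k boundary_le collars_le n hn Z hZ hside v hv
  have card_le := (Finset.card_le_card (untiled_subset hp hv n Z)).trans (Finset.card_union_le _ _)
  rw [← Nat.cast_le (α := ℝ), Nat.cast_add] at card_le
  calc _ ≤ ε / 2 * (n : ℝ) ^ d + ε / 2 * vol Z :=
        card_le.trans (add_le_add (boundary_le n hn) (collars_le Z hside))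
    _ ≤ ε / 2 * (n : ℝ) ^ d + ε / 2 * (n : ℝ) ^ d := by
        gcongr
        exact hZ.vol_le_real
    _ = ε * (n : ℝ) ^ d := by ring

/-! ### Counting patterns -/

lemma ncard_image_le_of_determined {α β γ : Type*} {W : Set α} {f : α → β} {g : α → γ}
    (hg : (g '' W).Finite) (h : ∀ y ∈ W, ∀ z ∈ W, g y = g z → f y = f z) :
    (f '' W).ncard ≤ (g '' W).ncard := by
  rcases isEmpty_or_nonempty α with _ | _
  · simp [Set.eq_empty_of_isEmpty]
  have invFun_spec {y : α} (hy : y ∈ W) : Function.invFunOn g W (g y) ∈ W ∧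
      g (Function.invFunOn g W (g y)) = g y :=
    Function.invFunOn_pos ⟨y, hy, rfl⟩
  have image_subset : f '' W ⊆ (f ∘ Function.invFunOn g W) '' (g '' W) := by
    rintro _ ⟨y, hy, rfl⟩
    exact ⟨g y, Set.mem_image_of_mem g hy, h _ (invFun_spec hy).1 y hy (invFun_spec hy).2⟩
  exact (Set.ncard_le_ncard image_subset (hg.image _)).trans (Set.ncard_image_le hg)

lemma restrict_eq_iff {F : Finset (Site d)} {y z : Config A d} :
    F.restrict y = F.restrict z ↔ ∀ i ∈ F, y i = z i :=
  ⟨fun h i hi => congrFun h ⟨i, hi⟩, fun h => funext fun i => h i.1 i.2⟩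

/-- The number of patterns that the configurations in `W` exhibit on the finite set `F`. -/
noncomputable def patternCount (W : Set (Config A d)) (F : Finset (Site d)) : ℕ :=
  (F.restrict '' W).ncard

section PatternCount

variable {W W' : Set (Config A d)} {F F' : Finset (Site d)}

lemma patternCount_mono_left (h : W ⊆ W') (F : Finset (Site d)) :
    patternCount W F ≤ patternCount W' F :=
  Set.ncard_le_ncard (Set.image_mono h) (Set.toFinite _)

lemma patternCount_le_of_determined
    (h : ∀ y ∈ W, ∀ z ∈ W, (∀ i ∈ F', y i = z i) → ∀ i ∈ F, y i = z i) :
    patternCount W F ≤ patternCount W F' :=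
  ncard_image_le_of_determined (Set.toFinite _) fun y hy z hz hyz =>
    restrict_eq_iff.2 (h y hy z hz (restrict_eq_iff.1 hyz))

lemma patternCount_mono_right (W : Set (Config A d)) (h : F ⊆ F') :
    patternCount W F ≤ patternCount W F' :=
  patternCount_le_of_determined fun _ _ _ _ hyz i hi => hyz i (h hi)

lemma patternCount_le (W : Set (Config A d)) (F : Finset (Site d)) :
    patternCount W F ≤ A ^ F.card :=
  (Set.ncard_le_card _).trans (by simp)

lemma wordAt_eq_iff {k : ℕ} {c : Site d} {y z : Config A d} :
    wordAt y k c = wordAt z k c ↔ ∀ i ∈ cube c k, y i = z i := by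
  refine ⟨fun h i hi => ?_, fun h => funext fun i =>
    h _ (mem_cube.2 fun j => ⟨Nat.le_add_right _ _, Nat.add_lt_add_left (i j).2 _⟩)⟩
  rw [mem_cube] at hi
  have at_offset := congrFun h fun j => ⟨i j - c j, by have := hi j; omega⟩
  have add_offset : (fun j => c j + (i j - c j)) = i := funext fun j => by have := hi j; omega
  simpa only [wordAt, add_offset] using at_offset

lemma patternCount_cube (W : Set (Config A d)) (c : Site d) (k : ℕ) :
    patternCount W (cube c k) = ((fun x => wordAt x k c) '' W).ncard :=
  le_antisymm
    (ncard_image_le_of_determined (Set.toFinite _) fun _ _ _ _ h =>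
      restrict_eq_iff.2 (wordAt_eq_iff.1 h))
    (ncard_image_le_of_determined (Set.toFinite _) fun _ _ _ _ h =>
      wordAt_eq_iff.2 (restrict_eq_iff.1 h))

lemma patternCount_le_sum {ι : Type*} (S : Finset ι) {V : ι → Set (Config A d)}
    (h : W ⊆ ⋃ s ∈ S, V s) (F : Finset (Site d)) :
    patternCount W F ≤ ∑ s ∈ S, patternCount (V s) F := by
  have image_subset : F.restrict '' W ⊆ ⋃ s ∈ S, F.restrict '' V s := by
    simpa only [Set.image_iUnion] using Set.image_mono h
  exact (Set.ncard_le_ncard image_subset (Set.toFinite _)).trans (Finset.set_ncard_biUnion_le _ _)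

lemma patternCount_le_mul_ncard_image {β : Type*} [Finite β] (f : Config A d → β)
    (W : Set (Config A d)) (F : Finset (Site d)) {K : ℝ}
    (hK : ∀ x ∈ W, (patternCount {y ∈ W | f y = f x} F : ℝ) ≤ K) :
    (patternCount W F : ℝ) ≤ K * (f '' W).ncard := by
  set values := (Set.toFinite (f '' W)).toFinset
  have subset_fibres : W ⊆ ⋃ u ∈ values, {y ∈ W | f y = u} := fun y hy =>
    Set.mem_iUnion₂.2 ⟨f y, by simpa [values] using ⟨y, hy, rfl⟩, hy, rfl⟩
  calc (patternCount W F : ℝ) ≤ ∑ u ∈ values, (patternCount {y ∈ W | f y = u} F : ℝ) :=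
        mod_cast patternCount_le_sum _ subset_fibres F
    _ ≤ ∑ _u ∈ values, K := by
        refine Finset.sum_le_sum fun u hu => ?_
        obtain ⟨x, hx, rfl⟩ := (Set.Finite.mem_toFinset _).1 hu
        exact hK x hx
    _ = K * (f '' W).ncard := by
        rw [Finset.sum_const, nsmul_eq_mul, mul_comm,
          Set.ncard_eq_toFinset_card _ (Set.toFinite _)]

lemma patternCount_le_mul_patternCount {K : ℝ}
    (hK : ∀ x ∈ W, (patternCount {y ∈ W | ∀ i ∈ F', y i = x i} F : ℝ) ≤ K) :
    (patternCount W F : ℝ) ≤ K * patternCount W F' := by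
  refine patternCount_le_mul_ncard_image F'.restrict W F fun x hx => ?_
  simpa only [restrict_eq_iff] using hK x hx

lemma patternCount_union_le (W : Set (Config A d)) (F F' : Finset (Site d)) :
    patternCount W (F ∪ F') ≤ patternCount W F * patternCount W F' := by
  refine Nat.cast_le (α := ℝ).1 ?_
  rw [Nat.cast_mul]
  refine patternCount_le_mul_patternCount fun x _ => Nat.cast_le.2 ?_
  refine (patternCount_le_of_determined (F' := F) fun y hy z hz h i hi => ?_).trans
    (patternCount_mono_left (fun y hy => hy.1) F)
  rcases Finset.mem_union.1 hi with hiF | hiF'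
  · exact h i hiF
  · exact (hy.2 i hiF').trans (hz.2 i hiF').symm

lemma patternCount_biUnion_le_prod {ι : Type*} (W : Set (Config A d)) (S : Finset ι)
    (f : ι → Finset (Site d)) :
    patternCount W (S.biUnion f) ≤ ∏ c ∈ S, patternCount W (f c) := by
  classical
  induction S using Finset.induction_on with
  | empty => simpa using patternCount_le W ∅
  | insert a s ha ih =>
    rw [Finset.biUnion_insert, Finset.prod_insert ha]
    exact (patternCount_union_le _ _ _).trans (Nat.mul_le_mul_left _ ih)

end PatternCount

/-! ### Configurations whose `p`-words mostly lie in a given set -/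

/-- The configurations carrying a word of `G` at every site of `T`. -/
def wordsIn {p : ℕ} (G : Finset (Word A d p)) (T : Finset (Site d)) : Set (Config A d) :=
  {x | ∀ c ∈ T, wordAt x p c ∈ G}

open scoped Classical in
/-- The sites of `Λ_n` at which `x` does not carry a word of `G`. -/
noncomputable def badSites {p : ℕ} (G : Finset (Word A d p)) (n : ℕ) (x : Config A d) :
    Finset (Site d) :=
  (cube 0 n).filter fun i => wordAt x p i ∉ G

/-- The configurations carrying a word of `G` at all but a fraction `δ` of the sites of `Λ_n`. -/
def mostlyIn {p : ℕ} (G : Finset (Word A d p)) (δ : ℝ) (n : ℕ) : Set (Config A d) :=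
  {x | ((badSites G n x).card : ℝ) ≤ δ * (n : ℝ) ^ d}

/-- The pairs `(v, Y)` of an offset `v` and a set `Y` of at most `m / p ^ d` exceptional tiles,
among the tiles of side `p` and offset `v` contained in `R`. -/
noncomputable def exceptionalTiles (p : ℕ) (R : Finset (Site d)) (m : ℝ) :
    Finset ((_ : Site d) × Finset (Site d)) :=
  (cube 0 p).sigma fun v => (tiles v p R).powerset.filter fun Y => (Y.card : ℝ) * (p : ℝ) ^ d ≤ m

section MostlyIn

variable {p n : ℕ} {G : Finset (Word A d p)} {δ : ℝ} {R : Finset (Site d)}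

lemma mem_exceptionalTiles {m : ℝ} {s : (_ : Site d) × Finset (Site d)} :
    s ∈ exceptionalTiles p R m ↔
      s.1 ∈ cube 0 p ∧ s.2 ⊆ tiles s.1 p R ∧ (s.2.card : ℝ) * (p : ℝ) ^ d ≤ m := by
  rw [exceptionalTiles, Finset.mem_sigma, Finset.mem_filter, Finset.mem_powerset]

lemma card_tiles_le (hp : 0 < p) (v : Site d) (R : Finset (Site d)) :
    ((tiles v p R).card : ℝ) ≤ R.card / (p : ℝ) ^ d := by
  rw [le_div_iff₀ (by positivity)]
  exact_mod_cast card_tiles_mul_le v p R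

lemma card_exceptionalTiles_le (hp : 0 < p) (R : Finset (Site d)) (m : ℝ) :
    ((exceptionalTiles p R m).card : ℝ) ≤
      (p : ℝ) ^ d * (2 : ℝ) ^ ((R.card : ℝ) / (p : ℝ) ^ d) := by
  have subsets_le (v : Site d) : (((tiles v p R).powerset.filter
      fun Y => (Y.card : ℝ) * (p : ℝ) ^ d ≤ m).card : ℝ) ≤
        (2 : ℝ) ^ ((R.card : ℝ) / (p : ℝ) ^ d) := by
    calc _ ≤ (((tiles v p R).powerset.card : ℕ) : ℝ) :=
          mod_cast Finset.card_le_card (Finset.filter_subset _ _)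
      _ = (2 : ℝ) ^ ((tiles v p R).card : ℝ) := by
          rw [Finset.card_powerset, Real.rpow_natCast]
          push_cast
          rfl
      _ ≤ (2 : ℝ) ^ ((R.card : ℝ) / (p : ℝ) ^ d) :=
          Real.rpow_le_rpow_of_exponent_le one_le_two (card_tiles_le hp v R)
  calc ((exceptionalTiles p R m).card : ℝ)
      ≤ ∑ _v ∈ cube (0 : Site d) p, (2 : ℝ) ^ ((R.card : ℝ) / (p : ℝ) ^ d) := by
        rw [exceptionalTiles, Finset.card_sigma, Nat.cast_sum]
        exact Finset.sum_le_sum fun v _ => subsets_le v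
    _ = (p : ℝ) ^ d * (2 : ℝ) ^ ((R.card : ℝ) / (p : ℝ) ^ d) := by
        simp [card_cube]

lemma exists_offset_sum_tiles_le (hp : 0 < p) (R : Finset (Site d)) {g : Site d → ℝ}
    (hg : ∀ i, 0 ≤ g i) :
    ∃ v ∈ cube (0 : Site d) p, (∑ c ∈ tiles v p R, g c) * (p : ℝ) ^ d ≤ ∑ i ∈ R, g i := by
  have offsets_disjoint :
      ((cube (0 : Site d) p : Finset (Site d)) : Set (Site d)).PairwiseDisjoint
        fun v => tiles v p R := fun v _ w _ hvw => Finset.disjoint_left.2 fun c hcv hcw =>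
    hvw (funext fun j => (mod_eq_of_mem_tiles hcv j).symm.trans (mod_eq_of_mem_tiles hcw j))
  have sum_offsets_le : ∑ v ∈ cube (0 : Site d) p, ∑ c ∈ tiles v p R, g c ≤ ∑ i ∈ R, g i := by
    rw [← Finset.sum_biUnion offsets_disjoint]
    exact Finset.sum_le_sum_of_subset_of_nonneg
      (Finset.biUnion_subset.2 fun v _ => Finset.filter_subset _ _) fun i _ _ => hg i
  refine Finset.exists_le_of_sum_le ⟨0, self_mem_cube 0 hp⟩ ?_
  rw [← Finset.sum_mul, Finset.sum_const, card_cube, nsmul_eq_mul, Nat.cast_pow, mul_comm]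
  gcongr

lemma mostlyIn_subset_iUnion_wordsIn (hp : 0 < p) (hR : R ⊆ cube 0 n) :
    mostlyIn G δ n ⊆ ⋃ s ∈ exceptionalTiles p R (δ * (n : ℝ) ^ d),
      wordsIn G (tiles s.1 p R \ s.2) := by
  classical
  intro x hx
  obtain ⟨v, hv, bad_tiles_le⟩ := exists_offset_sum_tiles_le hp R
    (g := fun i => if i ∈ badSites G n x then 1 else 0) fun i => by split_ifs <;> norm_num
  rw [Finset.sum_boole, Finset.sum_boole] at bad_tiles_le
  have bad_card_le : ((R.filter (· ∈ badSites G n x)).card : ℝ) ≤ δ * (n : ℝ) ^ d :=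
    (Nat.cast_le.2 (Finset.card_le_card fun i hi => (Finset.mem_filter.1 hi).2)).trans hx
  refine Set.mem_iUnion₂.2 ⟨⟨v, (tiles v p R).filter (· ∈ badSites G n x)⟩,
    mem_exceptionalTiles.2 ⟨hv, Finset.filter_subset _ _, bad_tiles_le.trans bad_card_le⟩,
    fun c hc => by_contra fun hcG => ?_⟩
  obtain ⟨c_tile, hc⟩ := Finset.mem_sdiff.1 hc
  refine hc (Finset.mem_filter.2 ⟨c_tile, Finset.mem_filter.2 ⟨hR ?_, hcG⟩⟩)
  exact cube_subset_of_mem_tiles c_tile (self_mem_cube c hp)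

lemma patternCount_wordsIn_biUnion_cube_le (G : Finset (Word A d p)) (T : Finset (Site d)) :
    patternCount (wordsIn G T) (T.biUnion fun c => cube c p) ≤ G.card ^ T.card := by
  refine (patternCount_biUnion_le_prod _ _ _).trans (Finset.prod_le_pow_card _ _ _ fun c hc => ?_)
  rw [patternCount_cube, ← Set.ncard_coe_finset]
  refine Set.ncard_le_ncard ?_ (Set.toFinite _)
  rintro _ ⟨x, hx, rfl⟩
  exact hx c hc

lemma patternCount_wordsIn_le (hA : 0 < A) (G : Finset (Word A d p)) (v : Site d)
    (R Y : Finset (Site d)) :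
    patternCount (wordsIn G (tiles v p R \ Y)) R ≤
      G.card ^ (tiles v p R \ Y).card * (A ^ (Y.card * p ^ d) * A ^ (untiled v p R).card) := by
  set W := wordsIn G (tiles v p R \ Y)
  have R_subset : R ⊆ ((tiles v p R \ Y).biUnion fun c => cube c p) ∪
      ((Y.biUnion fun c => cube c p) ∪ untiled v p R) := by
    intro i hi
    simp only [untiled, Finset.mem_union, Finset.mem_biUnion, Finset.mem_sdiff]
    by_contra! h
    obtain ⟨not_regular, not_exceptional, covered⟩ := h
    obtain ⟨c, hc, hic⟩ := covered hi
    exact not_regular c ⟨hc, fun hcY => not_exceptional c hcY hic⟩ hic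
  have exceptional_le : patternCount W (Y.biUnion fun c => cube c p) ≤ A ^ (Y.card * p ^ d) :=
    (patternCount_le _ _).trans (Nat.pow_le_pow_right hA
      (Finset.card_biUnion_le.trans (by simp [card_cube])))
  calc patternCount W R ≤ _ := patternCount_mono_right W R_subset
    _ ≤ _ := patternCount_union_le _ _ _
    _ ≤ _ := Nat.mul_le_mul (patternCount_wordsIn_biUnion_cube_le G _)
        ((patternCount_union_le _ _ _).trans
          (Nat.mul_le_mul exceptional_le (patternCount_le _ _)))

lemma patternCount_wordsIn_le_rpow (hA : 1 ≤ A) (hp : 0 < p) {h m u : ℝ} (hh : 0 ≤ h)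
    (hG : (G.card : ℝ) ≤ (A : ℝ) ^ ((p : ℝ) ^ d * h)) {v : Site d}
    (hu : ((untiled v p R).card : ℝ) ≤ u) {Y : Finset (Site d)}
    (hY : (Y.card : ℝ) * (p : ℝ) ^ d ≤ m) :
    (patternCount (wordsIn G (tiles v p R \ Y)) R : ℝ) ≤ (A : ℝ) ^ (h * R.card + m + u) := by
  have hA1 : (1 : ℝ) ≤ A := mod_cast hA
  have hA0 : (0 : ℝ) < A := zero_lt_one.trans_le hA1
  have regular_card_mul_le : ((tiles v p R \ Y).card : ℝ) * (p : ℝ) ^ d ≤ R.card := by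
    rw [← le_div_iff₀ (by positivity)]
    exact (Nat.cast_le.2 (Finset.card_le_card Finset.sdiff_subset)).trans (card_tiles_le hp v R)
  have regular_le : (G.card : ℝ) ^ (tiles v p R \ Y).card ≤ (A : ℝ) ^ (h * R.card) :=
    calc (G.card : ℝ) ^ (tiles v p R \ Y).card
        ≤ ((A : ℝ) ^ ((p : ℝ) ^ d * h)) ^ (tiles v p R \ Y).card := by gcongr
      _ = (A : ℝ) ^ (h * ((tiles v p R \ Y).card * (p : ℝ) ^ d)) := by
          rw [← Real.rpow_mul_natCast hA0.le]
          congr 1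
          ring
      _ ≤ (A : ℝ) ^ (h * R.card) := by gcongr
  calc (patternCount (wordsIn G (tiles v p R \ Y)) R : ℝ)
      ≤ (G.card : ℝ) ^ (tiles v p R \ Y).card *
          ((A : ℝ) ^ (Y.card * p ^ d) * (A : ℝ) ^ (untiled v p R).card) :=
        mod_cast patternCount_wordsIn_le hA G v R Y
    _ ≤ (A : ℝ) ^ (h * R.card) * ((A : ℝ) ^ m * (A : ℝ) ^ u) := by
        rw [← Real.rpow_natCast (A : ℝ) (Y.card * p ^ d),
          ← Real.rpow_natCast (A : ℝ) (untiled v p R).card]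
        gcongr
        exact_mod_cast hY
    _ = (A : ℝ) ^ (h * R.card + m + u) := by
        rw [← Real.rpow_add hA0, ← Real.rpow_add hA0, add_assoc]

lemma pow_le_rpow_pow {a : ℕ} (ha : 2 ≤ a) (p d : ℕ) : (p : ℝ) ^ d ≤ (a : ℝ) ^ ((p : ℝ) ^ d) := by
  rw [← Nat.cast_pow, Real.rpow_natCast]
  exact_mod_cast (Nat.lt_pow_self (n := p ^ d) (by omega : 1 < a)).le

lemma patternCount_mostlyIn_le (hA : 2 ≤ A) (hp : 0 < p) {h u : ℝ} (hh : 0 ≤ h)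
    (hG : (G.card : ℝ) ≤ (A : ℝ) ^ ((p : ℝ) ^ d * h)) (hR : R ⊆ cube 0 n)
    (hu : ∀ v ∈ cube (0 : Site d) p, ((untiled v p R).card : ℝ) ≤ u) :
    (patternCount (mostlyIn G δ n) R : ℝ) ≤
      (A : ℝ) ^ ((p : ℝ) ^ d + R.card / (p : ℝ) ^ d + (h * R.card + δ * (n : ℝ) ^ d + u)) := by
  have hA2 : (2 : ℝ) ≤ A := mod_cast hA
  have hA0 : (0 : ℝ) < A := zero_lt_two.trans_le hA2
  set S := exceptionalTiles p R (δ * (n : ℝ) ^ d)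
  calc (patternCount (mostlyIn G δ n) R : ℝ)
      ≤ ∑ s ∈ S, (patternCount (wordsIn G (tiles s.1 p R \ s.2)) R : ℝ) :=
        mod_cast patternCount_le_sum S (mostlyIn_subset_iUnion_wordsIn hp hR) R
    _ ≤ ∑ _s ∈ S, (A : ℝ) ^ (h * R.card + δ * (n : ℝ) ^ d + u) := by
        refine Finset.sum_le_sum fun s hs => ?_
        obtain ⟨hv, -, hY⟩ := mem_exceptionalTiles.1 hs
        exact patternCount_wordsIn_le_rpow (by omega) hp hh hG (hu s.1 hv) hY
    _ = S.card * (A : ℝ) ^ (h * R.card + δ * (n : ℝ) ^ d + u) := by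
        rw [Finset.sum_const, nsmul_eq_mul]
    _ ≤ (A : ℝ) ^ ((p : ℝ) ^ d) * (A : ℝ) ^ ((R.card : ℝ) / (p : ℝ) ^ d) *
          (A : ℝ) ^ (h * R.card + δ * (n : ℝ) ^ d + u) := by
        gcongr
        refine (card_exceptionalTiles_le hp R _).trans ?_
        gcongr
        exact pow_le_rpow_pow hA p d
    _ = _ := by rw [← Real.rpow_add hA0, ← Real.rpow_add hA0]

theorem eventually_patternCount_mostlyIn_le (hA : 2 ≤ A) (hd : 1 ≤ d) (hp : 0 < p) {h : ℝ}
    (hh : 0 ≤ h) (hδ : 0 < δ) (hδp : 1 ≤ δ * (p : ℝ) ^ d)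
    (hG : (G.card : ℝ) ≤ (A : ℝ) ^ ((p : ℝ) ^ d * (h + δ))) :
    ∀ᶠ k : ℕ in atTop, ∀ n ≥ k, ∀ Z : Finset (Site d × ℕ), IsPacking Z n → (∀ b ∈ Z, k ≤ b.2) →
      (patternCount (mostlyIn G δ n) (cube 0 n \ cover Z) : ℝ) ≤
        (A : ℝ) ^ (h * ((n : ℝ) ^ d - vol Z) + 5 * δ * (n : ℝ) ^ d) := by
  filter_upwards [eventually_card_untiled_le hp hδ,
    eventually_forall_ge_atTop.2 (eventually_le_mul_pow hd hδ ((p : ℝ) ^ d))]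
    with k untiled_le offset_count_le n hn Z hZ hside
  set R := cube 0 n \ cover Z with hR
  have R_card : (R.card : ℝ) = (n : ℝ) ^ d - vol Z := by
    rw [hR, Finset.cast_card_sdiff hZ.cover_subset, card_cube,
      card_cover_of_pairwiseDisjoint hZ.pairwiseDisjoint, Nat.cast_pow]
  have R_card_le : (R.card : ℝ) ≤ (n : ℝ) ^ d := by
    rw [R_card]
    exact sub_le_self _ (Nat.cast_nonneg _)
  refine (patternCount_mostlyIn_le hA hp (by positivity) hG Finset.sdiff_subset
    (untiled_le n hn Z hZ hside)).trans
      (Real.rpow_le_rpow_of_exponent_le (mod_cast (by omega : 1 ≤ A)) ?_)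
  have tile_count_le : (R.card : ℝ) / (p : ℝ) ^ d ≤ δ * (n : ℝ) ^ d := by
    rw [div_le_iff₀ (by positivity)]
    nlinarith [pow_nonneg (Nat.cast_nonneg (α := ℝ) n) d]
  rw [← R_card]
  linarith [offset_count_le n hn, mul_le_mul_of_nonneg_left R_card_le hδ.le]

end MostlyIn

/-! ### Shift-invariant events -/

lemma shift_shift (r s : Site d) (x : Config A d) : shift r (shift s x) = shift (r + s) x :=
  funext fun i => congrArg x (add_assoc i r s)

lemma wordAt_shift (r c : Site d) (k : ℕ) (x : Config A d) :
    wordAt (shift r x) k c = wordAt x k (c + r) :=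
  funext fun i => congrArg x (funext fun j => add_right_comm (c j) (i j) (r j))

lemma measurable_shift (r : Site d) : Measurable (shift r : Config A d → Config A d) :=
  measurable_pi_lambda _ fun i => measurable_pi_apply (i + r)

lemma measurable_wordAt (k : ℕ) (c : Site d) : Measurable fun x : Config A d => wordAt x k c :=
  measurable_pi_lambda _ fun _ => measurable_pi_apply _

lemma measurableSet_wordAt_mem {k : ℕ} (c : Site d) (S : Set (Word A d k)) :
    MeasurableSet {x : Config A d | wordAt x k c ∈ S} :=
  measurable_wordAt k c (Set.toFinite S).measurableSet

lemma Stationary.measurePreserving {μ : Measure (Config A d)} (h : Stationary μ) (r : Site d) :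
    MeasurePreserving (shift r) μ μ := ⟨measurable_shift r, h r⟩

/-- The configurations all of whose sufficiently far shifts lie in `E`: a version of `E` that is
invariant on the nose when `E` is invariant up to null sets. -/
def eventuallyMem (E : Set (Config A d)) : Set (Config A d) :=
  {x | ∃ r₀ : Site d, ∀ r ≥ r₀, shift r x ∈ E}

lemma measurableSet_eventuallyMem {E : Set (Config A d)} (hE : MeasurableSet E) :
    MeasurableSet (eventuallyMem E) := by
  have h_eq : eventuallyMem E = ⋃ r₀ : Site d, ⋂ r : Site d, ⋂ _ : r ≥ r₀, shift r ⁻¹' E := by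
    ext x
    simp [eventuallyMem]
  rw [h_eq]
  exact .iUnion fun r₀ => .iInter fun r => .iInter fun _ => measurable_shift r hE

lemma preimage_shift_eventuallyMem (E : Set (Config A d)) (s : Site d) :
    shift s ⁻¹' eventuallyMem E = eventuallyMem E := by
  ext x
  simp only [eventuallyMem, Set.mem_preimage, Set.mem_ofPred_eq, shift_shift]
  constructor
  · rintro ⟨r₀, hr₀⟩
    refine ⟨r₀ + s, fun r hr => ?_⟩
    have h_mem := hr₀ (r - s) (le_tsub_of_add_le_right hr)
    rwa [tsub_add_cancel_of_le (le_trans le_add_self hr)] at h_mem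
  · rintro ⟨r₀, hr₀⟩
    exact ⟨r₀, fun r hr => hr₀ _ (le_trans hr le_self_add)⟩

lemma eventuallyMem_ae_eq {μ : Measure (Config A d)} {E : Set (Config A d)}
    (hinv : ∀ r, shift r ⁻¹' E =ᵐ[μ] E) : eventuallyMem E =ᵐ[μ] E := by
  filter_upwards [ae_all_iff.2 hinv] with x hx
  refine propext ⟨?_, fun hxE => ⟨0, fun r _ => (hx r).mpr hxE⟩⟩
  rintro ⟨r₀, hr₀⟩
  exact (hx r₀).mp (hr₀ r₀ le_rfl)

lemma ErgodicShift.zero_one {μ : Measure (Config A d)} (h : ErgodicShift μ)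
    {E : Set (Config A d)} (hE : MeasurableSet E) (hinv : ∀ r, shift r ⁻¹' E =ᵐ[μ] E) :
    μ E = 0 ∨ μ E = 1 := by
  rw [← measure_congr (eventuallyMem_ae_eq hinv)]
  exact h.2 _ (measurableSet_eventuallyMem hE) (preimage_shift_eventuallyMem E)

lemma ErgodicShift.zero_one_of_subset {μ : Measure (Config A d)} [IsFiniteMeasure μ]
    (h : ErgodicShift μ) {E : Set (Config A d)} (hE : MeasurableSet E)
    (hinv : ∀ r, shift r ⁻¹' E ⊆ E) : μ E = 0 ∨ μ E = 1 :=
  h.zero_one hE fun r => ae_eq_of_subset_of_measure_ge (hinv r)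
    ((h.1.measurePreserving r).measure_preimage hE.nullMeasurableSet).ge
    (measurable_shift r hE).nullMeasurableSet (measure_ne_top _ _)

lemma ErgodicShift.exists_ae_eq_const {μ : Measure (Config A d)} [IsProbabilityMeasure μ]
    (h : ErgodicShift μ) {g : Config A d → ℝ} (hg : AEStronglyMeasurable g μ)
    (hinv : ∀ r, g ∘ shift r =ᵐ[μ] g) : ∃ c, g =ᵐ[μ] Function.const _ c := by
  obtain ⟨g', hg'_meas, hgg'⟩ := hg
  have hinv' (r : Site d) : g' ∘ shift r =ᵐ[μ] g' := by
    filter_upwards [hinv r, hgg', (h.1.measurePreserving r).quasiMeasurePreserving.ae hgg']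
      with x hx_inv hx hx_shift
    rw [Function.comp_apply, ← hx_shift, ← hx, ← hx_inv, Function.comp_apply]
  obtain ⟨c, hc⟩ := exists_eventuallyEq_const_of_forall_separating (f := g') (l := ae μ)
    MeasurableSet fun V hV => by
      have hV_meas : MeasurableSet (g' ⁻¹' V) := hg'_meas.measurable hV
      have hV_inv (r : Site d) : shift r ⁻¹' (g' ⁻¹' V) =ᵐ[μ] g' ⁻¹' V := by
        filter_upwards [hinv' r] with x hx
        exact propext (iff_of_eq (congrArg (· ∈ V) hx))
      rcases h.zero_one hV_meas hV_inv with h_zero | h_one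
      · exact Or.inr (measure_eq_zero_iff_ae_notMem.1 h_zero)
      · exact Or.inl ((prob_compl_eq_zero_iff hV_meas).2 h_one)
  exact ⟨c, hgg'.trans hc⟩

/-! ### The mean ergodic theorem for `ℤ_{≥0}^d` -/

lemma sum_cube_eq_sum_cube_zero {M : Type*} [AddCommMonoid M] (c : Site d) (n : ℕ)
    (f : Site d → M) : ∑ i ∈ cube c n, f i = ∑ i ∈ cube 0 n, f (i + c) := by
  refine (Finset.sum_bij (fun i _ => i + c) (fun i hi => add_mem_cube.2 hi)
    (fun i _ j _ hij => add_right_cancel hij) (fun i hi => ?_) fun _ _ => rfl).symm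
  have hci : c ≤ i := fun j => (mem_cube.1 hi j).1
  exact ⟨i - c, add_mem_cube.1 (by rwa [tsub_add_cancel_of_le hci]), tsub_add_cancel_of_le hci⟩

lemma norm_sum_sub_sum_le_of_subset {H ι : Type*} [SeminormedAddCommGroup H]
    {s t : Finset ι} (h : t ⊆ s) (f : ι → H) {C : ℝ} (hC : ∀ i, ‖f i‖ ≤ C) :
    ‖∑ i ∈ s, f i - ∑ i ∈ t, f i‖ ≤ ((s.card : ℝ) - t.card) * C := by
  classical
  rw [← Finset.sum_sdiff h, add_sub_cancel_right]
  calc ‖∑ i ∈ s \ t, f i‖ ≤ ∑ _i ∈ s \ t, C := norm_sum_le_of_le _ fun i _ => hC i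
    _ = ((s.card : ℝ) - t.card) * C := by
      rw [Finset.sum_const, nsmul_eq_mul, Finset.card_sdiff_of_subset h,
        Nat.cast_sub (Finset.card_le_card h)]

section MeanErgodic

variable {𝕜 H : Type*} [RCLike 𝕜] [NormedAddCommGroup H] [InnerProductSpace 𝕜 H]
  (U : Site d → H →ₗᵢ[𝕜] H)

/-- The average over the cube `Λ_n` of a family of isometries indexed by `ℤ_{≥0}^d`. -/
noncomputable def cubeAverage (n : ℕ) : H →L[𝕜] H :=
  ((n : 𝕜) ^ d)⁻¹ • ∑ i ∈ cube (0 : Site d) n, (U i).toContinuousLinearMap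

/-- The vectors fixed by all the isometries of a family. -/
def fixedVectors : Submodule 𝕜 H :=
  ⨅ r, LinearMap.eqLocus (U r).toLinearMap LinearMap.id

variable {U}

lemma cubeAverage_apply (n : ℕ) (f : H) :
    cubeAverage U n f = ((n : 𝕜) ^ d)⁻¹ • ∑ i ∈ cube (0 : Site d) n, U i f := by
  simp [cubeAverage]

lemma mem_fixedVectors {f : H} : f ∈ fixedVectors U ↔ ∀ r, U r f = f := by
  simp [fixedVectors, Submodule.mem_iInf]

lemma norm_cubeAverage_apply_le (n : ℕ) (f : H) : ‖cubeAverage U n f‖ ≤ ‖f‖ := by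
  have h_sum : ‖∑ i ∈ cube (0 : Site d) n, U i f‖ ≤ (n : ℝ) ^ d * ‖f‖ :=
    (norm_sum_le _ _).trans_eq (by simp [card_cube])
  calc ‖cubeAverage U n f‖ = ((n : ℝ) ^ d)⁻¹ * ‖∑ i ∈ cube (0 : Site d) n, U i f‖ := by
        rw [cubeAverage_apply, norm_smul, norm_inv, norm_pow, RCLike.norm_natCast]
    _ ≤ ((n : ℝ) ^ d)⁻¹ * ((n : ℝ) ^ d * ‖f‖) := by gcongr
    _ ≤ ‖f‖ := by
        rw [← mul_assoc]
        exact mul_le_of_le_one_left (norm_nonneg _) inv_mul_le_one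

lemma equicontinuous_cubeAverage : Equicontinuous fun n => (cubeAverage U n : H → H) :=
  (LipschitzWith.uniformEquicontinuous _ 1 fun n =>
    LipschitzWith.of_dist_le_mul fun f g => by
      simpa [dist_eq_norm, map_sub] using
        norm_cubeAverage_apply_le (U := U) n (f - g)).equicontinuous

lemma cubeAverage_apply_of_mem_fixedVectors {f : H} (hf : f ∈ fixedVectors U) {n : ℕ}
    (hn : 0 < n) : cubeAverage U n f = f := by
  have hn_pow : (n : 𝕜) ^ d ≠ 0 := pow_ne_zero _ (Nat.cast_ne_zero.2 hn.ne')
  rw [cubeAverage_apply, Finset.sum_congr rfl fun i _ => mem_fixedVectors.1 hf i,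
    Finset.sum_const, card_cube, ← Nat.cast_smul_eq_nsmul 𝕜, smul_smul, Nat.cast_pow,
    inv_mul_cancel₀ hn_pow, one_smul]

/-- The cubes `Λ_n` and `Λ_n + r` both contain the cube `Λ_{n-2R} + (R, …, R)`, which exhausts
them asymptotically; hence the two sums in `∑_{Λ_n} U_i (U_r g - g)` almost cancel. -/
lemma norm_sum_coboundary_le (hU : ∀ r s f, U r (U s f) = U (r + s) f) (r : Site d) (g : H)
    {R : ℕ} (hR : ∀ j, r j ≤ R) (n : ℕ) :
    ‖∑ i ∈ cube (0 : Site d) n, U i (U r g - g)‖ ≤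
      2 * (((n : ℝ) ^ d - ((n - 2 * R : ℕ) : ℝ) ^ d) * ‖g‖) := by
  set inner := cube (fun _ : Fin d => R) (n - 2 * R)
  have h_inner_r : inner ⊆ cube r n := fun i hi => mem_cube.2 fun j => by
    have := mem_cube.1 hi j
    have := hR j
    omega
  have h_inner_zero : inner ⊆ cube 0 n := fun i hi => mem_cube_zero.2 fun j => by
    have := mem_cube.1 hi j
    omega
  have h_norm (i : Site d) : ‖U i g‖ ≤ ‖g‖ := ((U i).norm_map g).le
  have h_split : ∑ i ∈ cube (0 : Site d) n, U i (U r g - g) =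
      (∑ i ∈ cube r n, U i g - ∑ i ∈ inner, U i g) -
        (∑ i ∈ cube 0 n, U i g - ∑ i ∈ inner, U i g) := by
    simp only [sum_cube_eq_sum_cube_zero r, map_sub, hU, Finset.sum_sub_distrib,
      sub_sub_sub_cancel_right]
  have h_r := norm_sum_sub_sum_le_of_subset h_inner_r (fun i => U i g) h_norm
  have h_zero := norm_sum_sub_sum_le_of_subset h_inner_zero (fun i => U i g) h_norm
  simp only [inner, card_cube, Nat.cast_pow] at h_r h_zero
  rw [h_split]
  linarith [norm_sub_le (∑ i ∈ cube r n, U i g - ∑ i ∈ inner, U i g)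
    (∑ i ∈ cube 0 n, U i g - ∑ i ∈ inner, U i g)]

lemma tendsto_inv_pow_mul_pow_sub_sub_pow (d p : ℕ) :
    Tendsto (fun n : ℕ => ((n : ℝ) ^ d)⁻¹ * ((n : ℝ) ^ d - ((n - p : ℕ) : ℝ) ^ d)) atTop
      (𝓝 0) := by
  have h_nonneg (n : ℕ) : 0 ≤ (n : ℝ) ^ d - ((n - p : ℕ) : ℝ) ^ d := by
    rw [sub_nonneg]
    gcongr
    exact n.sub_le p
  refine tendsto_order.2 ⟨fun ε hε => .of_forall fun n =>
    hε.trans_le (mul_nonneg (by positivity) (h_nonneg n)), fun ε hε => ?_⟩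
  filter_upwards [eventually_pow_sub_sub_pow_le d p (half_pos hε), eventually_gt_atTop 0]
    with n hn hn_pos
  rw [inv_mul_lt_iff₀ (by positivity)]
  have h_pow : 0 < (n : ℝ) ^ d := by positivity
  linarith [mul_pos hε h_pow]

lemma tendsto_cubeAverage_coboundary (hU : ∀ r s f, U r (U s f) = U (r + s) f) (r : Site d)
    (g : H) : Tendsto (fun n => cubeAverage U n (U r g - g)) atTop (𝓝 0) := by
  have hR (j : Fin d) : r j ≤ ∑ j, r j := Finset.single_le_sum_of_canonicallyOrdered (by simp)
  have h_bound (n : ℕ) : ‖cubeAverage U n (U r g - g)‖ ≤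
      2 * (((n : ℝ) ^ d)⁻¹ * ((n : ℝ) ^ d - ((n - 2 * ∑ j, r j : ℕ) : ℝ) ^ d) * ‖g‖) := by
    rw [cubeAverage_apply, norm_smul, norm_inv, norm_pow, RCLike.norm_natCast]
    refine (mul_le_mul_of_nonneg_left (norm_sum_coboundary_le hU r g hR n)
      (by positivity)).trans_eq (by ring)
  refine squeeze_zero_norm h_bound ?_
  simpa using ((tendsto_inv_pow_mul_pow_sub_sub_pow d (2 * ∑ j, r j)).mul_const ‖g‖).const_mul 2

lemma mem_fixedVectors_of_forall_inner_coboundary_eq_zero {g : H}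
    (hg : ∀ r f, inner 𝕜 (U r f - f) g = 0) : g ∈ fixedVectors U := by
  refine mem_fixedVectors.2 fun r =>
    eq_of_norm_le_re_inner_eq_norm_sq (𝕜 := 𝕜) ((U r).norm_map g).le ?_
  have h_inner : inner 𝕜 (U r g) g = inner 𝕜 g g := by
    rw [← sub_eq_zero, ← inner_sub_left, hg]
  rw [h_inner, inner_self_eq_norm_sq]

instance [CompleteSpace H] : CompleteSpace (fixedVectors U) := by
  suffices h_closed : IsClosed (fixedVectors U : Set H) from h_closed.completeSpace_coe
  rw [fixedVectors, Submodule.coe_iInf]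
  exact isClosed_iInter fun r => isClosed_eq (U r).continuous continuous_id

lemma starProjection_fixedVectors_coboundary [CompleteSpace H] (r : Site d) (f : H) :
    (fixedVectors U).starProjection (U r f - f) = 0 := by
  refine (fixedVectors U).starProjection_apply_eq_zero_iff.2 fun v hv => ?_
  nth_rewrite 1 [inner_sub_right, ← mem_fixedVectors.1 hv r]
  rw [LinearIsometry.inner_map_map, sub_self]

theorem tendsto_cubeAverage_starProjection [CompleteSpace H]
    (hU : ∀ r s f, U r (U s f) = U (r + s) f) (f : H) :
    Tendsto (fun n => cubeAverage U n f) atTop (𝓝 ((fixedVectors U).starProjection f)) := by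
  let P := (fixedVectors U).starProjection
  let S : Submodule 𝕜 H :=
    { carrier := {f | Tendsto (fun n => cubeAverage U n f) atTop (𝓝 (P f))}
      add_mem' := fun {f g} hf hg => by simpa only [Set.mem_ofPred_eq, map_add] using hf.add hg
      zero_mem' := by simp
      smul_mem' := fun c f hf => by
        simpa only [Set.mem_ofPred_eq, map_smul] using Tendsto.const_smul hf c }
  have hS_closed : IsClosed (S : Set H) :=
    equicontinuous_cubeAverage.isClosed_setOfPred_tendsto P.continuous
  have hS_fixed : fixedVectors U ≤ S := fun f hf => by
    change Tendsto _ _ (𝓝 (P f))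
    rw [show P f = f from Submodule.starProjection_eq_self_iff.2 hf]
    refine tendsto_const_nhds.congr' ?_
    filter_upwards [eventually_gt_atTop 0] with n hn
    rw [cubeAverage_apply_of_mem_fixedVectors hf hn]
  have hS_coboundary (r : Site d) (f : H) : U r f - f ∈ S := by
    change Tendsto _ _ (𝓝 (P (U r f - f)))
    rw [show P (U r f - f) = 0 from starProjection_fixedVectors_coboundary r f]
    exact tendsto_cubeAverage_coboundary hU r f
  have hS_orthogonal : Sᗮ = ⊥ := (Submodule.eq_bot_iff _).2 fun g hg => by
    have hg_fixed : g ∈ fixedVectors U :=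
      mem_fixedVectors_of_forall_inner_coboundary_eq_zero fun r f => hg _ (hS_coboundary r f)
    exact inner_self_eq_zero.1 (hg g (hS_fixed hg_fixed))
  have hS_top : S = ⊤ := by
    rw [← hS_closed.submodule_topologicalClosure_eq]
    exact S.topologicalClosure_eq_top_iff.2 hS_orthogonal
  exact (hS_top ▸ Submodule.mem_top : f ∈ S)

end MeanErgodic

/-! ### Ergodic averages of square integrable functions -/

section Koopman

variable {μ : Measure (Config A d)}

/-- The Koopman isometry `f ↦ f ∘ σ_r` of `L²(μ)`. -/
noncomputable def Stationary.koopman (h : Stationary μ) (r : Site d) : Lp ℝ 2 μ →ₗᵢ[ℝ] Lp ℝ 2 μ :=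
  Lp.compMeasurePreservingₗᵢ ℝ (shift r) (h.measurePreserving r)

lemma Stationary.ae_shift (h : Stationary μ) (r : Site d) {p : Config A d → Prop}
    (hp : ∀ᵐ x ∂μ, p x) : ∀ᵐ x ∂μ, p (shift r x) :=
  (h.measurePreserving r).quasiMeasurePreserving.ae hp

lemma Stationary.koopman_ae_eq (h : Stationary μ) (r : Site d) {g : Lp ℝ 2 μ}
    {f : Config A d → ℝ} (hgf : g =ᵐ[μ] f) : h.koopman r g =ᵐ[μ] f ∘ shift r := by
  filter_upwards [Lp.coeFn_compMeasurePreserving g (h.measurePreserving r), h.ae_shift r hgf]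
    with x hx hx_shift
  exact hx.trans hx_shift

lemma Stationary.koopman_koopman (h : Stationary μ) (r s : Site d) (g : Lp ℝ 2 μ) :
    h.koopman r (h.koopman s g) = h.koopman (r + s) g := by
  refine Lp.ext ?_
  filter_upwards [h.koopman_ae_eq r (h.koopman_ae_eq s (ae_eq_refl g)),
    h.koopman_ae_eq (r + s) (ae_eq_refl g)] with x hx_comp hx_add
  rw [hx_comp, hx_add, Function.comp_apply, Function.comp_apply, Function.comp_apply,
    shift_shift, add_comm]

lemma Stationary.cubeAverage_koopman_ae_eq (h : Stationary μ) {g : Lp ℝ 2 μ}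
    {f : Config A d → ℝ} (hgf : g =ᵐ[μ] f) (n : ℕ) :
    cubeAverage h.koopman n g =ᵐ[μ]
      fun x => ((n : ℝ) ^ d)⁻¹ * ∑ i ∈ cube (0 : Site d) n, f (shift i x) := by
  rw [cubeAverage_apply]
  filter_upwards [ae_all_iff.2 fun r : Site d => h.koopman_ae_eq r hgf,
    Lp.coeFn_smul (((n : ℝ) ^ d)⁻¹) (∑ i ∈ cube (0 : Site d) n, h.koopman i g),
    Lp.coeFn_fun_finsetSum (cube (0 : Site d) n) fun i => h.koopman i g]
    with x hx_koopman hx_smul hx_sum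
  rw [hx_smul, Pi.smul_apply, hx_sum, smul_eq_mul]
  simp only [hx_koopman, Function.comp_apply]

variable [IsProbabilityMeasure μ]

lemma ErgodicShift.fixedVectors_koopman (h : ErgodicShift μ) :
    fixedVectors h.1.koopman = Submodule.span ℝ {Lp.const 2 μ (1 : ℝ)} := by
  ext g
  rw [mem_fixedVectors, Submodule.mem_span_singleton]
  have h_const : Lp.const 2 μ (1 : ℝ) =ᵐ[μ] Function.const _ 1 := Lp.coeFn_const 2 μ 1
  constructor
  · intro hg
    obtain ⟨c, hc⟩ := h.exists_ae_eq_const (Lp.aestronglyMeasurable g) fun r =>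
      (h.1.koopman_ae_eq r (ae_eq_refl g)).symm.trans (by rw [hg r])
    refine ⟨c, Lp.ext ?_⟩
    filter_upwards [hc, Lp.coeFn_smul c (Lp.const 2 μ (1 : ℝ)), h_const] with x hx hx_smul hx_one
    rw [hx, hx_smul, Pi.smul_apply, hx_one, Function.const_apply, Function.const_apply,
      smul_eq_mul, mul_one]
  · rintro ⟨c, rfl⟩ r
    rw [map_smul]
    exact congrArg (c • ·) (Lp.ext ((h.1.koopman_ae_eq r h_const).trans h_const.symm))

lemma ErgodicShift.starProjection_fixedVectors_koopman (h : ErgodicShift μ) {g : Lp ℝ 2 μ}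
    {f : Config A d → ℝ} (hgf : g =ᵐ[μ] f) :
    (fixedVectors h.1.koopman).starProjection g =ᵐ[μ] Function.const _ (∫ y, f y ∂μ) := by
  have h_const : Lp.const 2 μ (1 : ℝ) =ᵐ[μ] Function.const _ 1 := Lp.coeFn_const 2 μ 1
  have h_norm : ‖Lp.const 2 μ (1 : ℝ)‖ = 1 := by
    rw [Lp.norm_const' _ _ _ (by norm_num) (by norm_num)]
    simp
  have h_inner : inner ℝ (Lp.const 2 μ (1 : ℝ)) g = ∫ y, f y ∂μ := by
    rw [L2.inner_def]
    refine integral_congr_ae ?_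
    filter_upwards [h_const, hgf] with x hx_one hx
    rw [hx_one, hx]
    simp
  have h_proj : (fixedVectors h.1.koopman).starProjection g =
      (∫ y, f y ∂μ) • Lp.const 2 μ (1 : ℝ) := by
    simp only [h.fixedVectors_koopman, Submodule.starProjection_unit_singleton ℝ h_norm, h_inner]
  rw [h_proj]
  filter_upwards [Lp.coeFn_smul (∫ y, f y ∂μ) (Lp.const 2 μ (1 : ℝ)), h_const] with x hx_smul hx_one
  rw [hx_smul, Pi.smul_apply, hx_one, Function.const_apply, Function.const_apply, smul_eq_mul,
    mul_one]

theorem ErgodicShift.tendstoInMeasure_average (h : ErgodicShift μ) {f : Config A d → ℝ}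
    (hf : MemLp f 2 μ) :
    TendstoInMeasure μ
      (fun (n : ℕ) x => ((n : ℝ) ^ d)⁻¹ * ∑ i ∈ cube (0 : Site d) n, f (shift i x)) atTop
      fun _ => ∫ y, f y ∂μ :=
  (tendstoInMeasure_of_tendsto_Lp
    (tendsto_cubeAverage_starProjection h.1.koopman_koopman (hf.toLp f))).congr
    (h.1.cubeAverage_koopman_ae_eq hf.coeFn_toLp)
    (h.starProjection_fixedVectors_koopman hf.coeFn_toLp)

end Koopman

/-! ### Visits and the maximal inequality -/

/-- The number of sites `i ∈ F` with `σ_i x ∈ B`. -/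
noncomputable def visitCount (B : Set (Config A d)) (F : Finset (Site d)) (x : Config A d) : ℝ :=
  ∑ i ∈ F, B.indicator (fun _ => (1 : ℝ)) (shift i x)

lemma visitCount_eq_card (B : Set (Config A d)) (F : Finset (Site d)) (x : Config A d)
    [DecidablePred fun i => shift i x ∈ B] :
    visitCount B F x = (F.filter fun i => shift i x ∈ B).card := by
  classical
  simp [visitCount, Set.indicator_apply]

lemma visitCount_mono (B : Set (Config A d)) {F F' : Finset (Site d)} (h : F ⊆ F')
    (x : Config A d) : visitCount B F x ≤ visitCount B F' x :=
  Finset.sum_le_sum_of_subset_of_nonneg h fun _ _ _ =>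
    Set.indicator_nonneg (fun _ _ => zero_le_one) _

lemma visitCount_biUnion (B : Set (Config A d)) {ι : Type*} {s : Finset ι}
    {F : ι → Finset (Site d)} (hF : (s : Set ι).PairwiseDisjoint F) (x : Config A d) :
    visitCount B (s.biUnion F) x = ∑ r ∈ s, visitCount B (F r) x :=
  Finset.sum_biUnion hF

lemma visitCount_shift (B : Set (Config A d)) (r : Site d) (n : ℕ) (x : Config A d) :
    visitCount B (cube 0 n) (shift r x) = visitCount B (cube r n) x := by
  simp only [visitCount, shift_shift, sum_cube_eq_sum_cube_zero r]

lemma measurable_visitCount {B : Set (Config A d)} (hB : MeasurableSet B)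
    (F : Finset (Site d)) : Measurable (visitCount B F) :=
  Finset.measurable_fun_sum _ fun i _ => (measurable_const.indicator hB).comp (measurable_shift i)

lemma measurableSet_lt_visitCount {B : Set (Config A d)} (hB : MeasurableSet B) (c : ℝ)
    (F : Finset (Site d)) : MeasurableSet {x | c < visitCount B F x} :=
  measurableSet_lt measurable_const (measurable_visitCount hB F)

lemma Stationary.integrable_indicator_shift {μ : Measure (Config A d)} [IsFiniteMeasure μ]
    (h : Stationary μ) {B : Set (Config A d)} (hB : MeasurableSet B) (i : Site d) :
    Integrable (fun x => B.indicator (fun _ => (1 : ℝ)) (shift i x)) μ :=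
  (h.measurePreserving i).integrable_comp_of_integrable ((integrable_const 1).indicator hB)

lemma Stationary.integrable_visitCount {μ : Measure (Config A d)} [IsFiniteMeasure μ]
    (h : Stationary μ) {B : Set (Config A d)} (hB : MeasurableSet B) (F : Finset (Site d)) :
    Integrable (visitCount B F) μ :=
  integrable_finsetSum _ fun i _ => h.integrable_indicator_shift hB i

lemma Stationary.integral_visitCount {μ : Measure (Config A d)} [IsFiniteMeasure μ]
    (h : Stationary μ) {B : Set (Config A d)} (hB : MeasurableSet B) (F : Finset (Site d)) :
    ∫ x, visitCount B F x ∂μ = F.card * μ.real B := by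
  have h_site (i : Site d) : ∫ x, B.indicator (fun _ => (1 : ℝ)) (shift i x) ∂μ = μ.real B := by
    rw [← integral_map (measurable_shift i).aemeasurable
      (f := B.indicator fun _ => (1 : ℝ)) (measurable_const.indicator hB).aestronglyMeasurable,
      h i, integral_indicator_const _ hB, smul_eq_mul, mul_one]
  simp only [visitCount]
  rw [integral_finsetSum _ fun i _ => h.integrable_indicator_shift hB i]
  simp [h_site]

/-- The configurations with a frequency of visits to `B` above `c` in some `Λ_n`, `1 ≤ n ≤ K`. -/
def overVisited (B : Set (Config A d)) (c : ℝ) (K : ℕ) : Set (Config A d) :=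
  {x | ∃ n : ℕ, 1 ≤ n ∧ n ≤ K ∧ c * (n : ℝ) ^ d < visitCount B (cube 0 n) x}

lemma measurableSet_overVisited {B : Set (Config A d)} (hB : MeasurableSet B) (c : ℝ) (K : ℕ) :
    MeasurableSet (overVisited B c K) := by
  have h_eq : overVisited B c K = ⋃ n : ℕ, ⋃ _ : 1 ≤ n, ⋃ _ : n ≤ K,
      {x | c * (n : ℝ) ^ d < visitCount B (cube 0 n) x} := by
    ext x
    simp [overVisited, and_left_comm]
  rw [h_eq]
  exact .iUnion fun n => .iUnion fun _ => .iUnion fun _ => measurableSet_lt_visitCount hB _ _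

lemma overVisited_mono (B : Set (Config A d)) (c : ℝ) : Monotone (overVisited B c) :=
  fun _ _ hK _ ⟨n, hn, hnK, hx⟩ => ⟨n, hn, hnK.trans hK, hx⟩

lemma visitCount_overVisited_le (B : Set (Config A d)) {c : ℝ} (hc : 0 ≤ c) (K N : ℕ)
    (x : Config A d) :
    c * visitCount (overVisited B c K) (cube 0 N) x ≤ 3 ^ d * visitCount B (cube 0 (N + K)) x := by
  classical
  rw [visitCount_eq_card]
  set R := (cube (0 : Site d) N).filter fun i => shift i x ∈ overVisited B c K
  have h_visits : ∀ r ∈ R, ∃ n : ℕ, 1 ≤ n ∧ n ≤ K ∧ c * (n : ℝ) ^ d < visitCount B (cube r n) x :=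
    fun r hr => by
      simpa only [overVisited, Set.mem_ofPred_eq, visitCount_shift] using (Finset.mem_filter.1 hr).2
  choose! n hn_pos hnK hn using h_visits
  obtain ⟨u, huR, hu_disj, hu_card⟩ := exists_disjoint_cubes R n hn_pos
  have hu_subset : (u.biUnion fun r => cube r (n r)) ⊆ cube 0 (N + K) :=
    Finset.biUnion_subset.2 fun r hr i hi => mem_cube_zero.2 fun j => by
      have hi_lt := mem_cube.1 hi j
      have hr_lt := mem_cube_zero.1 (Finset.mem_filter.1 (huR hr)).1 j
      have := hnK r (huR hr)
      omega
  calc c * (R.card : ℝ) ≤ c * (3 ^ d * ∑ r ∈ u, (n r : ℝ) ^ d) := by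
        gcongr
        exact_mod_cast hu_card
    _ = 3 ^ d * ∑ r ∈ u, c * (n r : ℝ) ^ d := by rw [← Finset.mul_sum]; ring
    _ ≤ 3 ^ d * ∑ r ∈ u, visitCount B (cube r (n r)) x := by
        gcongr with r hr
        exact (hn r (huR hr)).le
    _ = 3 ^ d * visitCount B (u.biUnion fun r => cube r (n r)) x := by
        rw [visitCount_biUnion B hu_disj]
    _ ≤ 3 ^ d * visitCount B (cube 0 (N + K)) x := by
        gcongr
        exact visitCount_mono B hu_subset x

theorem Stationary.measureReal_overVisited_le {μ : Measure (Config A d)} [IsFiniteMeasure μ]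
    (h : Stationary μ) {B : Set (Config A d)} (hB : MeasurableSet B) {c : ℝ} (hc : 0 ≤ c) (K : ℕ) :
    c * μ.real (overVisited B c K) ≤ 3 ^ d * μ.real B := by
  have hE := measurableSet_overVisited hB c K
  have h_integral (N : ℕ) : c * ((N : ℝ) ^ d * μ.real (overVisited B c K)) ≤
      3 ^ d * (((N : ℝ) + K) ^ d * μ.real B) := by
    have h_mono := integral_mono ((h.integrable_visitCount hE (cube 0 N)).const_mul c)
      ((h.integrable_visitCount hB (cube 0 (N + K))).const_mul (3 ^ d))
      (visitCount_overVisited_le B hc K N)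
    rw [integral_const_mul, integral_const_mul, h.integral_visitCount hE, h.integral_visitCount hB,
      card_cube, card_cube] at h_mono
    exact_mod_cast h_mono
  have h_lim : Tendsto (fun N : ℕ => (1 + (K : ℝ) / N) ^ d * (3 ^ d * μ.real B)) atTop
      (𝓝 (3 ^ d * μ.real B)) := by
    simpa using ((tendsto_const_nhds (x := (1 : ℝ)).add
      (tendsto_const_div_atTop_nhds_zero_nat (K : ℝ))).pow d).mul_const (3 ^ d * μ.real B)
  refine ge_of_tendsto h_lim ?_
  filter_upwards [eventually_gt_atTop 0] with N hN
  have hN_pos : (0 : ℝ) < N := by exact_mod_cast hN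
  have h_pow : ((N : ℝ) + K) ^ d = (N : ℝ) ^ d * (1 + (K : ℝ) / N) ^ d := by
    rw [← mul_pow, mul_add, mul_one, mul_div_cancel₀ _ hN_pos.ne']
  refine le_of_mul_le_mul_left ?_ (pow_pos hN_pos d)
  linarith [h_pow ▸ h_integral N]

/-- The configurations whose frequency of visits to `B` in `Λ_n` exceeds, for infinitely many `n`,
some `q > c`. The slack between `q` and `c` makes this event shift-invariant; restricting to
rational `q` makes it measurable. -/
def overVisitedInfinitelyOften (B : Set (Config A d)) (c : ℝ) : Set (Config A d) :=
  {x | ∃ q : ℚ, c < q ∧ ∃ᶠ n : ℕ in atTop, (q : ℝ) * (n : ℝ) ^ d < visitCount B (cube 0 n) x}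

lemma measurableSet_overVisitedInfinitelyOften {B : Set (Config A d)} (hB : MeasurableSet B)
    (c : ℝ) : MeasurableSet (overVisitedInfinitelyOften B c) := by
  have h_eq : overVisitedInfinitelyOften B c = ⋃ q : ℚ, ⋃ _ : c < q,
      limsup (fun n : ℕ => {x | (q : ℝ) * (n : ℝ) ^ d < visitCount B (cube 0 n) x}) atTop := by
    ext x
    simp [overVisitedInfinitelyOften, mem_limsup_iff_frequently_mem]
  rw [h_eq]
  exact .iUnion fun q => .iUnion fun _ =>
    .measurableSet_limsup fun n => measurableSet_lt_visitCount hB _ _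

lemma cube_subset_cube_zero_add {r : Site d} {R : ℕ} (hR : ∀ j, r j ≤ R) (n : ℕ) :
    cube r n ⊆ cube 0 (n + R) := fun i hi => mem_cube_zero.2 fun j => by
  have := mem_cube.1 hi j
  have := hR j
  omega

lemma preimage_shift_overVisitedInfinitelyOften_subset (B : Set (Config A d)) {c : ℝ} (hc : 0 ≤ c)
    (r : Site d) :
    shift r ⁻¹' overVisitedInfinitelyOften B c ⊆ overVisitedInfinitelyOften B c := by
  rintro x ⟨q, hcq, hx⟩
  obtain ⟨q', hcq', hq'q⟩ := exists_rat_btwn hcq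
  have hq'_pos : (0 : ℝ) < q' := hc.trans_lt hcq'
  have hR (j : Fin d) : r j ≤ ∑ j, r j := Finset.single_le_sum_of_canonicallyOrdered (by simp)
  set R := ∑ j, r j
  have h_slack := eventually_add_pow_sub_pow_le d R (ε := ((q : ℝ) - q') / q')
    (div_pos (sub_pos.2 hq'q) hq'_pos)
  refine ⟨q', hcq', (tendsto_add_atTop_nat R).frequently
    ((hx.and_eventually h_slack).mono fun n ⟨hnx, hn⟩ => ?_)⟩
  have h_pow : ((n + R : ℕ) : ℝ) ^ d ≤ (n : ℝ) ^ d + (q - q') / q' * (n : ℝ) ^ d := by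
    linarith [hn]
  calc (q' : ℝ) * ((n + R : ℕ) : ℝ) ^ d ≤ q' * ((n : ℝ) ^ d + (q - q') / q' * (n : ℝ) ^ d) := by
        gcongr
    _ = q * (n : ℝ) ^ d := by field_simp; ring
    _ < visitCount B (cube r n) x := visitCount_shift B r n x ▸ hnx
    _ ≤ visitCount B (cube 0 (n + R)) x := visitCount_mono B (cube_subset_cube_zero_add hR n) x

lemma overVisitedInfinitelyOften_subset (B : Set (Config A d)) (c : ℝ) :
    overVisitedInfinitelyOften B c ⊆ ⋃ K, overVisited B c K := by
  rintro x ⟨q, hcq, hx⟩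
  obtain ⟨n, hnx, hn_pos⟩ := (hx.and_eventually (eventually_ge_atTop 1)).exists
  refine Set.mem_iUnion.2 ⟨n, n, hn_pos, le_rfl, lt_of_le_of_lt ?_ hnx⟩
  gcongr

lemma Stationary.measureReal_overVisitedInfinitelyOften_le {μ : Measure (Config A d)}
    [IsFiniteMeasure μ] (h : Stationary μ) {B : Set (Config A d)} (hB : MeasurableSet B) {c : ℝ}
    (hc : 0 < c) : c * μ.real (overVisitedInfinitelyOften B c) ≤ 3 ^ d * μ.real B := by
  have h_lim : Tendsto (fun K => c * μ.real (overVisited B c K)) atTop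
      (𝓝 (c * μ.real (⋃ K, overVisited B c K))) :=
    ((ENNReal.tendsto_toReal (measure_ne_top μ _)).comp
      (tendsto_measure_iUnion_atTop (overVisited_mono B c))).const_mul c
  calc c * μ.real (overVisitedInfinitelyOften B c) ≤ c * μ.real (⋃ K, overVisited B c K) := by
        gcongr
        · exact measure_ne_top μ _
        · exact overVisitedInfinitelyOften_subset B c
    _ ≤ 3 ^ d * μ.real B := le_of_tendsto' h_lim fun K => h.measureReal_overVisited_le hB hc.le K

theorem ErgodicShift.ae_eventually_visitCount_le {μ : Measure (Config A d)}
    [IsProbabilityMeasure μ] (h : ErgodicShift μ) {B : Set (Config A d)} (hB : MeasurableSet B)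
    {c : ℝ} (hc : 3 ^ d * μ.real B < c) :
    ∀ᵐ x ∂μ, ∀ᶠ n : ℕ in atTop, visitCount B (cube 0 n) x ≤ c * (n : ℝ) ^ d := by
  obtain ⟨c₀, hc₀, hc₀c⟩ := exists_between hc
  have hc₀_pos : 0 < c₀ := lt_of_le_of_lt (by positivity) hc₀
  have h_null : μ (overVisitedInfinitelyOften B c₀) = 0 := by
    refine (h.zero_one_of_subset (measurableSet_overVisitedInfinitelyOften hB c₀)
      (preimage_shift_overVisitedInfinitelyOften_subset B hc₀_pos.le)).resolve_right fun h_one => ?_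
    have h_le := h.1.measureReal_overVisitedInfinitelyOften_le hB hc₀_pos
    rw [measureReal_def, h_one, ENNReal.toReal_one, mul_one] at h_le
    exact hc₀.not_ge h_le
  filter_upwards [measure_eq_zero_iff_ae_notMem.1 h_null] with x hx
  obtain ⟨q, hc₀q, hqc⟩ := exists_rat_btwn hc₀c
  have h_eventually := not_frequently.1 fun h_freq => hx ⟨q, hc₀q, h_freq⟩
  filter_upwards [h_eventually] with n hn
  exact (not_lt.1 hn).trans (by gcongr)

/-! ### Entropy and typical words -/

section Information

variable {μ : Measure (Config A d)}

lemma wordDist_nonneg (μ : Measure (Config A d)) (k : ℕ) (w : Word A d k) : 0 ≤ wordDist μ k w :=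
  ENNReal.toReal_nonneg

lemma integral_comp_wordAt (μ : Measure (Config A d)) [IsFiniteMeasure μ] (k : ℕ)
    (g : Word A d k → ℝ) : ∫ x, g (wordAt x k 0) ∂μ = ∑ w, wordDist μ k w * g w := by
  have h_meas : Measurable fun x : Config A d => wordAt x k 0 := measurable_wordAt k 0
  rw [← integral_map (φ := fun x => wordAt x k 0) h_meas.aemeasurable
    (measurable_of_finite g).aestronglyMeasurable, integral_fintype Integrable.of_finite]
  refine Finset.sum_congr rfl fun w _ => ?_
  rw [smul_eq_mul, map_measureReal_apply h_meas (measurableSet_singleton w)]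
  rfl

lemma sum_wordDist_eq_measureReal [IsFiniteMeasure μ] {k : ℕ} (S : Finset (Word A d k)) :
    ∑ w ∈ S, wordDist μ k w = μ.real {x | wordAt x k 0 ∈ S} := by
  classical
  have h_integral := integral_comp_wordAt μ k fun w => if w ∈ S then 1 else 0
  simp only [mul_ite, mul_one, mul_zero, Finset.sum_ite_mem, Finset.univ_inter] at h_integral
  rw [← h_integral]
  refine Eq.trans ?_ (integral_indicator_one (measurableSet_wordAt_mem 0 (S : Set (Word A d k))))
  simp only [Set.indicator_apply, Set.mem_ofPred_eq, Pi.one_apply]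

lemma sum_wordDist (μ : Measure (Config A d)) [IsProbabilityMeasure μ] (k : ℕ) :
    ∑ w, wordDist μ k w = 1 := by
  simp [sum_wordDist_eq_measureReal]

lemma wordDist_le_one (μ : Measure (Config A d)) [IsProbabilityMeasure μ] (k : ℕ)
    (w : Word A d k) : wordDist μ k w ≤ 1 :=
  measureReal_le_one

lemma Stationary.ae_wordDist_pos [IsFiniteMeasure μ] (h : Stationary μ) (k : ℕ) :
    ∀ᵐ x ∂μ, ∀ c : Site d, 0 < wordDist μ k (wordAt x k c) := by
  have h_origin : ∀ᵐ x ∂μ, ∀ w : Word A d k, wordAt x k 0 = w → 0 < wordDist μ k w :=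
    ae_all_iff.2 fun w => by
      rcases (wordDist_nonneg μ k w).eq_or_lt with h_zero | h_pos
      · filter_upwards [measure_eq_zero_iff_ae_notMem.1 ((measureReal_eq_zero_iff).1 h_zero.symm)]
          with x hx hxw using absurd hxw hx
      · exact .of_forall fun _ _ => h_pos
  refine ae_all_iff.2 fun c => ?_
  filter_upwards [h.ae_shift c h_origin] with x hx
  simpa [wordAt_shift] using hx _ rfl

/-- The information content `-log_A μ^k(w)` of the `k`-word `w` of `x` at the origin. -/
noncomputable def information (μ : Measure (Config A d)) (k : ℕ) (x : Config A d) : ℝ :=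
  -Real.logb A (wordDist μ k (wordAt x k 0))

lemma rpow_neg_information_shift (hA : 2 ≤ A) {k : ℕ} {x : Config A d} {c : Site d}
    (hc : 0 < wordDist μ k (wordAt x k c)) :
    (A : ℝ) ^ (-information μ k (shift c x)) = wordDist μ k (wordAt x k c) := by
  have hA1 : (1 : ℝ) < A := mod_cast hA
  rw [information, neg_neg, wordAt_shift, zero_add,
    Real.rpow_logb (zero_lt_one.trans hA1) hA1.ne' hc]

lemma integral_information (μ : Measure (Config A d)) [IsFiniteMeasure μ] (k : ℕ) :
    ∫ x, information μ k x ∂μ = entH A (wordDist μ k) := by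
  refine (integral_comp_wordAt μ k fun w => -Real.logb A (wordDist μ k w)).trans ?_
  rw [entH, ← Finset.sum_neg_distrib]
  simp only [mul_neg]

lemma memLp_information (μ : Measure (Config A d)) [IsFiniteMeasure μ] (k : ℕ) :
    MemLp (information μ k) 2 μ := by
  obtain ⟨C, hC⟩ := (Set.toFinite (Set.range fun w => ‖-Real.logb A (wordDist μ k w)‖)).bddAbove
  exact MemLp.of_bound ((measurable_of_finite fun w => -Real.logb A (wordDist μ k w)).comp
    (measurable_wordAt k 0)).aestronglyMeasurable C (.of_forall fun x => hC ⟨wordAt x k 0, rfl⟩)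

variable [IsProbabilityMeasure μ]

lemma information_nonneg (hA : 2 ≤ A) (μ : Measure (Config A d)) [IsProbabilityMeasure μ] (k : ℕ)
    (x : Config A d) : 0 ≤ information μ k x :=
  neg_nonneg.2 (Real.logb_nonpos (mod_cast hA) (wordDist_nonneg μ k _) (wordDist_le_one μ k _))

lemma HasEntropyRate.nonneg (hA : 2 ≤ A) {h : ℝ} (hh : HasEntropyRate μ h) : 0 ≤ h :=
  ge_of_tendsto' hh fun n => div_nonneg
    (integral_information μ n ▸ integral_nonneg (information_nonneg hA μ n)) (by positivity)

end Information

section TypicalWords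

variable {μ : Measure (Config A d)}

/-- The configurations whose `b`-words at the sites of `T` have total information content at
most `C`. Configurations showing a word of probability zero are excluded, because the junk value
`log 0 = 0` would give such a word no information content. -/
def lowInformation (μ : Measure (Config A d)) (b : ℕ) (T : Finset (Site d)) (C : ℝ) :
    Set (Config A d) :=
  {x | (∀ c, 0 < wordDist μ b (wordAt x b c)) ∧ ∑ c ∈ T, information μ b (shift c x) ≤ C}

lemma card_filter_le_prod_mul_le_one {ι W : Type*} [Fintype ι] [DecidableEq ι] [Fintype W]
    {q : W → ℝ} (hq : ∀ w, 0 ≤ q w) (hq_sum : ∑ w, q w ≤ 1) (t : ℝ)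
    [DecidablePred fun u : ι → W => t ≤ ∏ c, q (u c)] :
    ((Finset.univ.filter fun u : ι → W => t ≤ ∏ c, q (u c)).card : ℝ) * t ≤ 1 := by
  calc ((Finset.univ.filter fun u : ι → W => t ≤ ∏ c, q (u c)).card : ℝ) * t
      = ∑ _u ∈ Finset.univ.filter fun u : ι → W => t ≤ ∏ c, q (u c), t := by
        rw [Finset.sum_const, nsmul_eq_mul]
    _ ≤ ∑ u ∈ Finset.univ.filter fun u : ι → W => t ≤ ∏ c, q (u c), ∏ c, q (u c) :=
        Finset.sum_le_sum fun u hu => (Finset.mem_filter.1 hu).2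
    _ ≤ ∑ u : ι → W, ∏ c, q (u c) :=
        Finset.sum_le_sum_of_subset_of_nonneg (Finset.filter_subset _ _)
          fun u _ _ => Finset.prod_nonneg fun c _ => hq (u c)
    _ = ∏ _c : ι, ∑ w, q w := by rw [Finset.prod_univ_sum, Fintype.piFinset_univ]
    _ ≤ 1 := Finset.prod_le_one (fun _ _ => Finset.sum_nonneg fun w _ => hq w) fun _ _ => hq_sum

variable [IsProbabilityMeasure μ]

lemma patternCount_lowInformation_biUnion_cube_le (hA : 2 ≤ A) (b : ℕ) (T : Finset (Site d))
    (C : ℝ) :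
    (patternCount (lowInformation μ b T C) (T.biUnion fun c => cube c b) : ℝ) ≤ (A : ℝ) ^ C := by
  classical
  have hA0 : (0 : ℝ) < A := by positivity
  set words : Config A d → T → Word A d b := fun x c => wordAt x b c
  set S : Finset (T → Word A d b) :=
    Finset.univ.filter fun u => (A : ℝ) ^ (-C) ≤ ∏ c, wordDist μ b (u c)
  have le_ncard_words : patternCount (lowInformation μ b T C) (T.biUnion fun c => cube c b) ≤
      (words '' lowInformation μ b T C).ncard := by
    refine ncard_image_le_of_determined (Set.toFinite _) fun y _ z _ hyz =>
      restrict_eq_iff.2 fun i hi => ?_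
    obtain ⟨c, hc, hi⟩ := Finset.mem_biUnion.1 hi
    exact wordAt_eq_iff.1 (congrFun hyz ⟨c, hc⟩) i hi
  have words_mem : words '' lowInformation μ b T C ⊆ S := by
    rintro _ ⟨x, ⟨h_pos, hxC⟩, rfl⟩
    refine Finset.mem_coe.2 (Finset.mem_filter.2 ⟨Finset.mem_univ _, ?_⟩)
    rw [Finset.prod_coe_sort T fun c => wordDist μ b (wordAt x b c),
      ← Finset.prod_congr rfl fun c _ => rpow_neg_information_shift hA (h_pos c),
      ← Real.rpow_sum_of_pos hA0, Finset.sum_neg_distrib]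
    exact Real.rpow_le_rpow_of_exponent_le (mod_cast (by omega)) (neg_le_neg hxC)
  have S_card_le : (S.card : ℝ) ≤ (A : ℝ) ^ C := by
    have h_mul_le : (S.card : ℝ) * (A : ℝ) ^ (-C) ≤ 1 :=
      card_filter_le_prod_mul_le_one (wordDist_nonneg μ b) (sum_wordDist μ b).le _
    rwa [Real.rpow_neg hA0.le, ← div_eq_mul_inv, div_le_one (by positivity)] at h_mul_le
  have ncard_words_le := Set.ncard_le_ncard words_mem S.finite_toSet
  rw [Set.ncard_coe_finset] at ncard_words_le
  exact (Nat.cast_le.2 (le_ncard_words.trans ncard_words_le)).trans S_card_le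

lemma lowInformation_subset_iUnion_tiles (hA : 2 ≤ A) {b : ℕ} (hb : 0 < b) (R : Finset (Site d))
    (C : ℝ) :
    lowInformation μ b R ((b : ℝ) ^ d * C) ⊆
      ⋃ v ∈ cube (0 : Site d) b, lowInformation μ b (tiles v b R) C := by
  rintro x ⟨h_pos, hxC⟩
  obtain ⟨v, hv, hvx⟩ := exists_offset_sum_tiles_le hb R
    fun i => information_nonneg hA μ b (shift i x)
  have hb_pow : (0 : ℝ) < (b : ℝ) ^ d := by positivity
  refine Set.mem_iUnion₂.2 ⟨v, hv, h_pos, le_of_mul_le_mul_right ?_ hb_pow⟩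
  rw [mul_comm C]
  exact hvx.trans hxC

lemma patternCount_lowInformation_tiles_le (hA : 2 ≤ A) {b : ℕ} (v : Site d)
    (R : Finset (Site d)) (C : ℝ) :
    (patternCount (lowInformation μ b (tiles v b R) C) R : ℝ) ≤
      (A : ℝ) ^ (C + (untiled v b R).card) := by
  have R_subset : R ⊆ ((tiles v b R).biUnion fun c => cube c b) ∪ untiled v b R := by
    rw [untiled, Finset.union_sdiff_self_eq_union]
    exact Finset.subset_union_right
  rw [Real.rpow_add (by positivity), Real.rpow_natCast]
  calc (patternCount (lowInformation μ b (tiles v b R) C) R : ℝ)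
      ≤ patternCount (lowInformation μ b (tiles v b R) C)
          ((tiles v b R).biUnion fun c => cube c b) * A ^ (untiled v b R).card :=
        mod_cast (patternCount_mono_right _ R_subset).trans
          ((patternCount_union_le _ _ _).trans (Nat.mul_le_mul_left _ (patternCount_le _ _)))
    _ ≤ (A : ℝ) ^ C * (A : ℝ) ^ (untiled v b R).card := by
        gcongr
        exact patternCount_lowInformation_biUnion_cube_le hA b _ C

lemma eventually_patternCount_lowInformation_le (hA : 2 ≤ A) (hd : 1 ≤ d) {b : ℕ} (hb : 0 < b)
    (C : ℝ) {δ : ℝ} (hδ : 0 < δ) :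
    ∀ᶠ n : ℕ in atTop,
      (patternCount (lowInformation μ b (cube 0 n) ((n : ℝ) ^ d * ((b : ℝ) ^ d * C)))
        (cube 0 n) : ℝ) ≤ (A : ℝ) ^ ((n : ℝ) ^ d * (C + δ)) := by
  have hA0 : (0 : ℝ) < A := by positivity
  have hA1 : (1 : ℝ) ≤ A := mod_cast (by omega)
  filter_upwards [eventually_card_untiled_le (d := d) hb (half_pos hδ),
    eventually_le_mul_pow hd (half_pos hδ) ((b : ℝ) ^ d)] with n untiled_le offset_count_le
  have tiles_le (v) (hv : v ∈ cube (0 : Site d) b) :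
      (patternCount (lowInformation μ b (tiles v b (cube 0 n)) ((n : ℝ) ^ d * C)) (cube 0 n) : ℝ) ≤
        (A : ℝ) ^ ((n : ℝ) ^ d * C + δ / 2 * (n : ℝ) ^ d) := by
    refine (patternCount_lowInformation_tiles_le hA v _ _).trans
      (Real.rpow_le_rpow_of_exponent_le hA1 ?_)
    gcongr
    simpa [cover] using untiled_le n le_rfl ∅ ⟨by simp, by simp⟩ (by simp) v hv
  rw [mul_left_comm]
  calc (patternCount (lowInformation μ b (cube 0 n) ((b : ℝ) ^ d * ((n : ℝ) ^ d * C)))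
          (cube 0 n) : ℝ)
      ≤ ∑ v ∈ cube (0 : Site d) b, (patternCount
          (lowInformation μ b (tiles v b (cube 0 n)) ((n : ℝ) ^ d * C)) (cube 0 n) : ℝ) :=
        (Nat.cast_le.2 (patternCount_le_sum _ (lowInformation_subset_iUnion_tiles hA hb _ _)
          _)).trans_eq (Nat.cast_sum _ _)
    _ ≤ ∑ _v ∈ cube (0 : Site d) b, (A : ℝ) ^ ((n : ℝ) ^ d * C + δ / 2 * (n : ℝ) ^ d) :=
        Finset.sum_le_sum tiles_le
    _ = (b : ℝ) ^ d * (A : ℝ) ^ ((n : ℝ) ^ d * C + δ / 2 * (n : ℝ) ^ d) := by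
        rw [Finset.sum_const, card_cube, nsmul_eq_mul, Nat.cast_pow]
    _ ≤ (A : ℝ) ^ (δ / 2 * (n : ℝ) ^ d) * (A : ℝ) ^ ((n : ℝ) ^ d * C + δ / 2 * (n : ℝ) ^ d) := by
        gcongr
        exact (pow_le_rpow_pow hA b d).trans (by gcongr)
    _ = (A : ℝ) ^ ((n : ℝ) ^ d * (C + δ)) := by
        rw [← Real.rpow_add hA0]
        congr 1
        ring

lemma ErgodicShift.tendsto_measureReal_compl_lowInformation (hμ : ErgodicShift μ) {b : ℕ} {C : ℝ}
    (hC : entH A (wordDist μ b) < C) :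
    Tendsto (fun n : ℕ => μ.real (lowInformation μ b (cube 0 n) ((n : ℝ) ^ d * C))ᶜ) atTop
      (𝓝 0) := by
  have h_average := hμ.tendstoInMeasure_average (memLp_information μ b)
  rw [integral_information, tendstoInMeasure_iff_measureReal_norm] at h_average
  refine squeeze_zero' (.of_forall fun _ => measureReal_nonneg) ?_ (h_average _ (sub_pos.2 hC))
  filter_upwards [eventually_gt_atTop 0] with n hn
  refine ENNReal.toReal_mono (measure_ne_top _ _) (measure_mono_ae ?_)
  filter_upwards [hμ.1.ae_wordDist_pos b] with x hx hx_mem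
  have h_lt : (n : ℝ) ^ d * C < ∑ i ∈ cube 0 n, information μ b (shift i x) :=
    not_le.1 fun h_le => hx_mem ⟨hx, h_le⟩
  rw [← lt_inv_mul_iff₀ (by positivity)] at h_lt
  exact (sub_le_sub_right h_lt.le _).trans (le_abs_self _)

/-- A weak form of the Shannon–McMillan theorem. -/
theorem ErgodicShift.eventually_exists_typical_words (hA : 2 ≤ A) (hd : 1 ≤ d)
    (hμ : ErgodicShift μ) {h : ℝ} (hh : HasEntropyRate μ h) {ε δ : ℝ} (hε : 0 < ε) (hδ : 0 < δ) :
    ∀ᶠ p : ℕ in atTop, ∃ G : Finset (Word A d p), μ.real {x | wordAt x p 0 ∉ G} ≤ ε ∧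
      (G.card : ℝ) ≤ (A : ℝ) ^ ((p : ℝ) ^ d * (h + δ)) := by
  obtain ⟨b, h_entropy, hb⟩ := ((hh.eventually_lt_const (lt_add_of_pos_right h (half_pos hδ))).and
    (eventually_gt_atTop 0)).exists
  rw [div_lt_iff₀' (by positivity)] at h_entropy
  filter_upwards [eventually_patternCount_lowInformation_le (μ := μ) hA hd hb (h + δ / 2)
      (half_pos hδ), (hμ.tendsto_measureReal_compl_lowInformation h_entropy).eventually_le_const hε]
    with p count_le compl_le
  set F := lowInformation μ b (cube 0 p) ((p : ℝ) ^ d * ((b : ℝ) ^ d * (h + δ / 2)))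
  have h_finite : ((fun x => wordAt x p 0) '' F).Finite := Set.toFinite _
  refine ⟨h_finite.toFinset, (measureReal_mono ?_).trans compl_le, ?_⟩
  · exact fun x hx hxF => hx (h_finite.mem_toFinset.2 ⟨x, hxF, rfl⟩)
  · rwa [← Set.ncard_eq_toFinset_card _ h_finite, ← patternCount_cube,
      show h + δ = h + δ / 2 + δ / 2 by ring]

end TypicalWords

/-! ### Families of typical words -/

section Typical

variable {μ : Measure (Config A d)}

/-- The large-scale form of the Shannon–McMillan–Breiman theorem: configurations that are typical
on `Λ_n` have at most about `A ^ (h * v)` patterns on the complement of a packing, `v` being the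
volume of this complement, and almost surely disjoint cubes on which the configuration is not
typical fill at most the proportion `lam` of every large `Λ_n`. -/
structure IsTypicalFamily (μ : Measure (Config A d)) (h η lam : ℝ) (G : ℕ → Set (Config A d)) :
    Prop where
  measurableSet : ∀ n, MeasurableSet (G n)
  ae_eventually_vol_le : ∀ᵐ x ∂μ, ∀ᶠ n : ℕ in atTop, ∀ Z, IsPacking Z n →
    (∀ b ∈ Z, shift b.1 x ∉ G b.2) → (vol Z : ℝ) ≤ lam * (n : ℝ) ^ d
  eventually_patternCount_le : ∀ᶠ k : ℕ in atTop, ∀ n ≥ k, ∀ Z, IsPacking Z n →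
    (∀ b ∈ Z, k ≤ b.2) → (patternCount (G n) (cube 0 n \ cover Z) : ℝ) ≤
      (A : ℝ) ^ (h * ((n : ℝ) ^ d - vol Z) + η * (n : ℝ) ^ d)

lemma card_badSites_eq_visitCount {p : ℕ} (G : Finset (Word A d p)) (n : ℕ) (x : Config A d) :
    ((badSites G n x).card : ℝ) = visitCount {x | wordAt x p 0 ∉ G} (cube 0 n) x := by
  classical
  rw [visitCount_eq_card, badSites]
  congr 2
  ext i
  simp [wordAt_shift]

lemma measurableSet_mostlyIn {p : ℕ} (G : Finset (Word A d p)) (δ : ℝ) (n : ℕ) :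
    MeasurableSet (mostlyIn G δ n) := by
  have hcompl : mostlyIn G δ n =
      {x | δ * (n : ℝ) ^ d < visitCount {x | wordAt x p 0 ∉ G} (cube 0 n) x}ᶜ := by
    ext x
    simp only [mostlyIn, Set.mem_ofPred_eq, Set.mem_compl_iff, not_lt,
      ← card_badSites_eq_visitCount]
  rw [hcompl]
  exact (measurableSet_lt_visitCount (measurableSet_wordAt_mem 0 {w | w ∉ G}) _ _).compl

lemma mul_vol_le_visitCount_of_forall_notMem_mostlyIn {p n : ℕ} {G : Finset (Word A d p)} {δ : ℝ}
    {Z : Finset (Site d × ℕ)} (hZ : IsPacking Z n) {x : Config A d}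
    (hx : ∀ b ∈ Z, shift b.1 x ∉ mostlyIn G δ b.2) :
    δ * (vol Z : ℝ) ≤ visitCount {x | wordAt x p 0 ∉ G} (cube 0 n) x := by
  refine le_trans ?_ (visitCount_mono _ hZ.cover_subset x)
  rw [cover, visitCount_biUnion _ hZ.pairwiseDisjoint, vol, Nat.cast_sum, Finset.mul_sum]
  refine Finset.sum_le_sum fun b hb => ?_
  have hbad := hx b hb
  rw [mostlyIn, Set.mem_ofPred_eq, not_le, card_badSites_eq_visitCount, visitCount_shift] at hbad
  exact_mod_cast hbad.le

theorem ErgodicShift.exists_isTypicalFamily (hA : 2 ≤ A) (hd : 1 ≤ d) [IsProbabilityMeasure μ]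
    (hμ : ErgodicShift μ) {h η lam : ℝ} (hh : HasEntropyRate μ h) (hη : 0 < η) (hlam : 0 < lam) :
    ∃ G : ℕ → Set (Config A d), IsTypicalFamily μ h η lam G := by
  have hδ : 0 < η / 5 := by positivity
  obtain ⟨p, ⟨⟨G, hG_bad, hG_card⟩, hp_large⟩, hp⟩ :=
    (((hμ.eventually_exists_typical_words hA hd hh (ε := lam * (η / 5) / 3 ^ d / 2)
      (by positivity) hδ).and (eventually_le_mul_pow hd hδ 1)).and (eventually_gt_atTop 0)).exists
  refine ⟨mostlyIn G (η / 5), measurableSet_mostlyIn G _, ?_, ?_⟩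
  · have hfreq : 3 ^ d * μ.real {x | wordAt x p 0 ∉ G} < lam * (η / 5) :=
      calc 3 ^ d * μ.real {x | wordAt x p 0 ∉ G} ≤ 3 ^ d * (lam * (η / 5) / 3 ^ d / 2) := by gcongr
        _ = lam * (η / 5) / 2 := by field_simp
        _ < lam * (η / 5) := half_lt_self (by positivity)
    filter_upwards [hμ.ae_eventually_visitCount_le (measurableSet_wordAt_mem 0 {w | w ∉ G}) hfreq]
      with x hx
    filter_upwards [hx] with n hn Z hZ hZ_bad
    have hvol : η / 5 * (vol Z : ℝ) ≤ η / 5 * (lam * (n : ℝ) ^ d) :=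
      (mul_vol_le_visitCount_of_forall_notMem_mostlyIn hZ hZ_bad).trans (hn.trans_eq (by ring))
    exact le_of_mul_le_mul_left hvol hδ
  · filter_upwards [eventually_patternCount_mostlyIn_le hA hd hp (hh.nonneg hA) hδ hp_large hG_card]
      with k hk n hn Z hZ hside
    exact (hk n hn Z hZ hside).trans_eq (by ring_nf)

lemma IsTypicalFamily.ae_eventually_mem {h η lam : ℝ} {G : ℕ → Set (Config A d)}
    (hG : IsTypicalFamily μ h η lam G) (hlam : lam < 1) : ∀ᵐ x ∂μ, ∀ᶠ n : ℕ in atTop, x ∈ G n := by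
  filter_upwards [hG.ae_eventually_vol_le] with x hx
  filter_upwards [hx, eventually_gt_atTop 0] with n hn hn_pos
  by_contra hxG
  have hvol := hn {(0, n)} ⟨by simp, by simp⟩
    fun b hb => by rwa [Finset.mem_singleton.1 hb]
  have hpos : (0 : ℝ) < (n : ℝ) ^ d := by positivity
  simp only [vol, Finset.sum_singleton, Nat.cast_pow] at hvol
  nlinarith

lemma IsTypicalFamily.tendsto_measure_compl [IsFiniteMeasure μ] {h η lam : ℝ}
    {G : ℕ → Set (Config A d)} (hG : IsTypicalFamily μ h η lam G) (hlam : lam < 1) :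
    Tendsto (fun n => μ (G n)ᶜ) atTop (𝓝 0) := by
  have hlim := tendsto_measure_of_ae_tendsto_indicator_of_isFiniteMeasure (μ := μ) atTop
    (A := ∅) (As := fun n => (G n)ᶜ) MeasurableSet.empty (fun n => (hG.measurableSet n).compl) (by
      filter_upwards [hG.ae_eventually_mem hlam] with x hx
      filter_upwards [hx] with n hn
      simpa using hn)
  simpa using hlim

/-- The words seen on `Λ_k` by the configurations of `V`. -/
noncomputable def wordsOf (V : Set (Config A d)) (k : ℕ) : Finset (Word A d k) :=
  (Set.toFinite ((fun x : Config A d => wordAt x k 0) '' V)).toFinset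

lemma mem_wordsOf {V : Set (Config A d)} {k : ℕ} {w : Word A d k} :
    w ∈ wordsOf V k ↔ ∃ x ∈ V, wordAt x k 0 = w := by
  rw [wordsOf, Set.Finite.mem_toFinset, Set.mem_image]

lemma card_wordsOf (V : Set (Config A d)) (k : ℕ) :
    (wordsOf V k).card = patternCount V (cube 0 k) := by
  rw [patternCount_cube, wordsOf, Set.ncard_eq_toFinset_card _ (Set.toFinite _)]

theorem ErgodicShift.exists_ae_vol_atypical_le (hA : 2 ≤ A) (hd : 1 ≤ d) [IsProbabilityMeasure μ]
    (hμ : ErgodicShift μ) {h η lam : ℝ} (hh : HasEntropyRate μ h) (hη : 0 < η) (hlam : 0 < lam) :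
    ∃ T : (k : ℕ) → Finset (Word A d k),
      (∀ᶠ k : ℕ in atTop, ((T k).card : ℝ) ≤ (A : ℝ) ^ ((k : ℝ) ^ d * (h + η))) ∧
      ∀ᵐ x ∂μ, ∀ᶠ n : ℕ in atTop, ∀ Z : Finset (Site d × ℕ), IsPacking Z n →
        (∀ b ∈ Z, wordAt x b.2 b.1 ∉ T b.2) → (vol Z : ℝ) ≤ lam * (n : ℝ) ^ d := by
  obtain ⟨G, hG⟩ := hμ.exists_isTypicalFamily hA hd hh hη hlam
  refine ⟨fun k => wordsOf (G k) k, ?_, ?_⟩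
  · filter_upwards [hG.eventually_patternCount_le] with k hk
    have hempty := hk k le_rfl ∅ ⟨by simp, by simp⟩ (by simp)
    simp only [vol, cover, Finset.biUnion_empty, Finset.sdiff_empty, Finset.sum_empty,
      Nat.cast_zero, sub_zero] at hempty
    rw [card_wordsOf]
    exact hempty.trans_eq (by ring_nf)
  · filter_upwards [hG.ae_eventually_vol_le] with x hx
    filter_upwards [hx] with n hn Z hZ hZT
    exact hn Z hZ fun b hb hxb =>
      hZT b hb (mem_wordsOf.2 ⟨_, hxb, by rw [wordAt_shift, zero_add]⟩)

end Typical

/-! ### Packings of cubes with few patterns -/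

lemma patternCount_le_rpow_of_forall_cube (hA : 0 < A) {n : ℕ} {Z : Finset (Site d × ℕ)}
    {V : Set (Config A d)} {x : Config A d} {t : ℝ}
    (hV : ∀ y ∈ V, ∀ i ∈ cube 0 n \ cover Z, y i = x i)
    (hZ : ∀ b ∈ Z, (patternCount V (cube b.1 b.2) : ℝ) ≤ (A : ℝ) ^ ((b.2 : ℝ) ^ d * t)) :
    (patternCount V (cube 0 n) : ℝ) ≤ (A : ℝ) ^ (t * vol Z) := by
  have hdet : patternCount V (cube 0 n) ≤ patternCount V (cover Z) :=
    patternCount_le_of_determined fun y hy z hz hyz i hi => by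
      by_cases hiZ : i ∈ cover Z
      · exact hyz i hiZ
      · have hi' := Finset.mem_sdiff.2 ⟨hi, hiZ⟩
        rw [hV y hy i hi', hV z hz i hi']
  calc (patternCount V (cube 0 n) : ℝ) ≤ ∏ b ∈ Z, (patternCount V (cube b.1 b.2) : ℝ) :=
        mod_cast hdet.trans (patternCount_biUnion_le_prod V Z fun b => cube b.1 b.2)
    _ ≤ ∏ b ∈ Z, (A : ℝ) ^ ((b.2 : ℝ) ^ d * t) :=
        Finset.prod_le_prod (fun _ _ => Nat.cast_nonneg _) hZ
    _ = (A : ℝ) ^ (t * vol Z) := by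
        rw [← Real.rpow_sum_of_pos (Nat.cast_pos.2 hA), ← Finset.sum_mul, vol, mul_comm]
        push_cast
        rfl

lemma IsTypicalFamily.eventually_patternCount_le_of_forall_cube (hA : 0 < A)
    {μ : Measure (Config A d)} {h η lam : ℝ} {G : ℕ → Set (Config A d)}
    (hG : IsTypicalFamily μ h η lam G) (δ : ℝ) :
    ∀ᶠ k : ℕ in atTop, ∀ n ≥ k, ∀ Z, IsPacking Z n → (∀ b ∈ Z, k ≤ b.2) → ∀ W ⊆ G n,
      (∀ x ∈ W, ∀ b ∈ Z,
        (patternCount {y ∈ W | ∀ i ∈ cube 0 n \ cover Z, y i = x i} (cube b.1 b.2) : ℝ) ≤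
          (A : ℝ) ^ ((b.2 : ℝ) ^ d * (h - δ))) →
      (patternCount W (cube 0 n) : ℝ) ≤
        (A : ℝ) ^ ((n : ℝ) ^ d * (h + η) - δ * vol Z) := by
  filter_upwards [hG.eventually_patternCount_le] with k hk n hn Z hZ hside W hW hWZ
  calc (patternCount W (cube 0 n) : ℝ)
      ≤ (A : ℝ) ^ ((h - δ) * vol Z) * patternCount W (cube 0 n \ cover Z) :=
        patternCount_le_mul_patternCount fun x hx =>
          patternCount_le_rpow_of_forall_cube hA (fun _ hy => hy.2) (hWZ x hx)
    _ ≤ (A : ℝ) ^ ((h - δ) * vol Z) * (A : ℝ) ^ (h * ((n : ℝ) ^ d - vol Z) + η * (n : ℝ) ^ d) := by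
        gcongr
        exact (Nat.cast_le.2 (patternCount_mono_left hW _)).trans (hk n hn Z hZ hside)
    _ = (A : ℝ) ^ ((n : ℝ) ^ d * (h + η) - δ * vol Z) := by
        rw [← Real.rpow_add (Nat.cast_pos.2 hA)]
        ring_nf

section Entropy

variable {W : Type*} [Fintype W] {p : W → ℝ}

lemma entH_le_sum_mul_of_sum_rpow_neg_le (hA : 1 < A) (hp : ∀ w, 0 ≤ p w) {ℓ : W → ℝ}
    (hℓ : ∑ w, (A : ℝ) ^ (-ℓ w) ≤ ∑ w, p w) : entH A p ≤ ∑ w, p w * ℓ w := by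
  have hA_pos : (0 : ℝ) < A := by positivity
  have hlog : 0 < Real.log A := Real.log_pos (mod_cast hA)
  have hterm (w : W) : -(p w * Real.log (p w)) - p w * (ℓ w * Real.log A) ≤
      (A : ℝ) ^ (-ℓ w) - p w := by
    have hq : (0 : ℝ) < (A : ℝ) ^ (-ℓ w) := Real.rpow_pos_of_pos hA_pos _
    rcases (hp w).eq_or_lt with hpw | hpw
    · simpa [← hpw] using hq.le
    have hlog_le := Real.log_le_sub_one_of_pos (div_pos hq hpw)
    rw [Real.log_div hq.ne' hpw.ne', Real.log_rpow hA_pos] at hlog_le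
    calc -(p w * Real.log (p w)) - p w * (ℓ w * Real.log A)
        = p w * (-ℓ w * Real.log A - Real.log (p w)) := by ring
      _ ≤ p w * ((A : ℝ) ^ (-ℓ w) / p w - 1) := by gcongr
      _ = (A : ℝ) ^ (-ℓ w) - p w := by field_simp
  have hsum := Finset.sum_le_sum fun w (_ : w ∈ Finset.univ) => hterm w
  simp only [Finset.sum_sub_distrib, Finset.sum_neg_distrib, ← mul_assoc, ← Finset.sum_mul] at hsum
  have hent : entH A p = -(∑ w, p w * Real.log (p w)) / Real.log A := by
    simp only [entH, Real.logb, ← mul_div_assoc, ← Finset.sum_div, neg_div]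
  rw [hent, div_le_iff₀ hlog]
  linarith

/-- The lengths are those of the code that describes a word of `S` with `L` symbols and any other
word with `N` symbols, after one symbol announcing which of the two cases holds. -/
lemma sum_rpow_neg_one_add_ite_le_one (hA : 2 ≤ A) {S : Finset W} {L N : ℝ}
    [DecidablePred (· ∈ S)] (hS : (S.card : ℝ) ≤ (A : ℝ) ^ L)
    (hW : (Fintype.card W : ℝ) ≤ (A : ℝ) ^ N) :
    ∑ w, (A : ℝ) ^ (-(1 + if w ∈ S then L else N)) ≤ 1 := by
  classical
  have hA_pos : (0 : ℝ) < A := by positivity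
  have hsum (T : Finset W) {M : ℝ} (hT : (T.card : ℝ) ≤ (A : ℝ) ^ M) :
      ∑ _w ∈ T, (A : ℝ) ^ (-(1 + M)) ≤ 1 / 2 := by
    have hA_inv : (A : ℝ)⁻¹ ≤ 1 / 2 := by
      rw [one_div]
      exact inv_anti₀ two_pos (mod_cast hA)
    calc ∑ _w ∈ T, (A : ℝ) ^ (-(1 + M)) = (A : ℝ)⁻¹ * (T.card * ((A : ℝ) ^ M)⁻¹) := by
          rw [Finset.sum_const, nsmul_eq_mul, Real.rpow_neg hA_pos.le, Real.rpow_add hA_pos,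
            Real.rpow_one, mul_inv]
          ring
      _ ≤ (A : ℝ)⁻¹ * 1 := by
          gcongr
          exact mul_inv_le_one_of_le₀ hT (by positivity)
      _ ≤ 1 / 2 := by rwa [mul_one]
  have hcompl : ((Sᶜ).card : ℝ) ≤ (A : ℝ) ^ N := (Nat.cast_le.2 (Finset.card_le_univ _)).trans hW
  calc ∑ w, (A : ℝ) ^ (-(1 + if w ∈ S then L else N))
      = ∑ _w ∈ S, (A : ℝ) ^ (-(1 + L)) + ∑ _w ∈ Sᶜ, (A : ℝ) ^ (-(1 + N)) := by
        rw [← Finset.sum_add_sum_compl S]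
        congr 1 <;> refine Finset.sum_congr rfl fun w hw => ?_
        · rw [if_pos hw]
        · rw [if_neg (Finset.mem_compl.1 hw)]
    _ ≤ 1 := by linarith [hsum S hS, hsum Sᶜ hcompl]

lemma entH_le_of_card_le (hA : 2 ≤ A) (hp : ∀ w, 0 ≤ p w) (hp_sum : ∑ w, p w = 1) (S : Finset W)
    {L N : ℝ} (hS : (S.card : ℝ) ≤ (A : ℝ) ^ L) (hW : (Fintype.card W : ℝ) ≤ (A : ℝ) ^ N) :
    entH A p ≤ 1 + (∑ w ∈ S, p w) * L + (1 - ∑ w ∈ S, p w) * N := by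
  classical
  refine (entH_le_sum_mul_of_sum_rpow_neg_le hA hp
    ((sum_rpow_neg_one_add_ite_le_one hA hS hW).trans_eq hp_sum.symm)).trans_eq ?_
  have hcompl : ∑ w ∈ Sᶜ, p w = 1 - ∑ w ∈ S, p w := by
    rw [← hp_sum, ← Finset.sum_add_sum_compl S p, add_sub_cancel_left]
  simp only [mul_add, mul_one, mul_ite, Finset.sum_add_distrib, Finset.sum_ite, hp_sum,
    ← Finset.sum_mul, Finset.filter_mem_eq_inter, Finset.univ_inter, ← Finset.sdiff_eq_filter,
    ← Finset.compl_eq_univ_sdiff, hcompl]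
  ring

end Entropy

lemma tendsto_sum_wordDist_wordsOf {μ : Measure (Config A d)} [IsProbabilityMeasure μ]
    {Q : ℕ → Set (Config A d)} (hQ : Tendsto (fun n => μ (Q n)ᶜ) atTop (𝓝 0)) :
    Tendsto (fun n => ∑ w ∈ wordsOf (Q n) n, wordDist μ n w) atTop (𝓝 1) := by
  have hlower : Tendsto (fun n => 1 - μ.real (Q n)ᶜ) atTop (𝓝 1) := by
    simpa [measureReal_def] using
      ((ENNReal.tendsto_toReal ENNReal.zero_ne_top).comp hQ).const_sub 1
  simp only [sum_wordDist_eq_measureReal]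
  refine tendsto_of_tendsto_of_tendsto_of_le_of_le hlower tendsto_const_nhds (fun n => ?_)
    fun _ => measureReal_le_one
  rw [sub_le_iff_le_add, ← probReal_univ (μ := μ)]
  exact (measureReal_mono fun x _ => (em (x ∈ Q n)).imp
    (fun hx => mem_wordsOf.2 ⟨x, hx, rfl⟩) id).trans (measureReal_union_le _ _)

theorem HasEntropyRate.not_tendsto_measure_compl (hA : 2 ≤ A) (hd : 1 ≤ d)
    {μ : Measure (Config A d)} [IsProbabilityMeasure μ] {h κ : ℝ} (hh : HasEntropyRate μ h)
    (hκ : 0 < κ) {Q : ℕ → Set (Config A d)}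
    (hQ : ∀ᶠ n : ℕ in atTop,
      (patternCount (Q n) (cube 0 n) : ℝ) ≤ (A : ℝ) ^ ((n : ℝ) ^ d * (h - κ))) :
    ¬ Tendsto (fun n => μ (Q n)ᶜ) atTop (𝓝 0) := by
  intro hlim
  have hmass := tendsto_sum_wordDist_wordsOf hlim
  have hinv : Tendsto (fun n : ℕ => ((n : ℝ) ^ d)⁻¹) atTop (𝓝 0) :=
    ((tendsto_pow_atTop (by omega)).comp tendsto_natCast_atTop_atTop).inv_tendsto_atTop
  have hle : h ≤ 0 + 1 * (h - κ) + (1 - 1) := by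
    refine le_of_tendsto_of_tendsto hh
      ((hinv.add (hmass.mul_const (h - κ))).add (hmass.const_sub 1)) ?_
    filter_upwards [hQ, eventually_gt_atTop 0] with n hn hn_pos
    have hpos : (0 : ℝ) < (n : ℝ) ^ d := by positivity
    have hcard : (Fintype.card (Word A d n) : ℝ) ≤ (A : ℝ) ^ ((n : ℝ) ^ d) := by
      simp only [Fintype.card_fun, Fintype.card_fin, Nat.cast_pow]
      rw [← Nat.cast_pow n d, Real.rpow_natCast]
    rw [div_le_iff₀ hpos]
    refine (entH_le_of_card_le hA (wordDist_nonneg μ n) (sum_wordDist μ n) (wordsOf (Q n) n)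
      (by rwa [card_wordsOf]) hcard).trans_eq ?_
    field_simp
  linarith

/-! ### Few words are almost surely avoided -/

lemma patternCount_le_rpow_add {ι : Type*} {W : Set (Config A d)} {S : Finset ι}
    {V : ι → Set (Config A d)} (hW : W ⊆ ⋃ s ∈ S, V s) {F : Finset (Site d)} (hA : 0 < A)
    {t u : ℝ} (hS : (S.card : ℝ) ≤ (A : ℝ) ^ u)
    (hV : ∀ s ∈ S, (patternCount (V s) F : ℝ) ≤ (A : ℝ) ^ t) :
    (patternCount W F : ℝ) ≤ (A : ℝ) ^ (u + t) :=
  calc (patternCount W F : ℝ) ≤ ∑ s ∈ S, (patternCount (V s) F : ℝ) :=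
        (Nat.cast_le.2 (patternCount_le_sum S hW F)).trans_eq (Nat.cast_sum _ _)
    _ ≤ S.card * (A : ℝ) ^ t := (Finset.sum_le_card_nsmul S _ _ hV).trans_eq (nsmul_eq_mul _ _)
    _ ≤ (A : ℝ) ^ u * (A : ℝ) ^ t := by gcongr
    _ = (A : ℝ) ^ (u + t) := (Real.rpow_add (Nat.cast_pos.2 hA) _ _).symm

/-- The configurations of `V` for which disjoint cubes of side at least `k`, on which the
configuration looks like an element of `C`, fill at least the proportion `a` of `Λ_n`. -/
def denselyIn (V : Set (Config A d)) (C : ℕ → Set (Config A d)) (a : ℝ) (k n : ℕ) :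
    Set (Config A d) :=
  {x ∈ V | ∃ Z, IsPacking Z n ∧ (∀ b ∈ Z, k ≤ b.2 ∧ shift b.1 x ∈ C b.2) ∧
    a * (n : ℝ) ^ d ≤ vol Z}

lemma patternCount_cube_le_of_shift_mem {V C : Set (Config A d)} {c : Site d} {k : ℕ}
    (h : ∀ y ∈ V, shift c y ∈ C) : patternCount V (cube c k) ≤ patternCount C (cube 0 k) := by
  rw [patternCount_cube, patternCount_cube]
  refine Set.ncard_le_ncard ?_ (Set.toFinite _)
  rintro _ ⟨y, hy, rfl⟩
  exact ⟨shift c y, h y hy, by simp only [wordAt_shift, zero_add]⟩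

lemma IsTypicalFamily.eventually_patternCount_denselyIn_le (hA : 2 ≤ A) (hd : 1 ≤ d)
    {μ : Measure (Config A d)} {h η lam : ℝ} {G : ℕ → Set (Config A d)}
    (hG : IsTypicalFamily μ h η lam G) (hη : 0 < η) {δ a : ℝ} (hδ : 0 ≤ δ) (hδa : 4 * η ≤ δ * a)
    {C : ℕ → Set (Config A d)}
    (hC : ∀ᶠ n : ℕ in atTop,
      (patternCount (C n) (cube 0 n) : ℝ) ≤ (A : ℝ) ^ ((n : ℝ) ^ d * (h - δ))) :
    ∀ᶠ k : ℕ in atTop, ∀ n ≥ k, (patternCount (denselyIn (G n) C a k n) (cube 0 n) : ℝ) ≤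
      (A : ℝ) ^ ((n : ℝ) ^ d * (h - 2 * η)) := by
  classical
  filter_upwards [hG.eventually_patternCount_le_of_forall_cube (by omega) δ,
    eventually_card_packings_le hd (Real.one_lt_rpow (Nat.one_lt_cast.2 hA) hη),
    eventually_forall_ge_atTop.2 hC, eventually_ge_atTop 1] with k hk hcard hCk hk_pos n hn
  set S := (packings d k n).filter fun Z => (∀ b ∈ Z, k ≤ b.2) ∧ a * (n : ℝ) ^ d ≤ vol Z
  have hsub : denselyIn (G n) C a k n ⊆
      ⋃ Z ∈ S, {x ∈ G n | ∀ b ∈ Z, shift b.1 x ∈ C b.2} := by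
    rintro x ⟨hxG, Z, hZ, hZC, hvol⟩
    have hside : ∀ b ∈ Z, k ≤ b.2 := fun b hb => (hZC b hb).1
    exact Set.mem_biUnion (Finset.mem_filter.2 ⟨hZ.mem_packings hd hk_pos hside, hside, hvol⟩)
      ⟨hxG, fun b hb => (hZC b hb).2⟩
  have hS : (S.card : ℝ) ≤ (A : ℝ) ^ (η * (n : ℝ) ^ d) := by
    rw [Real.rpow_mul (Nat.cast_nonneg A)]
    exact (Nat.cast_le.2 (Finset.card_filter_le _ _)).trans (hcard n)
  refine (patternCount_le_rpow_add hsub (by omega) hS (t := (n : ℝ) ^ d * (h - 3 * η))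
    fun Z hZ => ?_).trans_eq (by ring_nf)
  obtain ⟨hZ_mem, hside, hvol⟩ := Finset.mem_filter.1 hZ
  refine (hk n hn Z (isPacking_of_mem_packings hZ_mem) hside _ (Set.sep_subset _ _)
    fun x _ b hb => ?_).trans (Real.rpow_le_rpow_of_exponent_le (by norm_cast; omega) ?_)
  · exact (Nat.cast_le.2 (patternCount_cube_le_of_shift_mem fun y hy => hy.1.2 b hb)).trans
      (hCk b.2 (hside b hb))
  · have hgain : 4 * η * (n : ℝ) ^ d ≤ δ * vol Z :=
      calc 4 * η * (n : ℝ) ^ d ≤ δ * a * (n : ℝ) ^ d := by gcongr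
        _ ≤ δ * vol Z := by rw [mul_assoc]; gcongr
    linarith

lemma exists_isPacking_card_le {R : Finset (Site d)} {k l n : ℕ} (hk : 1 ≤ k)
    (hR : R ⊆ cube 0 n) {P : Site d → ℕ → Prop} (hP : ∀ r ∈ R, ∃ j ∈ Finset.Icc k l, P r j) :
    ∃ Z : Finset (Site d × ℕ), IsPacking Z (n + l) ∧ (∀ b ∈ Z, k ≤ b.2 ∧ P b.1 b.2) ∧
      R.card ≤ 3 ^ d * vol Z := by
  classical
  choose! side hside hP_side using hP
  simp only [Finset.mem_Icc] at hside
  obtain ⟨u, huR, hdisj, hcard⟩ :=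
    exists_disjoint_cubes R side fun r hr => hk.trans (hside r hr).1
  have hinj : Set.InjOn (fun r => (r, side r)) u := fun _ _ _ _ h => (Prod.mk.inj h).1
  refine ⟨u.image fun r => (r, side r), ⟨Finset.forall_mem_image.2 fun r hr => ?_, ?_⟩,
    Finset.forall_mem_image.2 fun r hr => ⟨(hside r (huR hr)).1, hP_side r (huR hr)⟩, ?_⟩
  · refine cube_subset_cube_zero fun j => ?_
    have hr_lt := mem_cube_zero.1 (hR (huR hr)) j
    have hside_le := (hside r (huR hr)).2
    dsimp only
    omega
  · rw [Finset.coe_image]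
    exact (hinj.pairwiseDisjoint_image).2 hdisj
  · rwa [vol, Finset.sum_image hinj]

lemma mem_denselyIn_of_le_visitCount {V : Set (Config A d)} {C : ℕ → Set (Config A d)} {c : ℝ}
    (hc : 0 ≤ c) {k l n : ℕ} (hk : 1 ≤ k) (hln : l ≤ n)
    (hl : (n : ℝ) ^ d / 2 ≤ ((n - l : ℕ) : ℝ) ^ d) {x : Config A d} (hxV : x ∈ V)
    (hx : c * ((n - l : ℕ) : ℝ) ^ d ≤
      visitCount (⋃ j ∈ Finset.Icc k l, C j) (cube 0 (n - l)) x) :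
    x ∈ denselyIn V C (c / (2 * 3 ^ d)) k n := by
  classical
  rw [visitCount_eq_card] at hx
  obtain ⟨Z, hZ, hZC, hvol⟩ := exists_isPacking_card_le (P := fun r j => shift r x ∈ C j) (l := l)
    hk (Finset.filter_subset (fun i => shift i x ∈ ⋃ j ∈ Finset.Icc k l, C j) (cube 0 (n - l)))
    fun r hr => by simpa only [Set.mem_iUnion, exists_prop] using (Finset.mem_filter.1 hr).2
  rw [Nat.sub_add_cancel hln] at hZ
  refine ⟨hxV, Z, hZ, hZC, ?_⟩
  have hfill : c * ((n : ℝ) ^ d / 2) ≤ 3 ^ d * vol Z :=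
    calc c * ((n : ℝ) ^ d / 2) ≤ c * ((n - l : ℕ) : ℝ) ^ d := by gcongr
      _ ≤ 3 ^ d * vol Z := hx.trans (mod_cast hvol)
  rw [div_mul_eq_mul_div, div_le_iff₀ (by positivity)]
  linarith

lemma ErgodicShift.tendsto_measure_visitCount_lt {μ : Measure (Config A d)}
    [IsProbabilityMeasure μ] (hμ : ErgodicShift μ) {E : Set (Config A d)} (hE : MeasurableSet E)
    {c : ℝ} (hc : 0 < c) (hcE : 2 * c ≤ μ.real E) :
    Tendsto (fun n : ℕ => μ {x | visitCount E (cube 0 n) x < c * (n : ℝ) ^ d}) atTop (𝓝 0) := by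
  have hlim := tendstoInMeasure_iff_dist.1 (hμ.tendstoInMeasure_average
    (f := E.indicator fun _ => (1 : ℝ))
    (memLp_indicator_const 2 hE 1 (Or.inr (measure_ne_top μ E)))) c hc
  refine tendsto_of_tendsto_of_tendsto_of_le_of_le' tendsto_const_nhds hlim
    (Eventually.of_forall fun _ => zero_le) ?_
  filter_upwards [eventually_gt_atTop 0] with n hn
  refine measure_mono fun x hx => ?_
  have hpos : 0 < (n : ℝ) ^ d := by positivity
  have havg : ((n : ℝ) ^ d)⁻¹ * visitCount E (cube 0 n) x < c := by
    rw [inv_mul_lt_iff₀ hpos]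
    exact hx.trans_eq (mul_comm _ _)
  rw [visitCount] at havg
  rw [Set.mem_ofPred_eq, integral_indicator_const _ hE, smul_eq_mul, mul_one, dist_comm]
  exact le_trans (by linarith) (le_abs_self _)

lemma exists_lt_measure_biUnion_Icc {α : Type*} [MeasurableSpace α] {μ : Measure α}
    {C : ℕ → Set α} {c : ENNReal} (hc : c < μ {x | ∃ᶠ n in atTop, x ∈ C n}) (k : ℕ) :
    ∃ l, c < μ (⋃ j ∈ Finset.Icc k l, C j) := by
  have hmono : Monotone fun l => ⋃ j ∈ Finset.Icc k l, C j := fun l l' hl =>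
    Set.biUnion_subset_biUnion_left (Finset.coe_subset.2 (Finset.Icc_subset_Icc_right hl))
  have hsub : {x | ∃ᶠ n in atTop, x ∈ C n} ⊆ ⋃ l, ⋃ j ∈ Finset.Icc k l, C j := fun x hx => by
    obtain ⟨j, hj, hxj⟩ := frequently_atTop.1 hx k
    exact Set.mem_iUnion.2 ⟨j, Set.mem_biUnion (Finset.mem_Icc.2 ⟨hj, le_rfl⟩) hxj⟩
  exact ((tendsto_measure_iUnion_atTop hmono).eventually
    (lt_mem_nhds (hc.trans_le (measure_mono hsub)))).exists

lemma ErgodicShift.tendsto_measure_compl_denselyIn {μ : Measure (Config A d)}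
    [IsProbabilityMeasure μ] (hμ : ErgodicShift μ) {G : ℕ → Set (Config A d)}
    (hG : Tendsto (fun n => μ (G n)ᶜ) atTop (𝓝 0)) {C : ℕ → Set (Config A d)}
    (hC : ∀ n, MeasurableSet (C n)) {c : ℝ} (hc : 0 < c) {k l : ℕ} (hk : 1 ≤ k)
    (hcC : 2 * c ≤ μ.real (⋃ j ∈ Finset.Icc k l, C j)) :
    Tendsto (fun n => μ (denselyIn (G n) C (c / (2 * 3 ^ d)) k n)ᶜ) atTop (𝓝 0) := by
  have hvisit := (hμ.tendsto_measure_visitCount_lt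
    (Finset.measurableSet_biUnion _ fun j _ => hC j) hc hcC).comp (tendsto_sub_atTop_nat l)
  refine tendsto_of_tendsto_of_tendsto_of_le_of_le' tendsto_const_nhds
    (by simpa only [add_zero] using hG.add hvisit) (Eventually.of_forall fun _ => zero_le) ?_
  filter_upwards [eventually_ge_atTop l,
    eventually_pow_sub_sub_pow_le d l (show (0 : ℝ) < 1 / 2 by norm_num)] with n hln hn
  refine (measure_mono fun x hx => ?_).trans (measure_union_le _ _)
  by_contra hxn
  rw [Set.mem_union, not_or] at hxn
  exact hx (mem_denselyIn_of_le_visitCount hc.le hk hln (by linarith) (not_not.1 hxn.1)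
    (not_lt.1 hxn.2))

lemma ErgodicShift.ae_eventually_notMem_of_measurableSet (hA : 2 ≤ A) (hd : 1 ≤ d)
    {μ : Measure (Config A d)} [IsProbabilityMeasure μ] (hμ : ErgodicShift μ) {h δ : ℝ}
    (hh : HasEntropyRate μ h) (hδ : 0 < δ) {C : ℕ → Set (Config A d)}
    (hC_meas : ∀ n, MeasurableSet (C n))
    (hC : ∀ᶠ n : ℕ in atTop,
      (patternCount (C n) (cube 0 n) : ℝ) ≤ (A : ℝ) ^ ((n : ℝ) ^ d * (h - δ))) :
    ∀ᵐ x ∂μ, ∀ᶠ n : ℕ in atTop, x ∉ C n := by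
  by_contra hcon
  have hpos : 0 < μ {x | ∃ᶠ n in atTop, x ∈ C n} := by
    refine pos_iff_ne_zero.2 fun hzero => hcon (ae_iff.2 ?_)
    simpa only [Filter.Frequently] using hzero
  obtain ⟨r, hr_pos, hr⟩ := ENNReal.lt_iff_exists_nnreal_btwn.1 hpos
  set c : ℝ := r / 2 with hc_def
  have hc : 0 < c := by
    have : (0 : ℝ) < r := mod_cast hr_pos
    positivity
  set η : ℝ := δ * (c / (2 * 3 ^ d)) / 4 with hη_def
  have hη : 0 < η := by positivity
  obtain ⟨G, hG⟩ := hμ.exists_isTypicalFamily hA hd hh hη (lam := 1 / 2) (by norm_num)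
  obtain ⟨k, hk, hk_pos⟩ := ((hG.eventually_patternCount_denselyIn_le hA hd hη hδ.le
    (a := c / (2 * 3 ^ d)) (by rw [hη_def]; linarith) hC).and (eventually_ge_atTop 1)).exists
  obtain ⟨l, hl⟩ := exists_lt_measure_biUnion_Icc hr k
  have hcl : 2 * c ≤ μ.real (⋃ j ∈ Finset.Icc k l, C j) := by
    rw [hc_def, mul_div_cancel₀ _ two_ne_zero]
    exact ENNReal.toReal_mono (measure_ne_top μ _) hl.le
  exact hh.not_tendsto_measure_compl hA hd (by positivity)
    ((eventually_ge_atTop k).mono hk) (hμ.tendsto_measure_compl_denselyIn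
      (hG.tendsto_measure_compl (by norm_num)) hC_meas hc hk_pos hcl)

theorem ErgodicShift.ae_eventually_notMem (hA : 2 ≤ A) (hd : 1 ≤ d)
    {μ : Measure (Config A d)} [IsProbabilityMeasure μ] (hμ : ErgodicShift μ) {h δ : ℝ}
    (hh : HasEntropyRate μ h) (hδ : 0 < δ) {C : ℕ → Set (Config A d)}
    (hC : ∀ᶠ n : ℕ in atTop,
      (patternCount (C n) (cube 0 n) : ℝ) ≤ (A : ℝ) ^ ((n : ℝ) ^ d * (h - δ))) :
    ∀ᵐ x ∂μ, ∀ᶠ n : ℕ in atTop, x ∉ C n := by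
  have hwords := hμ.ae_eventually_notMem_of_measurableSet hA hd hh hδ
    (C := fun n => {x | wordAt x n 0 ∈ wordsOf (C n) n})
    (fun n => measurableSet_wordAt_mem 0 (wordsOf (C n) n : Set (Word A d n))) (by
      filter_upwards [hC] with n hn
      refine le_trans ?_ hn
      rw [patternCount_cube, ← card_wordsOf, ← Set.ncard_coe_finset]
      exact Nat.cast_le.2 (Set.ncard_le_ncard (Set.image_subset_iff.2 fun _ hx => hx)))
  filter_upwards [hwords] with x hx
  filter_upwards [hx] with n hn hxn
  exact hn (mem_wordsOf.2 ⟨x, hxn, rfl⟩)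

/-! ### Copied words -/

/-- The cubes of the packing `Z` of `Λ_n` carry words of `x` which are copied from cubes of the
packing `Z'`, which is disjoint from `Z` and contains few cubes of each side length. -/
structure IsCopyPacking (x : Config A d) (h : ℝ) (k n : ℕ) (Z Z' : Finset (Site d × ℕ)) :
    Prop where
  isPacking : IsPacking Z n
  isPacking_source : IsPacking Z' n
  disjoint : Disjoint (cover Z) (cover Z')
  le_side : ∀ b ∈ Z, k ≤ b.2
  le_side_source : ∀ b ∈ Z', k ≤ b.2
  card_source_le : ∀ l : ℕ, ((Z'.filter (·.2 = l)).card : ℝ) ≤ (A : ℝ) ^ ((l : ℝ) ^ d * h)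
  exists_copy : ∀ b ∈ Z, ∃ b' ∈ Z', b'.2 = b.2 ∧ wordAt x b.2 b'.1 = wordAt x b.2 b.1

lemma IsCopyPacking.patternCount_cube_le {x : Config A d} {h : ℝ} {k n : ℕ}
    {Z Z' : Finset (Site d × ℕ)} (hx : IsCopyPacking x h k n Z Z') {V : Set (Config A d)}
    (hV : ∀ y ∈ V, IsCopyPacking y h k n Z Z' ∧ ∀ i ∈ cube 0 n \ cover Z, y i = x i)
    {b : Site d × ℕ} (hb : b ∈ Z) :
    (patternCount V (cube b.1 b.2) : ℝ) ≤ (A : ℝ) ^ ((b.2 : ℝ) ^ d * h) := by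
  classical
  refine le_trans ?_ (hx.card_source_le b.2)
  rw [patternCount_cube]
  refine Nat.cast_le.2 (le_trans (Set.ncard_le_ncard
    (t := ((Z'.filter (·.2 = b.2)).image fun b' => wordAt x b.2 b'.1 : Finset _)) ?_
    (Finset.finite_toSet _)) ((Set.ncard_coe_finset _).le.trans Finset.card_image_le))
  rintro _ ⟨y, hy, rfl⟩
  obtain ⟨hy_copy, hyx⟩ := hV y hy
  obtain ⟨b', hb', hside, hword⟩ := hy_copy.exists_copy b hb
  refine Finset.mem_image.2 ⟨b', Finset.mem_filter.2 ⟨hb', hside⟩,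
    Eq.trans (wordAt_eq_iff.2 fun i hi => (hyx i ?_).symm) hword⟩
  rw [← hside] at hi
  exact Finset.mem_sdiff.2 ⟨hx.isPacking_source.cube_subset b' hb' hi, fun hi_cover =>
    Finset.disjoint_left.1 hx.disjoint hi_cover (mem_cover.2 ⟨b', hb', hi⟩)⟩

/-- The configurations of `V` whose restriction to `Λ_n` has at least the proportion `c` of
copied words. -/
def copiesIn (V : Set (Config A d)) (h c : ℝ) (k n : ℕ) : Set (Config A d) :=
  {x ∈ V | ∃ Z Z', IsCopyPacking x h k n Z Z' ∧ c * (n : ℝ) ^ d ≤ vol Z}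

lemma IsTypicalFamily.eventually_patternCount_copiesIn_le (hA : 2 ≤ A) (hd : 1 ≤ d)
    {μ : Measure (Config A d)} {h η lam : ℝ} {G : ℕ → Set (Config A d)}
    (hG : IsTypicalFamily μ h η lam G) (hη : 0 < η) {α c : ℝ} (hα : 0 ≤ α) (hαc : 4 * η ≤ α * c) :
    ∀ᶠ k : ℕ in atTop, ∀ n ≥ k,
      (patternCount (copiesIn (G n) (h - α) c k n) (cube 0 n) : ℝ) ≤
        (A : ℝ) ^ ((n : ℝ) ^ d * (h - η)) := by
  classical
  filter_upwards [hG.eventually_patternCount_le_of_forall_cube (by omega) α,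
    eventually_card_packings_le hd (Real.one_lt_rpow (Nat.one_lt_cast.2 hA) hη),
    eventually_ge_atTop 1] with k hk hcard hk_pos n hn
  set S := (packings d k n ×ˢ packings d k n).filter fun Y =>
    IsPacking Y.1 n ∧ (∀ b ∈ Y.1, k ≤ b.2) ∧ c * (n : ℝ) ^ d ≤ vol Y.1
  have hsub : copiesIn (G n) (h - α) c k n ⊆
      ⋃ Y ∈ S, {x ∈ G n | IsCopyPacking x (h - α) k n Y.1 Y.2} := by
    rintro x ⟨hxG, Z, Z', hcopy, hvol⟩
    exact Set.mem_biUnion (x := (Z, Z')) (Finset.mem_filter.2 ⟨Finset.mem_product.2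
      ⟨hcopy.isPacking.mem_packings hd hk_pos hcopy.le_side,
        hcopy.isPacking_source.mem_packings hd hk_pos hcopy.le_side_source⟩,
      hcopy.isPacking, hcopy.le_side, hvol⟩) ⟨hxG, hcopy⟩
  have hS : (S.card : ℝ) ≤ (A : ℝ) ^ (2 * η * (n : ℝ) ^ d) :=
    calc (S.card : ℝ) ≤ (packings d k n).card * (packings d k n).card := by
          rw [← Nat.cast_mul, ← Finset.card_product]
          exact Nat.cast_le.2 (Finset.card_filter_le _ _)
      _ ≤ ((A : ℝ) ^ η) ^ ((n : ℝ) ^ d) * ((A : ℝ) ^ η) ^ ((n : ℝ) ^ d) := by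
          gcongr <;> exact hcard n
      _ = (A : ℝ) ^ (2 * η * (n : ℝ) ^ d) := by
          rw [← Real.rpow_mul (Nat.cast_nonneg A),
            ← Real.rpow_add (Nat.cast_pos.2 (by omega))]
          ring_nf
  refine (patternCount_le_rpow_add hsub (by omega) hS (t := (n : ℝ) ^ d * (h - 3 * η))
    fun Y hY => ?_).trans_eq (by ring_nf)
  obtain ⟨-, hZ, hside, hvol⟩ := Finset.mem_filter.1 hY
  refine (hk n hn Y.1 hZ hside _ (Set.sep_subset _ _) fun x hx b hb =>
    hx.2.patternCount_cube_le (fun y hy => ⟨hy.1.2, hy.2⟩) hb).trans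
      (Real.rpow_le_rpow_of_exponent_le (by norm_cast; omega) ?_)
  have hgain : 4 * η * (n : ℝ) ^ d ≤ α * vol Y.1 :=
    calc 4 * η * (n : ℝ) ^ d ≤ α * c * (n : ℝ) ^ d := by gcongr
      _ ≤ α * vol Y.1 := by rw [mul_assoc]; gcongr
  linarith

theorem ErgodicShift.eventually_ae_vol_lt_of_isCopyPacking (hA : 2 ≤ A) (hd : 1 ≤ d)
    {μ : Measure (Config A d)} [IsProbabilityMeasure μ] (hμ : ErgodicShift μ) {h α c : ℝ}
    (hh : HasEntropyRate μ h) (hα : 0 < α) (hc : 0 < c) :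
    ∀ᶠ k : ℕ in atTop, ∀ᵐ x ∂μ, ∀ᶠ n : ℕ in atTop, ∀ Z Z',
      IsCopyPacking x (h - α) k n Z Z' → (vol Z : ℝ) < c * (n : ℝ) ^ d := by
  set η : ℝ := α * c / 4 with hη_def
  have hη : 0 < η := by positivity
  obtain ⟨G, hG⟩ := hμ.exists_isTypicalFamily hA hd hh hη (lam := 1 / 2) (by norm_num)
  filter_upwards [hG.eventually_patternCount_copiesIn_le hA hd hη hα.le
    (c := c) (by rw [hη_def]; linarith)] with k hk
  filter_upwards [hG.ae_eventually_mem (by norm_num),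
    hμ.ae_eventually_notMem hA hd hh hη ((eventually_ge_atTop k).mono hk)] with x hxG hx
  filter_upwards [hxG, hx] with n hnG hn Z Z' hcopy
  by_contra! hvol
  exact hn ⟨hnG, Z, Z', hcopy, hvol⟩

/-! ### Phases of the parser -/

lemma mem_tuples {d n : ℕ} {r : Fin d → ℕ} : r ∈ tuples d n ↔ ∀ j, r j < n := by
  induction d with
  | zero => simp [tuples, Subsingleton.elim r fun i => i.elim0]
  | succ d ih =>
    simp only [tuples, List.mem_flatMap, List.mem_range, List.mem_map, ih]
    constructor
    · rintro ⟨a, ha, t, ht, rfl⟩ j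
      exact Fin.cases ha ht j
    · exact fun h => ⟨r 0, h 0, Fin.tail r, fun j => h j.succ, Fin.cons_self_tail r⟩

lemma nodup_tuples (d n : ℕ) : (tuples d n).Nodup := by
  induction d with
  | zero => exact List.nodup_singleton _
  | succ d ih =>
    refine List.nodup_flatMap.2
      ⟨fun a _ => ih.map (Fin.cons_right_injective (α := fun _ => ℕ) a),
        List.nodup_range.imp fun {a b} hab => ?_⟩
    simp only [Function.onFun, List.disjoint_left, List.mem_map]
    rintro _ ⟨t, _, rfl⟩ ⟨t', _, h⟩
    exact hab (congrFun h 0).symm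

/-- The corner of the block of side `k` with block coordinates `r`. -/
def corner (k : ℕ) (r : Site d) : Site d := fun j => k * r j

/-- The sites of `Λ_b` outside `Λ_a`, which serve as the block coordinates of the regular parsing
of `Λ_{kb} \ Λ_{ka}` into `k`-blocks. -/
def shell (d a b : ℕ) : Finset (Site d) := cube 0 b \ cube 0 a

lemma mem_shell {a b : ℕ} {r : Site d} : r ∈ shell d a b ↔ (∀ j, r j < b) ∧ ¬ ∀ j, r j < a := by
  rw [shell, Finset.mem_sdiff, mem_cube_zero, mem_cube_zero]

lemma card_shell {a b : ℕ} (h : a ≤ b) : (shell d a b).card = b ^ d - a ^ d := by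
  rw [shell, Finset.card_sdiff_of_subset (cube_zero_mono h), card_cube, card_cube]

lemma shell_self (d a : ℕ) : shell d a a = ∅ := sdiff_self

lemma sub_le_card_shell (hd : 1 ≤ d) {a b : ℕ} (h : a ≤ b) : b - a ≤ (shell d a b).card := by
  obtain ⟨u, rfl⟩ := Nat.exists_eq_add_of_le h
  have hpow_add : a ^ d + u ^ d ≤ (a + u) ^ d :=
    pow_add_pow_le (Nat.zero_le _) (Nat.zero_le _) (by omega)
  have hpow : u ≤ u ^ d := Nat.le_self_pow (by omega) u
  rw [card_shell h]
  omega

/-- The block coordinates of one boundary region of the parser, in the order of parsing. -/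
def boundary (d b : ℕ) : List (Site d) :=
  (tuples d (b + 1)).filter fun r => decide (¬ ∀ j, r j < b)

lemma nodup_boundary (d b : ℕ) : (boundary d b).Nodup := (nodup_tuples _ _).filter _

lemma toFinset_boundary (d b : ℕ) [DecidableEq (Site d)] :
    (boundary d b).toFinset = shell d b (b + 1) := by
  ext r
  rw [List.mem_toFinset, boundary, List.mem_filter, mem_tuples, mem_shell, decide_eq_true_eq]

open scoped Classical in
/-- The number of block coordinates in `F` whose `k`-words occur at least twice. -/
noncomputable def repeatCount (x : Config A d) (k : ℕ) (F : Finset (Site d)) : ℕ :=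
  (F.filter fun r => ∃ r' ∈ F, r' ≠ r ∧
    wordAt x k (corner k r') = wordAt x k (corner k r)).card

lemma repeatCount_le_card (x : Config A d) (k : ℕ) (F : Finset (Site d)) :
    repeatCount x k F ≤ F.card := Finset.card_filter_le _ _

/-- A block whose word is in `T` but is not repeated is determined by this word. -/
lemma card_le_repeatCount_add (x : Config A d) (k : ℕ) (F : Finset (Site d))
    (T : Finset (Word A d k)) : F.card ≤
      repeatCount x k F + T.card + (F.filter fun r => wordAt x k (corner k r) ∉ T).card := by
  classical
  set w : Site d → Word A d k := fun r => wordAt x k (corner k r)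
  set repeated : Site d → Prop := fun r => ∃ r' ∈ F, r' ≠ r ∧ w r' = w r
  have hunique : (F.filter fun r => ¬ repeated r ∧ w r ∈ T).card ≤ T.card := by
    refine Finset.card_le_card_of_injOn w (fun r hr => (Finset.mem_filter.1 hr).2.2)
      fun r hr r' hr' hw => ?_
    by_contra hne
    exact (Finset.mem_filter.1 hr').2.1 ⟨r, (Finset.mem_filter.1 hr).1, hne, hw⟩
  have hcover : F ⊆ F.filter repeated ∪ (F.filter fun r => ¬ repeated r ∧ w r ∈ T) ∪
      F.filter fun r => w r ∉ T := by
    intro r hr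
    simp only [Finset.mem_union, Finset.mem_filter]
    tauto
  calc F.card ≤ _ := Finset.card_le_card hcover
    _ ≤ (F.filter repeated).card + (F.filter fun r => ¬ repeated r ∧ w r ∈ T).card +
          (F.filter fun r => w r ∉ T).card :=
        (Finset.card_union_le _ _).trans (Nat.add_le_add_right (Finset.card_union_le _ _) _)
    _ ≤ repeatCount x k F + T.card + (F.filter fun r => w r ∉ T).card := by
        rw [repeatCount]
        gcongr

lemma length_filter_of_nodup {α : Type*} [DecidableEq α] {l : List α} (hl : l.Nodup)
    (p : α → Prop) [DecidablePred p] :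
    (l.filter fun a => decide (p a)).length = (l.toFinset.filter p).card := by
  rw [← List.toFinset_card_of_nodup (hl.filter _), List.toFinset_filter]
  congr 1
  ext
  simp

lemma Jval_eq_repeatCount_div (x : Config A d) {P : List (Site d × ℕ)} {k : ℕ} {l : List (Site d)}
    (hl : l.Nodup) (hP : P.filter (fun b => decide (b.2 = k)) = l.map fun r => (corner k r, k)) :
    Jval x P k = (repeatCount x k l.toFinset : ℝ) / (l.toFinset.card : ℝ) := by
  classical
  simp only [Jval, hP, List.filter_map, List.length_map, Function.comp_def]
  rw [List.toFinset_card_of_nodup hl, length_filter_of_nodup hl, repeatCount]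
  congr 3
  refine Finset.filter_congr fun r hr => ?_
  rw [length_filter_of_nodup hl]
  constructor
  · intro h
    obtain ⟨r', hr', hne⟩ := Finset.exists_mem_ne (show 1 < _ from h) r
    exact ⟨r', (Finset.mem_filter.1 hr').1, hne, (Finset.mem_filter.1 hr').2⟩
  · rintro ⟨r', hr', hne, hword⟩
    exact Finset.one_lt_card.2 ⟨r', Finset.mem_filter.2 ⟨hr', hword⟩, r,
      Finset.mem_filter.2 ⟨hr, rfl⟩, hne⟩

/-- The parser is in the phase of block size `k`, which started at `⌊m / k⌋ = a`, and the
`k`-blocks parsed so far are those between `Λ_{ka}` and `Λ_{kb}`. -/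
structure InPhase (s : PState d) (k a b : ℕ) : Prop where
  k_eq : s.k = k
  le : a ≤ b
  div_eq : s.m / k = b
  m_eq : a < b → s.m = k * b
  exists_coords : ∃ l : List (Site d), l.Nodup ∧ l.toFinset = shell d a b ∧
    s.blocks.filter (fun c => decide (c.2 = k)) = l.map fun r => (corner k r, k)
  side_le : ∀ c ∈ s.blocks, c.2 ≤ k

lemma inPhase_iter_zero (φ : ℝ) (x : Config A d) : InPhase (iter φ x 0) 1 0 0 where
  k_eq := rfl
  le := le_rfl
  div_eq := Nat.zero_div 1
  m_eq h := absurd h (lt_irrefl _)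
  exists_coords := ⟨[], List.nodup_nil, by rw [shell_self, List.toFinset_nil], rfl⟩
  side_le _ hc := absurd hc List.not_mem_nil

lemma step_of_Jval_lt {φ : ℝ} {x : Config A d} {s : PState d} (h : Jval x s.blocks s.k < φ) :
    step φ x s =
      { m := s.m / s.k * s.k + s.k
        k := s.k
        blocks := s.blocks ++ (boundary d (s.m / s.k)).map fun r => (corner s.k r, s.k) } := by
  rw [step, if_neg h.not_ge]
  rfl

lemma step_of_le_Jval {φ : ℝ} {x : Config A d} {s : PState d} (h : φ ≤ Jval x s.blocks s.k) :
    step φ x s = { s with k := s.k + 1 } := by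
  rw [step, if_pos h]

namespace InPhase

variable {φ : ℝ} {x : Config A d} {s : PState d} {k a b : ℕ}

lemma mem_blocks_iff (h : InPhase s k a b) (c : Site d) :
    (c, k) ∈ s.blocks ↔ ∃ r ∈ shell d a b, corner k r = c := by
  obtain ⟨l, -, hl_shell, hl_blocks⟩ := h.exists_coords
  have hfilter : (c, k) ∈ s.blocks ↔ (c, k) ∈ s.blocks.filter fun c => decide (c.2 = k) := by
    rw [List.mem_filter, decide_eq_true_eq, and_iff_left rfl]
  rw [hfilter, hl_blocks, ← hl_shell]
  simp

lemma Jval_mul_card (h : InPhase s k a b) (x : Config A d) :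
    Jval x s.blocks s.k * (shell d a b).card = repeatCount x k (shell d a b) := by
  obtain ⟨l, hl, hl_shell, hl_blocks⟩ := h.exists_coords
  rw [h.k_eq, Jval_eq_repeatCount_div x hl hl_blocks, hl_shell]
  refine div_mul_cancel_of_imp fun hcard => ?_
  exact_mod_cast Nat.le_zero.1 ((repeatCount_le_card x k _).trans_eq (Nat.cast_eq_zero.1 hcard))

lemma exists_coords_append_boundary (h : InPhase s k a b) :
    ∃ l : List (Site d), l.Nodup ∧ l.toFinset = shell d a (b + 1) ∧
      (s.blocks ++ (boundary d b).map fun r => (corner k r, k)).filter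
        (fun c => decide (c.2 = k)) = l.map fun r => (corner k r, k) := by
  obtain ⟨l, hl, hl_shell, hl_blocks⟩ := h.exists_coords
  refine ⟨l ++ boundary d b, hl.append (nodup_boundary d b) ?_, ?_, ?_⟩
  · rw [← List.disjoint_toFinset_iff_disjoint, hl_shell, toFinset_boundary]
    exact Finset.disjoint_sdiff.mono_left Finset.sdiff_subset
  · rw [List.toFinset_append, hl_shell, toFinset_boundary, Finset.union_comm]
    exact Finset.sdiff_union_sdiff_cancel (cube_zero_mono b.le_succ) (cube_zero_mono h.le)
  · rw [List.filter_append, hl_blocks, List.map_append, List.filter_eq_self.2]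
    exact List.forall_mem_map.2 fun _ _ => decide_eq_true rfl

lemma step_of_lt (hk : 1 ≤ k) (h : InPhase s k a b) (hJ : Jval x s.blocks s.k < φ) :
    InPhase (step φ x s) k a (b + 1) := by
  have hm : b * k + k = k * (b + 1) := by ring
  rw [step_of_Jval_lt hJ, h.k_eq, h.div_eq, hm]
  refine ⟨rfl, h.le.trans b.le_succ, Nat.mul_div_cancel_left _ hk, fun _ => rfl,
    h.exists_coords_append_boundary, fun c hc => ?_⟩
  rcases List.mem_append.1 hc with hc | hc
  · exact h.side_le c hc
  · obtain ⟨r, -, rfl⟩ := List.mem_map.1 hc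
    exact le_rfl

lemma step_of_le (h : InPhase s k a b) (hab : a < b) (hJ : φ ≤ Jval x s.blocks s.k) :
    InPhase (step φ x s) (k + 1) (k * b / (k + 1)) (k * b / (k + 1)) := by
  rw [step_of_le_Jval hJ]
  refine ⟨congrArg (· + 1) h.k_eq, le_rfl, by rw [← h.m_eq hab], fun h => absurd h (lt_irrefl _),
    ⟨[], List.nodup_nil, by rw [shell_self, List.toFinset_nil], ?_⟩,
    fun c hc => (h.side_le c hc).trans k.le_succ⟩
  rw [List.map_nil, List.filter_eq_nil_iff]
  intro c hc
  rw [decide_eq_true_eq]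
  exact (Nat.lt_succ_of_le (h.side_le c hc)).ne

lemma iter_add (hk : 1 ≤ k) {t : ℕ} (h : InPhase (iter φ x t) k a a) {u : ℕ}
    (hu : ∀ v < u, Jval x (iter φ x (t + v)).blocks (iter φ x (t + v)).k < φ) :
    InPhase (iter φ x (t + u)) k a (a + u) := by
  induction u with
  | zero => exact h
  | succ u ih =>
    exact (ih fun v hv => hu v (hv.trans u.lt_succ_self)).step_of_lt hk (hu u u.lt_succ_self)

/-- There are only finitely many `k`-words, so most of the blocks of a long phase are repeated. -/
lemma exists_le_Jval (hd : 1 ≤ d) (hφ : φ < 1) (hk : 1 ≤ k) {t : ℕ}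
    (h : InPhase (iter φ x t) k a a) :
    ∃ u, φ ≤ Jval x (iter φ x (t + u)).blocks (iter φ x (t + u)).k := by
  by_contra! hJ
  obtain ⟨u, hu⟩ := exists_nat_gt (Fintype.card (Word A d k) / (1 - φ))
  rw [div_lt_iff₀ (sub_pos.2 hφ)] at hu
  have hrepeat := (h.iter_add hk fun v (_ : v < u) => hJ v).Jval_mul_card x
  set N := (shell d a (a + u)).card
  have hu_le : (u : ℝ) ≤ N :=
    mod_cast (Nat.add_sub_cancel_left (n := a) (m := u)) ▸
      sub_le_card_shell hd (Nat.le_add_right a u)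
  have hN : (N : ℝ) ≤ φ * N + Fintype.card (Word A d k) :=
    calc (N : ℝ) ≤ repeatCount x k (shell d a (a + u)) + Fintype.card (Word A d k) := by
          have hle := card_le_repeatCount_add x k (shell d a (a + u)) Finset.univ
          simp only [Finset.mem_univ, not_true_eq_false, Finset.filter_false, Finset.card_empty,
            add_zero, Finset.card_univ] at hle
          exact_mod_cast hle
      _ ≤ φ * N + Fintype.card (Word A d k) := by
          rw [← hrepeat]
          gcongr
          exact (hJ u).le
  have hmul : u * (1 - φ) ≤ N * (1 - φ) := by
    gcongr
  linarith

end InPhase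

/-- At iteration `t` the phase of block size `k` ends, during which the parser has parsed the
`k`-blocks between `Λ_{ka}` and `Λ_{kb}`. -/
structure IsPhase (φ : ℝ) (x : Config A d) (k t a b : ℕ) : Prop where
  lt : a < b
  inPhase : InPhase (iter φ x t) k a b
  inPhase_succ : InPhase (iter φ x (t + 1)) (k + 1) (k * b / (k + 1)) (k * b / (k + 1))
  le_repeatCount : φ * (shell d a b).card ≤ repeatCount x k (shell d a b)
  repeatCount_le : repeatCount x k (shell d a (b - 1)) ≤ φ * (shell d a (b - 1)).card

lemma InPhase.exists_isPhase (hd : 1 ≤ d) {φ : ℝ} (hφ0 : 0 < φ) (hφ1 : φ < 1) {x : Config A d}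
    {t k a : ℕ} (hk : 1 ≤ k) (h : InPhase (iter φ x t) k a a) : ∃ t' b, IsPhase φ x k t' a b := by
  classical
  have hex := h.exists_le_Jval hd hφ1 hk
  set u := Nat.find hex
  have hu_min : ∀ v < u, Jval x (iter φ x (t + v)).blocks (iter φ x (t + v)).k < φ :=
    fun v hv => not_le.1 (Nat.find_min hex hv)
  have hJ : φ ≤ Jval x (iter φ x (t + u)).blocks (iter φ x (t + u)).k := Nat.find_spec hex
  have hu : u ≠ 0 := by
    intro hu
    obtain ⟨l, hl, hl_shell, hl_blocks⟩ := h.exists_coords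
    rw [hu, Nat.add_zero, h.k_eq, Jval_eq_repeatCount_div x hl hl_blocks, hl_shell, shell_self,
      Finset.card_empty, Nat.cast_zero, div_zero] at hJ
    exact hφ0.not_ge hJ
  obtain ⟨v, hv⟩ := Nat.exists_eq_succ_of_ne_zero hu
  have hvu : v < u := hv ▸ v.lt_succ_self
  have hend := h.iter_add hk hu_min
  have hprev := h.iter_add hk fun w hw => hu_min w (hw.trans hvu)
  refine ⟨t + u, a + u, by omega, hend, hend.step_of_le (by omega) hJ, ?_, ?_⟩
  · rw [← hend.Jval_mul_card x]
    gcongr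
  · rw [show a + u - 1 = a + v by omega, ← hprev.Jval_mul_card x]
    gcongr
    exact (hu_min v hvu).le

lemma step_cases (φ : ℝ) (x : Config A d) (s : PState d) :
    ((step φ x s).k = s.k + 1 ∧ (step φ x s).blocks = s.blocks) ∨
      ((step φ x s).k = s.k ∧ ∃ P, (step φ x s).blocks = s.blocks ++ P ∧ ∀ b ∈ P, b.2 = s.k) := by
  rcases le_or_gt φ (Jval x s.blocks s.k) with hJ | hJ
  · rw [step_of_le_Jval hJ]
    exact Or.inl ⟨rfl, rfl⟩
  · rw [step_of_Jval_lt hJ]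
    exact Or.inr ⟨rfl, _, rfl, List.forall_mem_map.2 fun _ _ => rfl⟩

section Iterates

variable {φ : ℝ} {x : Config A d} {t t' : ℕ} {b : Site d × ℕ}

lemma mem_blocks_mono (h : t ≤ t') (hb : b ∈ (iter φ x t).blocks) : b ∈ (iter φ x t').blocks := by
  induction t', h using Nat.le_induction with
  | base => exact hb
  | succ t' _ ih =>
    rcases step_cases φ x (iter φ x t') with ⟨-, h⟩ | ⟨-, P, h, -⟩ <;> rw [iter, h]
    · exact ih
    · exact List.mem_append_left _ ih

lemma iter_k_mono (φ : ℝ) (x : Config A d) : Monotone fun t => (iter φ x t).k := by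
  refine monotone_nat_of_le_succ fun t => ?_
  rw [iter]
  rcases step_cases φ x (iter φ x t) with ⟨h, -⟩ | ⟨h, -⟩ <;> omega

lemma mem_blocks_of_side_lt (h : t ≤ t') (hb_side : b.2 < (iter φ x t).k)
    (hb : b ∈ (iter φ x t').blocks) : b ∈ (iter φ x t).blocks := by
  induction t', h using Nat.le_induction with
  | base => exact hb
  | succ t' ht ih =>
    rw [iter] at hb
    rcases step_cases φ x (iter φ x t') with ⟨-, h⟩ | ⟨-, P, h, hP⟩ <;> rw [h] at hb
    · exact ih hb
    · exact (List.mem_append.1 hb).elim ih fun hbP =>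
        absurd (hP b hbP) (hb_side.trans_le (iter_k_mono φ x ht)).ne

lemma one_le_side_of_mem_blocks (hb : b ∈ (iter φ x t).blocks) : 1 ≤ b.2 := by
  by_contra hlt
  exact absurd (mem_blocks_of_side_lt t.zero_le (not_le.1 hlt) hb) List.not_mem_nil

end Iterates

lemma IsPhase.exists_mem_blocks_iff {φ : ℝ} {x : Config A d} {k t a b : ℕ}
    (h : IsPhase φ x k t a b) {c : Site d} :
    (∃ t', (c, k) ∈ (iter φ x t').blocks) ↔ ∃ r ∈ shell d a b, corner k r = c := by
  rw [← h.inPhase.mem_blocks_iff]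
  refine ⟨fun ⟨t', ht'⟩ => ?_, fun hc => ⟨t, hc⟩⟩
  rcases le_or_gt t' t with hle | hlt
  · exact mem_blocks_mono hle ht'
  · have hk := h.inPhase.k_eq
    have hk_succ := h.inPhase_succ.k_eq
    have hmem := mem_blocks_of_side_lt hlt (b := (c, k)) (hk_succ ▸ k.lt_succ_self) ht'
    rw [iter] at hk_succ
    rcases step_cases φ x (iter φ x t) with ⟨-, hblocks⟩ | ⟨hk', -⟩
    · rwa [Nat.succ_eq_add_one, iter, hblocks] at hmem
    · omega

/-- For each `k ≥ 1`, the phase of block size `k` parses the blocks between `Λ_{k q₀(k)}` and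
`Λ_{k q₁(k)}`. -/
structure IsScaleSeq (φ : ℝ) (x : Config A d) (q₀ q₁ : ℕ → ℕ) : Prop where
  exists_isPhase : ∀ k ≥ 1, ∃ t, IsPhase φ x k t (q₀ k) (q₁ k)
  start_succ : ∀ k ≥ 1, q₀ (k + 1) = k * q₁ k / (k + 1)

lemma exists_seq_of_forall_exists_succ {α : Type*} {P : ℕ → α → Prop} {R : ℕ → α → α → Prop}
    (h_zero : ∃ a, P 0 a) (h_succ : ∀ n a, P n a → ∃ b, P (n + 1) b ∧ R n a b) :
    ∃ f : ℕ → α, (∀ n, P n (f n)) ∧ ∀ n, R n (f n) (f (n + 1)) := by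
  obtain ⟨a₀, ha₀⟩ := h_zero
  choose next hP hR using h_succ
  let f : (n : ℕ) → {a // P n a} := Nat.rec ⟨a₀, ha₀⟩ fun n a => ⟨next n a a.2, hP n a a.2⟩
  refine ⟨fun n => (f n).1, fun n => (f n).2, fun n => ?_⟩
  exact hR n (f n).1 (f n).2

theorem exists_isScaleSeq (hd : 1 ≤ d) {φ : ℝ} (hφ0 : 0 < φ) (hφ1 : φ < 1) (x : Config A d) :
    ∃ q₀ q₁, IsScaleSeq φ x q₀ q₁ := by
  obtain ⟨p, hp, hp_succ⟩ := exists_seq_of_forall_exists_succ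
    (P := fun n (p : ℕ × ℕ × ℕ) => IsPhase φ x (n + 1) p.1 p.2.1 p.2.2)
    (R := fun n p p' => p'.2.1 = (n + 1) * p.2.2 / (n + 2))
    (by
      obtain ⟨t, b, h⟩ := (inPhase_iter_zero φ x).exists_isPhase hd hφ0 hφ1 le_rfl
      exact ⟨(t, 0, b), h⟩)
    fun n p hp => by
      obtain ⟨t, b, h⟩ := hp.inPhase_succ.exists_isPhase hd hφ0 hφ1 (by omega)
      exact ⟨(t, _, b), h, rfl⟩
  refine ⟨fun k => (p (k - 1)).2.1, fun k => (p (k - 1)).2.2, fun k hk => ?_, fun k hk => ?_⟩ <;>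
    obtain ⟨n, rfl⟩ := Nat.exists_eq_add_of_le' hk
  · exact ⟨(p n).1, hp n⟩
  · exact hp_succ n

/-! ### Blocks in disjoint shells -/

lemma mem_cube_corner {k : ℕ} (hk : 1 ≤ k) {r i : Site d} :
    i ∈ cube (corner k r) k ↔ ∀ j, i j / k = r j := by
  rw [mem_cube]
  refine forall_congr' fun j => ?_
  rw [corner, Nat.div_eq_iff hk, mul_comm]
  omega

lemma corner_injective {k : ℕ} (hk : 1 ≤ k) :
    Function.Injective (corner k : Site d → Site d) := fun _ _ h =>
  funext fun j => Nat.eq_of_mul_eq_mul_left hk (congrFun h j)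

/-- The largest coordinate of a site, so that `Λ_n` consists of the sites of radius less than
`n` if `d ≥ 1`. -/
def radius (i : Site d) : ℕ := Finset.univ.sup i

lemma radius_lt_iff (hd : 1 ≤ d) {i : Site d} {a : ℕ} : radius i < a ↔ ∀ j, i j < a := by
  refine ⟨fun h j => (Finset.le_sup (Finset.mem_univ j)).trans_lt h, fun h => ?_⟩
  exact (Finset.sup_lt_iff ((Nat.zero_le _).trans_lt (h ⟨0, hd⟩))).2 fun j _ => h j

lemma mem_shell_iff_radius (hd : 1 ≤ d) {a b : ℕ} {i : Site d} :
    i ∈ shell d a b ↔ radius i ∈ Set.Ico a b := by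
  rw [mem_shell, ← radius_lt_iff hd, ← radius_lt_iff hd, not_lt, and_comm, Set.mem_Ico]

lemma disjoint_shell (hd : 1 ≤ d) {a b a' b' : ℕ} (h : Disjoint (Set.Ico a b) (Set.Ico a' b')) :
    Disjoint (shell d a b) (shell d a' b') :=
  Finset.disjoint_left.2 fun _ hi hi' =>
    Set.disjoint_left.1 h ((mem_shell_iff_radius hd).1 hi) ((mem_shell_iff_radius hd).1 hi')

lemma card_shell_mul (d k : ℕ) {a b : ℕ} (h : a ≤ b) :
    (shell d (k * a) (k * b)).card = (shell d a b).card * k ^ d := by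
  rw [card_shell (Nat.mul_le_mul_left k h), card_shell h, mul_pow, mul_pow, ← Nat.mul_sub, mul_comm]

lemma mem_shell_of_mem_cube_corner {k a b : ℕ} (hk : 1 ≤ k) {r i : Site d}
    (hr : r ∈ shell d a b) (hi : i ∈ cube (corner k r) k) : i ∈ shell d (k * a) (k * b) := by
  have hlt_iff : ∀ c j, i j < k * c ↔ r j < c := fun c j => by
    rw [← (mem_cube_corner hk).1 hi j, Nat.div_lt_iff_lt_mul hk, mul_comm]
  simpa only [mem_shell, hlt_iff] using hr

/-- The family of the blocks of sides `k ∈ u` with block coordinates in `F k`. -/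
def gridBlocks (u : Finset ℕ) (F : ℕ → Finset (Site d)) : Finset (Site d × ℕ) :=
  u.biUnion fun k => (F k).image fun r => (corner k r, k)

section GridBlocks

variable {u : Finset ℕ} {F F' : ℕ → Finset (Site d)}

lemma mem_gridBlocks {b : Site d × ℕ} :
    b ∈ gridBlocks u F ↔ ∃ k ∈ u, ∃ r ∈ F k, (corner k r, k) = b := by
  simp only [gridBlocks, Finset.mem_biUnion, Finset.mem_image]

lemma forall_mem_gridBlocks {p : Site d × ℕ → Prop} :
    (∀ b ∈ gridBlocks u F, p b) ↔ ∀ k ∈ u, ∀ r ∈ F k, p (corner k r, k) :=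
  ⟨fun h k hk r hr => h _ (mem_gridBlocks.2 ⟨k, hk, r, hr, rfl⟩), fun h b hb => by
    obtain ⟨k, hk, r, hr, rfl⟩ := mem_gridBlocks.1 hb
    exact h k hk r hr⟩

lemma card_filter_gridBlocks_le {t : ℕ → ℝ} (ht : ∀ k, 0 ≤ t k)
    (hF : ∀ k ∈ u, ((F k).card : ℝ) ≤ t k) (k : ℕ) :
    (((gridBlocks u F).filter (·.2 = k)).card : ℝ) ≤ t k := by
  by_cases hk : k ∈ u
  · have hsub : (gridBlocks u F).filter (·.2 = k) ⊆ (F k).image fun r => (corner k r, k) := by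
      intro b hb
      obtain ⟨hb, hbk⟩ := Finset.mem_filter.1 hb
      obtain ⟨k', -, r, hr, rfl⟩ := mem_gridBlocks.1 hb
      obtain rfl : k' = k := hbk
      exact Finset.mem_image_of_mem _ hr
    exact (Nat.cast_le.2 ((Finset.card_le_card hsub).trans Finset.card_image_le)).trans (hF k hk)
  · rw [Finset.filter_eq_empty_iff.2, Finset.card_empty, Nat.cast_zero]
    · exact ht k
    · exact forall_mem_gridBlocks.2 fun l hl _ _ hlk => hk (hlk ▸ hl)

lemma vol_gridBlocks (hu : ∀ k ∈ u, 1 ≤ k) :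
    vol (gridBlocks u F) = ∑ k ∈ u, (F k).card * k ^ d := by
  rw [vol, gridBlocks, Finset.sum_biUnion]
  · refine Finset.sum_congr rfl fun k hk => ?_
    rw [Finset.sum_image fun r _ r' _ h => corner_injective (hu k hk) (Prod.mk.inj h).1]
    simp only [Finset.sum_const, smul_eq_mul]
  · intro k _ k' _ hkk
    rw [Function.onFun, Finset.disjoint_left]
    rintro b hb hb'
    obtain ⟨r, -, rfl⟩ := Finset.mem_image.1 hb
    obtain ⟨r', -, h⟩ := Finset.mem_image.1 hb'
    exact hkk (Prod.mk.inj h).2.symm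

variable {a b : ℕ → ℕ}

lemma eq_of_mem_cube_corner (hd : 1 ≤ d) (hu : ∀ k ∈ u, 1 ≤ k)
    (hdis : (u : Set ℕ).PairwiseDisjoint fun k => Set.Ico (k * a k) (k * b k)) {k k' : ℕ}
    (hk : k ∈ u) (hk' : k' ∈ u) {r r' i : Site d} (hr : r ∈ shell d (a k) (b k))
    (hr' : r' ∈ shell d (a k') (b k')) (hi : i ∈ cube (corner k r) k)
    (hi' : i ∈ cube (corner k' r') k') : k = k' ∧ r = r' := by
  have hshell := mem_shell_of_mem_cube_corner (hu k hk) hr hi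
  have hshell' := mem_shell_of_mem_cube_corner (hu k' hk') hr' hi'
  obtain rfl : k = k' := hdis.elim hk hk' fun h =>
    Finset.disjoint_left.1 (disjoint_shell hd h) hshell hshell'
  rw [mem_cube_corner (hu k hk)] at hi hi'
  exact ⟨rfl, funext fun j => (hi j).symm.trans (hi' j)⟩

lemma isPacking_gridBlocks (hd : 1 ≤ d) {n : ℕ} (hu : ∀ k ∈ u, 1 ≤ k)
    (hdis : (u : Set ℕ).PairwiseDisjoint fun k => Set.Ico (k * a k) (k * b k))
    (hn : ∀ k ∈ u, k * b k ≤ n) (hF : ∀ k ∈ u, F k ⊆ shell d (a k) (b k)) :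
    IsPacking (gridBlocks u F) n where
  cube_subset := forall_mem_gridBlocks.2 fun k hk r hr i hi => mem_cube_zero.2 fun j =>
    ((mem_shell.1 (mem_shell_of_mem_cube_corner (hu k hk) (hF k hk hr) hi)).1 j).trans_le (hn k hk)
  pairwiseDisjoint := by
    intro c hc c' hc' hne
    obtain ⟨k, hk, r, hr, rfl⟩ := mem_gridBlocks.1 (Finset.mem_coe.1 hc)
    obtain ⟨k', hk', r', hr', rfl⟩ := mem_gridBlocks.1 (Finset.mem_coe.1 hc')
    refine Finset.disjoint_left.2 fun i hi hi' => hne ?_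
    obtain ⟨rfl, rfl⟩ := eq_of_mem_cube_corner hd hu hdis hk hk' (hF k hk hr) (hF k' hk' hr') hi hi'
    rfl

lemma disjoint_cover_gridBlocks (hd : 1 ≤ d) (hu : ∀ k ∈ u, 1 ≤ k)
    (hdis : (u : Set ℕ).PairwiseDisjoint fun k => Set.Ico (k * a k) (k * b k))
    (hF : ∀ k ∈ u, F k ⊆ shell d (a k) (b k)) (hF' : ∀ k ∈ u, F' k ⊆ shell d (a k) (b k))
    (hFF : ∀ k ∈ u, Disjoint (F k) (F' k)) :
    Disjoint (cover (gridBlocks u F)) (cover (gridBlocks u F')) := by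
  refine Finset.disjoint_left.2 fun i hi hi' => ?_
  obtain ⟨c, hc, hi⟩ := mem_cover.1 hi
  obtain ⟨c', hc', hi'⟩ := mem_cover.1 hi'
  obtain ⟨k, hk, r, hr, rfl⟩ := mem_gridBlocks.1 hc
  obtain ⟨k', hk', r', hr', rfl⟩ := mem_gridBlocks.1 hc'
  obtain ⟨rfl, rfl⟩ := eq_of_mem_cube_corner hd hu hdis hk hk' (hF k hk hr) (hF' k' hk' hr') hi hi'
  exact Finset.disjoint_left.1 (hFF k hk) hr hr'

end GridBlocks

section Shells

variable {s m : ℕ}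

lemma mul_pow_pred_le_card_shell (hd : 1 ≤ d) (h : s ≤ m) :
    (m - s) * m ^ (d - 1) ≤ (shell d s m).card := by
  rw [card_shell h, ← geom_sum₂_mul_of_ge h, mul_comm]
  gcongr
  calc m ^ (d - 1) = m ^ (d - 1) * s ^ (d - 1 - (d - 1)) := by
        rw [Nat.sub_self, pow_zero, mul_one]
    _ ≤ ∑ i ∈ Finset.range d, m ^ i * s ^ (d - 1 - i) :=
        Finset.single_le_sum (f := fun i => m ^ i * s ^ (d - 1 - i)) (fun _ _ => Nat.zero_le _)
          (Finset.mem_range.2 (by omega))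

lemma card_shell_le_mul_pow_pred (d : ℕ) (h : s ≤ m) :
    (shell d s m).card ≤ d * ((m - s) * m ^ (d - 1)) := by
  rw [card_shell h, ← geom_sum₂_mul_of_ge h, mul_left_comm, mul_comm]
  gcongr
  calc ∑ i ∈ Finset.range d, m ^ i * s ^ (d - 1 - i)
      ≤ ∑ _i ∈ Finset.range d, m ^ (d - 1) := by
        refine Finset.sum_le_sum fun i hi => ?_
        have hi' : i + (d - 1 - i) = d - 1 := by
          have := Finset.mem_range.1 hi
          omega
        calc m ^ i * s ^ (d - 1 - i) ≤ m ^ i * m ^ (d - 1 - i) := by gcongr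
          _ = m ^ (d - 1) := by rw [← pow_add, hi']
    _ = d * m ^ (d - 1) := by rw [Finset.sum_const, Finset.card_range, smul_eq_mul]

lemma card_shell_enlarge_le (hd : 1 ≤ d) (h : s ≤ m) :
    (shell d (s - 2 * (m - s)) (m + 2 * (m - s))).card ≤ 5 * d * 3 ^ d * (shell d s m).card :=
  calc (shell d (s - 2 * (m - s)) (m + 2 * (m - s))).card
      ≤ d * ((m + 2 * (m - s) - (s - 2 * (m - s))) * (m + 2 * (m - s)) ^ (d - 1)) :=
        card_shell_le_mul_pow_pred d (by omega)
    _ ≤ d * (5 * (m - s) * (3 * m) ^ (d - 1)) := by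
        gcongr <;> omega
    _ = 5 * d * 3 ^ (d - 1) * ((m - s) * m ^ (d - 1)) := by rw [mul_pow]; ring
    _ ≤ 5 * d * 3 ^ d * (shell d s m).card := by
        gcongr
        · norm_num
        · omega
        · exact mul_pow_pred_le_card_shell hd h

lemma le_add_of_card_shell_pred_lt (hd : 1 ≤ d) {a b : ℕ} (hab : a < b)
    (h : 2 * (shell d a (b - 1)).card < (shell d a b).card) : b ≤ a + 2 * d := by
  have hpow : a ^ d ≤ (b - 1) ^ d := Nat.pow_le_pow_left (by omega) d
  have hpow' : (b - 1) ^ d ≤ b ^ d := Nat.pow_le_pow_left (by omega) d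
  have hlast := card_shell_le_mul_pow_pred d (Nat.sub_le b 1)
  rw [card_shell (Nat.sub_le b 1), Nat.sub_sub_self (by omega), one_mul] at hlast
  have hall := mul_pow_pred_le_card_shell hd hab.le
  rw [card_shell hab.le] at h hall
  rw [card_shell (by omega)] at h
  have hmul : (b - a) * b ^ (d - 1) ≤ 2 * d * b ^ (d - 1) := by
    rw [mul_assoc]
    omega
  have := Nat.le_of_mul_le_mul_right hmul (pow_pos (by omega) _)
  omega

end Shells

theorem exists_disjoint_shells (hd : 1 ≤ d) (K : Finset ℕ) {s m : ℕ → ℕ}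
    (hsm : ∀ k ∈ K, s k < m k) :
    ∃ u ⊆ K, (u : Set ℕ).PairwiseDisjoint (fun k => Set.Ico (s k) (m k)) ∧
      (K.biUnion fun k => shell d (s k) (m k)).card ≤
        5 * d * 3 ^ d * ∑ k ∈ u, (shell d (s k) (m k)).card := by
  obtain ⟨u, huK, hdis, hcov⟩ := Vitali.exists_disjoint_subfamily_covering_enlargement
    (fun k : ℕ => Set.Ico (s k) (m k)) (K : Set ℕ) (fun k => ((m k - s k : ℕ) : ℝ))
    2 one_lt_two (fun _ _ => Nat.cast_nonneg _) ((K.sup fun k => m k - s k : ℕ) : ℝ)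
    (fun k hk => Nat.cast_le.2 (Finset.le_sup (f := fun k => m k - s k) hk))
    (fun k hk => ⟨s k, le_rfl, hsm k hk⟩)
  lift u to Finset ℕ using K.finite_toSet.subset huK
  rw [Finset.coe_subset] at huK
  refine ⟨u, huK, hdis, ?_⟩
  have hsub : (K.biUnion fun k => shell d (s k) (m k)) ⊆
      u.biUnion fun k => shell d (s k - 2 * (m k - s k)) (m k + 2 * (m k - s k)) := by
    intro i hi
    obtain ⟨k, hk, hi⟩ := Finset.mem_biUnion.1 hi
    obtain ⟨l, hl, ⟨t, ht, ht'⟩, hle⟩ := hcov k hk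
    refine Finset.mem_biUnion.2 ⟨l, hl, (mem_shell_iff_radius hd).2 ?_⟩
    have hlen : m k - s k ≤ 2 * (m l - s l) := by exact_mod_cast hle
    rw [mem_shell_iff_radius hd] at hi
    rw [Set.mem_Ico] at hi ht ht' ⊢
    omega
  refine (Finset.card_le_card hsub).trans (Finset.card_biUnion_le.trans ?_)
  rw [Finset.mul_sum]
  exact Finset.sum_le_sum fun k hk => card_shell_enlarge_le hd (hsm k (huK hk)).le

/-- Among the repeated blocks of `R`, each has a twin outside of `R`. -/
lemma repeatCount_le_two_mul_card_sdiff {x : Config A d} {k : ℕ} {F R : Finset (Site d)}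
    (hR : Set.InjOn (fun r => wordAt x k (corner k r)) R) :
    repeatCount x k F ≤ 2 * (F \ R).card := by
  classical
  set w : Site d → Word A d k := fun r => wordAt x k (corner k r)
  set repeated : Finset (Site d) := F.filter fun r => ∃ r' ∈ F, r' ≠ r ∧ w r' = w r
  have hinter : (repeated ∩ R).card ≤ (F \ R).card := by
    refine Finset.card_le_card_of_forall_subsingleton (fun r r' => w r' = w r) ?_ ?_
    · intro r hr
      obtain ⟨hr, hrR⟩ := Finset.mem_inter.1 hr
      obtain ⟨r', hr', hne, hw⟩ := (Finset.mem_filter.1 hr).2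
      exact ⟨r', Finset.mem_sdiff.2 ⟨hr', fun h => hne (hR h hrR hw)⟩, hw⟩
    · exact fun r' _ r₁ hr₁ r₂ hr₂ =>
        hR (Finset.mem_inter.1 hr₁.1).2 (Finset.mem_inter.1 hr₂.1).2 (hr₁.2.symm.trans hr₂.2)
  calc repeatCount x k F = (repeated ∩ R).card + (repeated \ R).card := by
        rw [Finset.card_inter_add_card_sdiff, repeatCount]
    _ ≤ (F \ R).card + (F \ R).card := by
        gcongr
        exact Finset.filter_subset _ _
    _ = 2 * (F \ R).card := (two_mul _).symm

lemma exists_representatives (x : Config A d) (k : ℕ) (F : Finset (Site d)) :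
    ∃ R ⊆ F, R.card = (F.image fun r => wordAt x k (corner k r)).card ∧
      (∀ r ∈ F, ∃ r' ∈ R, wordAt x k (corner k r') = wordAt x k (corner k r)) ∧
      repeatCount x k F ≤ 2 * (F \ R).card := by
  obtain ⟨R, hRF, hinj, hR⟩ := Finset.exists_subset_injOn_image_eq_of_surjOn (F : Set (Site d))
    (F.image fun r => wordAt x k (corner k r)) fun _ hw => by simpa using hw
  refine ⟨R, Finset.coe_subset.1 hRF, ?_, fun r hr => ?_, repeatCount_le_two_mul_card_sdiff hinj⟩
  · rw [← hR, Finset.card_image_of_injOn hinj]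
  · exact Finset.mem_image.1 (hR ▸ Finset.mem_image_of_mem _ hr)

namespace IsScaleSeq

variable {φ : ℝ} {x : Config A d} {q₀ q₁ : ℕ → ℕ}

lemma lt (h : IsScaleSeq φ x q₀ q₁) {k : ℕ} (hk : 1 ≤ k) : q₀ k < q₁ k :=
  (h.exists_isPhase k hk).choose_spec.lt

lemma mul_lt_mul (h : IsScaleSeq φ x q₀ q₁) {k : ℕ} (hk : 1 ≤ k) : k * q₀ k < k * q₁ k :=
  Nat.mul_lt_mul_of_pos_left (h.lt hk) hk

lemma mul_end_le (h : IsScaleSeq φ x q₀ q₁) {k : ℕ} (hk : 1 ≤ k) :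
    k * q₁ k ≤ (k + 1) * q₀ (k + 1) + k := by
  rw [h.start_succ k hk]
  have := Nat.div_add_mod (k * q₁ k) (k + 1)
  have := Nat.mod_lt (k * q₁ k) (Nat.add_one_pos k)
  omega

lemma mul_end_le_of_lt (h : IsScaleSeq φ x q₀ q₁) {k k' : ℕ} (hk : 1 ≤ k) (hkk : k < k') :
    k * q₁ k ≤ k' * q₀ k' + k := by
  induction k', hkk using Nat.le_induction with
  | base => exact h.mul_end_le hk
  | succ j hj ih =>
    have hend := h.mul_end_le (k := j) (by omega)
    have hphase := Nat.mul_le_mul_left j (h.lt (k := j) (by omega))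
    rw [Nat.mul_succ] at hphase
    omega

lemma pairwiseDisjoint (h : IsScaleSeq φ x q₀ q₁) {u : Set ℕ} (hu : ∀ k ∈ u, 1 ≤ k) :
    u.PairwiseDisjoint fun k => Set.Ico (k * q₀ k) (k * (q₁ k - 1)) := by
  have hdis_of_lt : ∀ k ∈ u, ∀ k', k < k' →
      Disjoint (Set.Ico (k * q₀ k) (k * (q₁ k - 1))) (Set.Ico (k' * q₀ k') (k' * (q₁ k' - 1))) := by
    intro k hk k' hkk
    have hle := h.mul_end_le_of_lt (hu k hk) hkk
    refine (Set.Ico_disjoint_Ico_same (a := k * q₀ k) (c := k' * (q₁ k' - 1))).mono_right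
      (Set.Ico_subset_Ico_left ?_)
    rw [Nat.mul_sub, mul_one]
    omega
  intro k hk k' hk' hne
  rcases hne.lt_or_gt with hlt | hlt
  · exact hdis_of_lt k hk k' hlt
  · exact (hdis_of_lt k' hk' k hlt).symm

lemma le_mul_end (h : IsScaleSeq φ x q₀ q₁) {k : ℕ} (hk : 1 ≤ k) : k ≤ k * q₁ k :=
  Nat.le_mul_of_pos_right k ((Nat.zero_le _).trans_lt (h.lt hk))

lemma exists_mem_blocks_iff (h : IsScaleSeq φ x q₀ q₁) {k : ℕ} (hk : 1 ≤ k) {c : Site d} :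
    (∃ t, (c, k) ∈ (iter φ x t).blocks) ↔ ∃ r ∈ shell d (q₀ k) (q₁ k), corner k r = c :=
  (h.exists_isPhase k hk).choose_spec.exists_mem_blocks_iff

lemma Lregion_subset (h : IsScaleSeq φ x q₀ q₁) {k : ℕ} (hk : 1 ≤ k) :
    Lregion φ x k ⊆ shell d (k * q₀ k) (k * q₁ k) := by
  rintro i ⟨t, ⟨c, l⟩, hb, hl, hi⟩
  obtain rfl : l = k := hl
  obtain ⟨r, hr, rfl⟩ := (h.exists_mem_blocks_iff hk).1 ⟨t, hb⟩
  exact mem_shell_of_mem_cube_corner hk hr (mem_cube.2 hi)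

lemma Mk_eq (h : IsScaleSeq φ x q₀ q₁) {k : ℕ} (hk : 1 ≤ k) :
    Mk φ x k = ((shell d (q₀ k) (q₁ k)).image fun r => wordAt x k (corner k r)).card := by
  rw [Mk, ← Set.ncard_coe_finset]
  congr 1
  ext w
  simp only [Set.mem_ofPred_eq, Finset.coe_image, Set.mem_image, Finset.mem_coe]
  constructor
  · rintro ⟨t, ⟨c, l⟩, hb, hl, hw⟩
    obtain rfl : l = k := hl
    obtain ⟨r, hr, rfl⟩ := (h.exists_mem_blocks_iff hk).1 ⟨t, hb⟩
    exact ⟨r, hr, hw⟩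
  · rintro ⟨r, hr, hw⟩
    obtain ⟨t, ht⟩ := (h.exists_mem_blocks_iff hk).2 ⟨r, hr, rfl⟩
    exact ⟨t, _, ht, rfl, hw⟩

lemma Mk_le (h : IsScaleSeq φ x q₀ q₁) {k : ℕ} (hk : 1 ≤ k) :
    Mk φ x k ≤ (shell d (q₀ k) (q₁ k)).card :=
  (h.Mk_eq hk).trans_le Finset.card_image_le

lemma le_repeatCount (h : IsScaleSeq φ x q₀ q₁) {k : ℕ} (hk : 1 ≤ k) :
    φ * (shell d (q₀ k) (q₁ k)).card ≤ repeatCount x k (shell d (q₀ k) (q₁ k)) :=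
  (h.exists_isPhase k hk).choose_spec.le_repeatCount

lemma repeatCount_le (h : IsScaleSeq φ x q₀ q₁) {k : ℕ} (hk : 1 ≤ k) :
    repeatCount x k (shell d (q₀ k) (q₁ k - 1)) ≤ φ * (shell d (q₀ k) (q₁ k - 1)).card :=
  (h.exists_isPhase k hk).choose_spec.repeatCount_le

lemma finite_Lregion (h : IsScaleSeq φ x q₀ q₁) (k : ℕ) : (Lregion φ x k).Finite := by
  rcases k.eq_zero_or_pos with rfl | hk
  · refine Set.finite_empty.subset ?_
    rintro i ⟨t, b, hb, hb_side, -⟩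
    exact absurd hb_side (Nat.one_le_iff_ne_zero.1 (one_le_side_of_mem_blocks hb))
  · exact (Finset.finite_toSet _).subset (h.Lregion_subset hk)

end IsScaleSeq

/-! ### Regions of density zero -/

/-- The asymptotic density of `S` exists and is zero. -/
def HasZeroDensity (S : Set (Site d)) : Prop :=
  Tendsto (fun n : ℕ => (Set.ncard (S ∩ cubeSet d n) : ℝ) / (n : ℝ) ^ d) atTop (𝓝 0)

lemma finite_cubeSet (d n : ℕ) : (cubeSet d n).Finite := by
  rw [← coe_cube_zero]
  exact Finset.finite_toSet _

namespace HasZeroDensity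

variable {S S' : Set (Site d)}

lemma upperDensity_eq_zero (h : HasZeroDensity S) : upperDensity S = 0 := h.limsup_eq

lemma of_forall_eventually_le
    (h : ∀ ε > 0, ∀ᶠ n : ℕ in atTop, (Set.ncard (S ∩ cubeSet d n) : ℝ) ≤ ε * (n : ℝ) ^ d) :
    HasZeroDensity S := by
  refine Metric.tendsto_nhds.2 fun ε hε => ?_
  filter_upwards [h (ε / 2) (half_pos hε), eventually_gt_atTop 0] with n hn hn0
  rw [Real.dist_eq, sub_zero, abs_of_nonneg (by positivity)]
  exact ((div_le_iff₀ (by positivity)).2 hn).trans_lt (half_lt_self hε)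

lemma of_finite (hd : 1 ≤ d) (hS : S.Finite) : HasZeroDensity S :=
  of_forall_eventually_le fun ε hε => by
    filter_upwards [eventually_le_mul_pow hd hε (S.ncard : ℝ)] with n hn
    exact (Nat.cast_le.2 (Set.ncard_le_ncard Set.inter_subset_left hS)).trans hn

lemma mono (h : HasZeroDensity S') (hS : S ⊆ S') : HasZeroDensity S :=
  squeeze_zero (fun _ => by positivity) (fun n => by
    gcongr
    exact (finite_cubeSet d n).inter_of_right S') h

lemma union (h : HasZeroDensity S) (h' : HasZeroDensity S') : HasZeroDensity (S ∪ S') := by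
  refine squeeze_zero (fun _ => by positivity) (fun n => ?_) (add_zero (0 : ℝ) ▸ h.add h')
  rw [Set.union_inter_distrib_right, ← add_div]
  gcongr
  exact_mod_cast Set.ncard_union_le _ _

lemma biUnion_of_eventually_subset (hd : 1 ≤ d) (hS : HasZeroDensity S) {K : Set ℕ}
    {f : ℕ → Set (Site d)} (hf : ∀ k, (f k).Finite) (hfS : ∀ᶠ k in atTop, k ∈ K → f k ⊆ S) :
    HasZeroDensity (⋃ k ∈ K, f k) := by
  obtain ⟨k₀, hk₀⟩ := eventually_atTop.1 hfS
  refine (hS.union (of_finite hd ((Set.finite_lt_nat k₀).biUnion fun k _ => hf k))).mono ?_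
  refine Set.iUnion₂_subset fun k hk => ?_
  rcases lt_or_ge k k₀ with hlt | hge
  · exact Set.subset_union_of_subset_right
      (Set.subset_biUnion_of_mem (s := {k | k < k₀}) (u := f) hlt) _
  · exact Set.subset_union_of_subset_left (hk₀ k hge hk) _

end HasZeroDensity

section Shells

variable {K : Set ℕ} {s e : ℕ → ℕ}

lemma exists_le_start_of_lt_end {ι : Type*} (K : Set ι) (s e : ι → ℕ) (n : ℕ) :
    ∃ a ≤ n, (∀ k ∈ K, n < e k → a ≤ s k) ∧ (a = n ∨ ∃ k ∈ K, s k = a ∧ n < e k) := by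
  have hmem := Nat.sInf_mem (Set.insert_nonempty n (s '' {k | k ∈ K ∧ n < e k}))
  refine ⟨_, Nat.sInf_le (Set.mem_insert n _), fun k hk hn => ?_, hmem.imp id ?_⟩
  · exact Nat.sInf_le (Set.mem_insert_of_mem n ⟨k, ⟨hk, hn⟩, rfl⟩)
  · rintro ⟨k, ⟨hk, hn⟩, hka⟩
    exact ⟨k, hk, hka, hn⟩

lemma card_shell_le_of_card_shell_le {a n m : ℕ} {ε : ℝ} (han : a ≤ n) (hnm : n ≤ m)
    (h : ((shell d a m).card : ℝ) ≤ ε * (m : ℝ) ^ d) :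
    ((shell d a n).card : ℝ) ≤ ε * (n : ℝ) ^ d := by
  have hpow : (n : ℝ) ^ d ≤ (m : ℝ) ^ d := by gcongr
  have ha : (0 : ℝ) ≤ (a : ℝ) ^ d := by positivity
  have hn : (0 : ℝ) ≤ (n : ℝ) ^ d := by positivity
  rw [card_shell (han.trans hnm), Nat.cast_sub (Nat.pow_le_pow_left (han.trans hnm) d)] at h
  rw [card_shell han, Nat.cast_sub (Nat.pow_le_pow_left han d)]
  push_cast at h ⊢
  rcases le_total 1 ε with hε | hε <;> nlinarith

/-- Of the shells sticking out of `Λ_n`, the one starting first contains the trace on `Λ_n` of all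
the others. -/
lemma eventually_ncard_iUnion_shell_le {ε : ℝ} (hε : 0 ≤ ε) (hK : ∀ k ∈ K, k ≤ e k)
    (hcard : ∀ᶠ n : ℕ in atTop, ∀ u : Finset ℕ, (∀ k ∈ u, k ∈ K ∧ e k ≤ n) →
      ((u.biUnion fun k => shell d (s k) (e k)).card : ℝ) ≤ ε * (n : ℝ) ^ d) :
    ∀ᶠ n : ℕ in atTop,
      (((⋃ k ∈ K, (shell d (s k) (e k) : Set (Site d))) ∩ cubeSet d n).ncard : ℝ) ≤
        2 * ε * (n : ℝ) ^ d := by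
  classical
  obtain ⟨n₀, hcard⟩ := eventually_atTop.1 hcard
  filter_upwards [eventually_ge_atTop n₀] with n hn
  obtain ⟨a, han, ha_le, ha⟩ := exists_le_start_of_lt_end K s e n
  have hout : ((shell d a n).card : ℝ) ≤ ε * (n : ℝ) ^ d := by
    rcases ha with rfl | ⟨k, hk, rfl, hnk⟩
    · rw [shell_self, Finset.card_empty, Nat.cast_zero]
      positivity
    · have hsingle := hcard (e k) (hn.trans hnk.le) {k} (by simpa using hk)
      rw [Finset.singleton_biUnion] at hsingle
      exact card_shell_le_of_card_shell_le han hnk.le hsingle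
  set u : Finset ℕ := (Finset.range (n + 1)).filter fun k => k ∈ K ∧ e k ≤ n
  set V : Finset (Site d) := u.biUnion fun k => shell d (s k) (e k)
  have hin : (V.card : ℝ) ≤ ε * (n : ℝ) ^ d := hcard n hn u fun k hk => (Finset.mem_filter.1 hk).2
  have hsub : (⋃ k ∈ K, (shell d (s k) (e k) : Set (Site d))) ∩ cubeSet d n ⊆
      ↑(V ∪ shell d a n) := by
    rintro i ⟨hi, hin⟩
    obtain ⟨k, hk, hi⟩ := Set.mem_iUnion₂.1 hi
    rw [Finset.mem_coe, Finset.mem_union]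
    rcases le_or_gt (e k) n with hkn | hkn
    · exact Or.inl (Finset.mem_biUnion.2 ⟨k, Finset.mem_filter.2
        ⟨Finset.mem_range_succ_iff.2 ((hK k hk).trans hkn), hk, hkn⟩, hi⟩)
    · exact Or.inr (mem_shell.2 ⟨hin, fun hlt => (mem_shell.1 (Finset.mem_coe.1 hi)).2
        fun j => (hlt j).trans_le (ha_le k hk hkn)⟩)
  calc (((⋃ k ∈ K, (shell d (s k) (e k) : Set (Site d))) ∩ cubeSet d n).ncard : ℝ)
      ≤ ((V ∪ shell d a n).card : ℝ) := by
        rw [← Set.ncard_coe_finset]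
        exact Nat.cast_le.2 (Set.ncard_le_ncard hsub (Finset.finite_toSet _))
    _ ≤ (V.card : ℝ) + ((shell d a n).card : ℝ) := mod_cast Finset.card_union_le _ _
    _ ≤ 2 * ε * (n : ℝ) ^ d := by linarith

lemma hasZeroDensity_iUnion_shell (hd : 1 ≤ d) (hK : ∀ k ∈ K, k ≤ e k)
    (hcard : ∀ ε > 0, ∃ k₀, ∀ᶠ n : ℕ in atTop, ∀ u : Finset ℕ,
      (∀ k ∈ u, k₀ ≤ k ∧ k ∈ K ∧ e k ≤ n) →
        ((u.biUnion fun k => shell d (s k) (e k)).card : ℝ) ≤ ε * (n : ℝ) ^ d) :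
    HasZeroDensity (⋃ k ∈ K, (shell d (s k) (e k) : Set (Site d))) := by
  refine .of_forall_eventually_le fun ε hε => ?_
  obtain ⟨k₀, hk₀⟩ := hcard (ε / 3) (by positivity)
  set F : Set (Site d) := ⋃ k ∈ {k | k < k₀}, (shell d (s k) (e k) : Set (Site d))
  set S : Set (Site d) := ⋃ k ∈ {k | k₀ ≤ k ∧ k ∈ K}, (shell d (s k) (e k) : Set (Site d))
  have hF : F.Finite := (Set.finite_lt_nat k₀).biUnion fun k _ => Finset.finite_toSet _
  have hsub : (⋃ k ∈ K, (shell d (s k) (e k) : Set (Site d))) ⊆ F ∪ S := by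
    intro i hi
    obtain ⟨k, hk, hi⟩ := Set.mem_iUnion₂.1 hi
    exact (lt_or_ge k k₀).imp (fun h => Set.mem_iUnion₂.2 ⟨k, h, hi⟩)
      fun h => Set.mem_iUnion₂.2 ⟨k, ⟨h, hk⟩, hi⟩
  have hS : ∀ᶠ n : ℕ in atTop, ((S ∩ cubeSet d n).ncard : ℝ) ≤ 2 * (ε / 3) * (n : ℝ) ^ d :=
    eventually_ncard_iUnion_shell_le (by positivity) (fun k hk => hK k hk.2)
      (hk₀.mono fun n hn u hu => hn u fun k hk => and_assoc.1 (hu k hk))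
  filter_upwards [eventually_le_mul_pow hd (show 0 < ε / 3 by positivity) (F.ncard : ℝ), hS]
    with n hnF hnS
  calc (((⋃ k ∈ K, (shell d (s k) (e k) : Set (Site d))) ∩ cubeSet d n).ncard : ℝ)
      ≤ ((F ∪ S ∩ cubeSet d n).ncard : ℝ) := by
        refine Nat.cast_le.2 (Set.ncard_le_ncard ?_
          (hF.union ((finite_cubeSet d n).inter_of_right S)))
        exact fun i hi => (hsub hi.1).imp id fun h => ⟨h, hi.2⟩
    _ ≤ (F.ncard : ℝ) + ((S ∩ cubeSet d n).ncard : ℝ) := mod_cast Set.ncard_union_le _ _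
    _ ≤ ε * (n : ℝ) ^ d := by linarith

end Shells

/-! ### Scales with few words -/

namespace IsScaleSeq

variable {φ : ℝ} {x : Config A d} {q₀ q₁ : ℕ → ℕ}

/-- Every word of a block outside a set of representatives is copied from a representative. -/
lemma exists_isCopyPacking (hd : 1 ≤ d) (h : IsScaleSeq φ x q₀ q₁) {a : ℝ} {k₁ n : ℕ}
    {u : Finset ℕ} (hu : ∀ k ∈ u, 1 ≤ k)
    (hdis : (u : Set ℕ).PairwiseDisjoint fun k => Set.Ico (k * q₀ k) (k * q₁ k))
    (hk₁ : ∀ k ∈ u, k₁ ≤ k) (hn : ∀ k ∈ u, k * q₁ k ≤ n)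
    (hM : ∀ k ∈ u, (Mk φ x k : ℝ) ≤ (A : ℝ) ^ ((k : ℝ) ^ d * a)) :
    ∃ Z Z', IsCopyPacking x a k₁ n Z Z' ∧
      φ * ∑ k ∈ u, ((shell d (k * q₀ k) (k * q₁ k)).card : ℝ) ≤ 2 * vol Z := by
  choose R hR_sub hR_card hR_word hR_repeat using
    fun k => exists_representatives x k (shell d (q₀ k) (q₁ k))
  refine ⟨gridBlocks u fun k => shell d (q₀ k) (q₁ k) \ R k, gridBlocks u R, ⟨?_, ?_, ?_, ?_, ?_,
    card_filter_gridBlocks_le (fun k => by positivity) fun k hk => ?_, ?_⟩, ?_⟩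
  · exact isPacking_gridBlocks hd hu hdis hn fun k _ => Finset.sdiff_subset
  · exact isPacking_gridBlocks hd hu hdis hn fun k _ => hR_sub k
  · exact disjoint_cover_gridBlocks hd hu hdis (fun k _ => Finset.sdiff_subset)
      (fun k _ => hR_sub k) fun k _ => Finset.sdiff_disjoint
  · exact forall_mem_gridBlocks.2 fun k hk _ _ => hk₁ k hk
  · exact forall_mem_gridBlocks.2 fun k hk _ _ => hk₁ k hk
  · rw [hR_card, ← h.Mk_eq (hu k hk)]
    exact hM k hk
  · refine forall_mem_gridBlocks.2 fun k hk r hr => ?_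
    obtain ⟨r', hr', hw⟩ := hR_word k r (Finset.mem_sdiff.1 hr).1
    exact ⟨_, mem_gridBlocks.2 ⟨k, hk, r', hr', rfl⟩, rfl, hw⟩
  · rw [vol_gridBlocks hu, Nat.cast_sum, Finset.mul_sum, Finset.mul_sum]
    refine Finset.sum_le_sum fun k hk => ?_
    rw [card_shell_mul d k (h.lt (hu k hk)).le]
    push_cast
    rw [← mul_assoc, ← mul_assoc]
    exact mul_le_mul_of_nonneg_right
      ((h.le_repeatCount (hu k hk)).trans (mod_cast hR_repeat k)) (by positivity)

lemma hasZeroDensity_shell_of_Mk_le_rpow (hd : 1 ≤ d) (hφ : 0 < φ) (h : IsScaleSeq φ x q₀ q₁)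
    {a : ℝ} (hx : ∀ c > 0, ∃ k₁, ∀ᶠ n : ℕ in atTop, ∀ Z Z', IsCopyPacking x a k₁ n Z Z' →
      (vol Z : ℝ) < c * (n : ℝ) ^ d) :
    HasZeroDensity (⋃ k ∈ {k : ℕ | 1 ≤ k ∧ (Mk φ x k : ℝ) ≤ (A : ℝ) ^ ((k : ℝ) ^ d * a)},
      (shell d (k * q₀ k) (k * q₁ k) : Set (Site d))) := by
  obtain ⟨C, hC, hC_def⟩ : ∃ C : ℝ, 0 < C ∧ ((5 * d * 3 ^ d : ℕ) : ℝ) = C :=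
    ⟨_, Nat.cast_pos.2 (by positivity), rfl⟩
  refine hasZeroDensity_iUnion_shell (s := fun k => k * q₀ k) (e := fun k => k * q₁ k) hd
    (fun k hk => h.le_mul_end hk.1) fun ε hε => ?_
  obtain ⟨k₁, hk₁⟩ := hx (ε * φ / (2 * C)) (by positivity)
  refine ⟨k₁, hk₁.mono fun n hn u hu => ?_⟩
  obtain ⟨v, hvu, hdis, hle⟩ :=
    exists_disjoint_shells hd u fun k hk => h.mul_lt_mul (hu k hk).2.1.1
  obtain ⟨Z, Z', hZ, hvol⟩ := h.exists_isCopyPacking hd (fun k hk => (hu k (hvu hk)).2.1.1) hdis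
    (fun k hk => (hu k (hvu hk)).1) (fun k hk => (hu k (hvu hk)).2.2)
    fun k hk => (hu k (hvu hk)).2.1.2
  refine le_of_mul_le_mul_left ?_ hφ
  calc φ * ((u.biUnion fun k => shell d (k * q₀ k) (k * q₁ k)).card : ℝ)
      ≤ φ * (C * ∑ k ∈ v, ((shell d (k * q₀ k) (k * q₁ k)).card : ℝ)) := by
        gcongr
        rw [← hC_def, ← Nat.cast_sum, ← Nat.cast_mul]
        exact Nat.cast_le.2 hle
    _ = C * (φ * ∑ k ∈ v, ((shell d (k * q₀ k) (k * q₁ k)).card : ℝ)) := by ring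
    _ ≤ C * (2 * (ε * φ / (2 * C) * (n : ℝ) ^ d)) := by
        refine mul_le_mul_of_nonneg_left (hvol.trans ?_) hC.le
        gcongr
        exact (hn Z Z' hZ).le
    _ = φ * (ε * (n : ℝ) ^ d) := by field_simp

theorem hasZeroDensity_of_Mk_le_rpow (hd : 1 ≤ d) (hφ : 0 < φ) (h : IsScaleSeq φ x q₀ q₁)
    {a : ℝ} (hx : ∀ c > 0, ∃ k₁, ∀ᶠ n : ℕ in atTop, ∀ Z Z', IsCopyPacking x a k₁ n Z Z' →
      (vol Z : ℝ) < c * (n : ℝ) ^ d) :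
    HasZeroDensity
      (⋃ k ∈ {k : ℕ | (Mk φ x k : ℝ) ≤ (A : ℝ) ^ ((k : ℝ) ^ d * a)}, Lregion φ x k) := by
  refine .biUnion_of_eventually_subset hd (h.hasZeroDensity_shell_of_Mk_le_rpow hd hφ hx)
    h.finite_Lregion ?_
  filter_upwards [eventually_ge_atTop 1] with k hk hM
  exact Set.subset_iUnion₂_of_subset k ⟨hk, hM⟩ (h.Lregion_subset hk)

/-! ### Scales with many words -/

lemma card_le_of_two_mul_card_le (h : IsScaleSeq φ x q₀ q₁) {k : ℕ} (hk : 1 ≤ k)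
    {T : Finset (Word A d k)}
    (hT : 2 * (T.card : ℝ) ≤ (1 - φ) * (shell d (q₀ k) (q₁ k - 1)).card) :
    (1 - φ) * (shell d (q₀ k) (q₁ k - 1)).card ≤
      2 * (((shell d (q₀ k) (q₁ k - 1)).filter fun r => wordAt x k (corner k r) ∉ T).card : ℝ) := by
  have hsplit : ((shell d (q₀ k) (q₁ k - 1)).card : ℝ) ≤
      repeatCount x k (shell d (q₀ k) (q₁ k - 1)) + T.card +
        ((shell d (q₀ k) (q₁ k - 1)).filter fun r => wordAt x k (corner k r) ∉ T).card :=
    mod_cast card_le_repeatCount_add x k _ T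
  have hrepeat := h.repeatCount_le hk
  linarith

lemma hasZeroDensity_of_le_card_shell (hd : 1 ≤ d) (hφ : φ < 1) (h : IsScaleSeq φ x q₀ q₁)
    {t : ℕ → ℝ} (hx : ∀ c > 0, ∃ T : (k : ℕ) → Finset (Word A d k),
      (∀ᶠ k in atTop, ((T k).card : ℝ) ≤ t k) ∧
      ∀ᶠ n : ℕ in atTop, ∀ Z, IsPacking Z n → (∀ b ∈ Z, wordAt x b.2 b.1 ∉ T b.2) →
        (vol Z : ℝ) ≤ c * (n : ℝ) ^ d) :
    HasZeroDensity (⋃ k ∈ {k : ℕ | 1 ≤ k ∧ q₀ k + 1 < q₁ k ∧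
        2 * t k ≤ (1 - φ) * (shell d (q₀ k) (q₁ k - 1)).card},
      (shell d (k * q₀ k) (k * (q₁ k - 1)) : Set (Site d))) := by
  classical
  refine hasZeroDensity_iUnion_shell (s := fun k => k * q₀ k) (e := fun k => k * (q₁ k - 1)) hd
    (fun k hk => Nat.le_mul_of_pos_right k (by have := hk.2.1; omega)) fun ε hε => ?_
  have hφ' : 0 < 1 - φ := sub_pos.2 hφ
  obtain ⟨T, hT, hn⟩ := hx (ε * (1 - φ) / 2) (by positivity)
  obtain ⟨k₀, hk₀⟩ := eventually_atTop.1 hT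
  refine ⟨k₀, hn.mono fun n hn u hu => ?_⟩
  have hu_pos : ∀ k ∈ u, 1 ≤ k := fun k hk => (hu k hk).2.1.1
  set F : ℕ → Finset (Site d) := fun k =>
    (shell d (q₀ k) (q₁ k - 1)).filter fun r => wordAt x k (corner k r) ∉ T k
  have hvol : (vol (gridBlocks u F) : ℝ) ≤ ε * (1 - φ) / 2 * (n : ℝ) ^ d :=
    hn _ (isPacking_gridBlocks hd hu_pos (h.pairwiseDisjoint hu_pos) (fun k hk => (hu k hk).2.2)
      fun k _ => Finset.filter_subset _ _)
      (forall_mem_gridBlocks.2 fun k _ r hr => (Finset.mem_filter.1 hr).2)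
  have hterm : ∀ k ∈ u, (1 - φ) * ((shell d (k * q₀ k) (k * (q₁ k - 1))).card : ℝ) ≤
      2 * (((F k).card * k ^ d : ℕ) : ℝ) := by
    intro k hk
    obtain ⟨hk_le, ⟨-, hlong, hthick⟩, -⟩ := hu k hk
    rw [card_shell_mul d k (by omega)]
    push_cast
    rw [← mul_assoc, ← mul_assoc]
    refine mul_le_mul_of_nonneg_right
      (h.card_le_of_two_mul_card_le (T := T k) (hu_pos k hk) ?_) (by positivity)
    linarith [hk₀ k hk_le]
  refine le_of_mul_le_mul_left ?_ hφ'
  calc (1 - φ) * ((u.biUnion fun k => shell d (k * q₀ k) (k * (q₁ k - 1))).card : ℝ)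
      ≤ (1 - φ) * ∑ k ∈ u, ((shell d (k * q₀ k) (k * (q₁ k - 1))).card : ℝ) := by
        gcongr
        exact_mod_cast Finset.card_biUnion_le
    _ ≤ 2 * vol (gridBlocks u F) := by
        rw [vol_gridBlocks hu_pos, Nat.cast_sum, Finset.mul_sum, Finset.mul_sum]
        exact Finset.sum_le_sum hterm
    _ ≤ (1 - φ) * (ε * (n : ℝ) ^ d) := by linarith

end IsScaleSeq

/-- A shell at scale `k` of bounded thickness and of outer radius at least `k ^ 3` has relative
volume `O(1 / k ^ 2)`, which is summable. -/
lemma hasZeroDensity_of_pow_three_le (hd : 1 ≤ d) (C : ℕ) (e : ℕ → ℕ) :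
    HasZeroDensity (⋃ k ∈ {k : ℕ | 1 ≤ k ∧ k ^ 3 ≤ e k},
      (shell d (e k - C * k) (e k) : Set (Site d))) := by
  refine hasZeroDensity_iUnion_shell (s := fun k => e k - C * k) hd
    (fun k hk => (Nat.le_self_pow (by norm_num) k).trans hk.2) fun ε hε => ?_
  obtain ⟨s, hs⟩ := summable_iff_vanishing_norm.1
    (Real.summable_one_div_nat_pow.2 (by norm_num : 1 < 2)) (ε / (d * C + 1)) (by positivity)
  refine ⟨s.sup id + 1, Eventually.of_forall fun n u hu => ?_⟩
  have htail : ∑ k ∈ u, 1 / (k : ℝ) ^ 2 ≤ ε / (d * C + 1) := by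
    refine (le_abs_self _).trans (hs u (Finset.disjoint_left.2 fun k hk hks => ?_)).le
    exact (Nat.lt_of_succ_le (hu k hk).1).not_ge (Finset.le_sup (f := id) hks)
  have hterm : ∀ k ∈ u, ((shell d (e k - C * k) (e k)).card : ℝ) ≤
      d * C * (n : ℝ) ^ d * (1 / (k : ℝ) ^ 2) := by
    intro k hk
    obtain ⟨-, ⟨hk_pos, hk_pow⟩, hk_end⟩ := hu k hk
    rw [mul_one_div, le_div_iff₀ (by positivity)]
    have hcard : (shell d (e k - C * k) (e k)).card * k ^ 2 ≤ d * C * n ^ d :=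
      calc (shell d (e k - C * k) (e k)).card * k ^ 2
          ≤ d * ((e k - (e k - C * k)) * e k ^ (d - 1)) * k ^ 2 := by
            gcongr
            exact card_shell_le_mul_pow_pred d (Nat.sub_le _ _)
        _ ≤ d * (C * k * e k ^ (d - 1)) * k ^ 2 := by gcongr; omega
        _ = d * C * (k ^ 3 * e k ^ (d - 1)) := by ring
        _ ≤ d * C * (e k * e k ^ (d - 1)) := by gcongr
        _ = d * C * e k ^ d := by rw [← pow_succ', Nat.sub_add_cancel hd]
        _ ≤ d * C * n ^ d := by gcongr
    exact_mod_cast hcard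
  calc ((u.biUnion fun k => shell d (e k - C * k) (e k)).card : ℝ)
      ≤ ∑ k ∈ u, ((shell d (e k - C * k) (e k)).card : ℝ) := mod_cast Finset.card_biUnion_le
    _ ≤ d * C * (n : ℝ) ^ d * ∑ k ∈ u, 1 / (k : ℝ) ^ 2 := by
        rw [Finset.mul_sum]
        exact Finset.sum_le_sum hterm
    _ ≤ d * C * (n : ℝ) ^ d * (ε / (d * C + 1)) := by gcongr
    _ = d * C / (d * C + 1) * (ε * (n : ℝ) ^ d) := by ring
    _ ≤ 1 * (ε * (n : ℝ) ^ d) := by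
        gcongr
        exact (div_le_one (by positivity)).2 (by linarith)
    _ = ε * (n : ℝ) ^ d := one_mul _

section Growth

variable {b β γ : ℝ}

lemma eventually_pow_le_rpow_pow_mul (hb : 1 < b) (hd : 1 ≤ d) (hγ : 0 < γ) (m : ℕ) :
    ∀ᶠ k : ℕ in atTop, (k : ℝ) ^ m ≤ b ^ ((k : ℝ) ^ d * γ) := by
  have hexp := (isLittleO_pow_const_const_pow_of_one_lt (R := ℝ) m
    (Real.one_lt_rpow hb hγ)).bound one_pos
  filter_upwards [hexp, eventually_ge_atTop 1] with k hk hk_pos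
  rw [one_mul, Real.norm_of_nonneg (by positivity), Real.norm_of_nonneg (by positivity)] at hk
  calc (k : ℝ) ^ m ≤ (b ^ γ) ^ k := hk
    _ = b ^ ((k : ℝ) * γ) := by rw [mul_comm, Real.rpow_mul (by positivity), Real.rpow_natCast]
    _ ≤ b ^ ((k : ℝ) ^ d * γ) := by
        gcongr
        · exact hb.le
        · exact le_self_pow₀ (mod_cast hk_pos) (by omega)

lemma eventually_mul_rpow_pow_mul_le (hb : 1 < b) (hd : 1 ≤ d) (hβγ : β < γ) (C : ℝ) :
    ∀ᶠ k : ℕ in atTop, C * b ^ ((k : ℝ) ^ d * β) ≤ b ^ ((k : ℝ) ^ d * γ) := by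
  filter_upwards [eventually_pow_le_rpow_pow_mul hb hd (sub_pos.2 hβγ) 1,
    tendsto_natCast_atTop_atTop.eventually_ge_atTop C] with k hk hkC
  calc C * b ^ ((k : ℝ) ^ d * β) ≤ b ^ ((k : ℝ) ^ d * (γ - β)) * b ^ ((k : ℝ) ^ d * β) := by
        gcongr
        exact hkC.trans (by simpa only [pow_one] using hk)
    _ = b ^ ((k : ℝ) ^ d * γ) := by rw [← Real.rpow_add (by linarith)]; ring_nf

lemma eventually_sq_le_of_rpow_le_card_shell (hb : 1 < b) (hd : 1 ≤ d) (hγ : 0 < γ) :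
    ∀ᶠ k : ℕ in atTop, ∀ s m : ℕ, s ≤ m →
      b ^ ((k : ℝ) ^ d * γ) ≤ ((shell d s m).card : ℝ) → k ^ 2 ≤ m := by
  filter_upwards [eventually_pow_le_rpow_pow_mul hb hd hγ (2 * d)] with k hk s m hsm hcard
  have hpow : (k ^ 2) ^ d ≤ m ^ d := by
    refine le_trans (α := ℕ) (b := (shell d s m).card) ?_ ?_
    · rw [← pow_mul]
      exact_mod_cast hk.trans hcard
    · rw [card_shell hsm]
      exact Nat.sub_le _ _
  exact (Nat.pow_le_pow_iff_left (by omega)).1 hpow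

lemma eventually_mul_rpow_le_card_shell_pred (hb : 1 < b) (hd : 1 ≤ d) (hβγ : β < γ) (C : ℝ) :
    ∀ᶠ k : ℕ in atTop, ∀ s m : ℕ, s + 2 * d < m →
      b ^ ((k : ℝ) ^ d * γ) ≤ ((shell d s m).card : ℝ) →
      C * b ^ ((k : ℝ) ^ d * β) ≤ ((shell d s (m - 1)).card : ℝ) := by
  filter_upwards [eventually_mul_rpow_pow_mul_le hb hd hβγ (2 * C)] with k hk s m hsm hcard
  by_contra! hlt
  refine hsm.not_ge (le_add_of_card_shell_pred_lt hd (by omega) ?_)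
  have hlt_card : 2 * ((shell d s (m - 1)).card : ℝ) < (shell d s m).card := by linarith
  exact_mod_cast hlt_card

end Growth

namespace IsScaleSeq

variable {φ : ℝ} {x : Config A d} {q₀ q₁ : ℕ → ℕ}

/-- The outermost layer of cubes is split off, since only the other layers have few repeated
words; both this layer and short shells lie within distance `2 * d * k` of the boundary. -/
lemma eventually_shell_subset (hA : 2 ≤ A) (hd : 1 ≤ d) (hφ : φ < 1) (h : IsScaleSeq φ x q₀ q₁)
    {β γ : ℝ} (hβγ : β < γ) (hγ : 0 < γ) :
    ∀ᶠ k : ℕ in atTop, (A : ℝ) ^ ((k : ℝ) ^ d * γ) ≤ (Mk φ x k : ℝ) →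
      (shell d (k * q₀ k) (k * q₁ k) : Set (Site d)) ⊆
        (⋃ k ∈ {k : ℕ | 1 ≤ k ∧ q₀ k + 1 < q₁ k ∧
          2 * (A : ℝ) ^ ((k : ℝ) ^ d * β) ≤ (1 - φ) * (shell d (q₀ k) (q₁ k - 1)).card},
            (shell d (k * q₀ k) (k * (q₁ k - 1)) : Set (Site d))) ∪
        ⋃ k ∈ {k : ℕ | 1 ≤ k ∧ k ^ 3 ≤ k * q₁ k},
          (shell d (k * q₁ k - 2 * d * k) (k * q₁ k) : Set (Site d)) := by
  have hA' : (1 : ℝ) < A := Nat.one_lt_cast.2 hA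
  filter_upwards [eventually_sq_le_of_rpow_le_card_shell hA' hd hγ,
    eventually_mul_rpow_le_card_shell_pred hA' hd hβγ (2 / (1 - φ)),
    eventually_ge_atTop 1] with k hsq hthick hk hM i hi
  have hcard := hM.trans (Nat.cast_le.2 (h.Mk_le hk))
  have hcube : k ^ 3 ≤ k * q₁ k :=
    (pow_succ' k 2).trans_le (Nat.mul_le_mul_left k (hsq _ _ (h.lt hk).le hcard))
  obtain ⟨hi_ge, hi_lt⟩ := (mem_shell_iff_radius hd).1 (Finset.mem_coe.1 hi)
  rcases le_or_gt (k * q₁ k - 2 * d * k) (radius i) with hr | hr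
  · exact Or.inr (Set.mem_iUnion₂.2 ⟨k, ⟨hk, hcube⟩, (mem_shell_iff_radius hd).2 ⟨hr, hi_lt⟩⟩)
  have hlong : q₀ k + 2 * d < q₁ k := by
    refine lt_of_mul_lt_mul_left (a := k) ?_ (Nat.zero_le k)
    rw [Nat.mul_add, Nat.mul_comm k (2 * d)]
    omega
  refine Or.inl (Set.mem_iUnion₂.2 ⟨k, ⟨hk, by omega, ?_⟩,
    (mem_shell_iff_radius hd).2 ⟨hi_ge, hr.trans_le ?_⟩⟩)
  · have hT := hthick _ _ hlong hcard
    rwa [div_mul_eq_mul_div, div_le_iff₀' (sub_pos.2 hφ)] at hT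
  · rw [Nat.mul_sub, mul_one]
    exact Nat.sub_le_sub_left (Nat.le_mul_of_pos_left k (by omega)) _

theorem hasZeroDensity_of_rpow_le_Mk (hA : 2 ≤ A) (hd : 1 ≤ d) (hφ : φ < 1)
    (h : IsScaleSeq φ x q₀ q₁) {β γ : ℝ} (hβγ : β < γ) (hγ : 0 < γ)
    (hx : ∀ c > 0, ∃ T : (k : ℕ) → Finset (Word A d k),
      (∀ᶠ k : ℕ in atTop, ((T k).card : ℝ) ≤ (A : ℝ) ^ ((k : ℝ) ^ d * β)) ∧
      ∀ᶠ n : ℕ in atTop, ∀ Z, IsPacking Z n → (∀ b ∈ Z, wordAt x b.2 b.1 ∉ T b.2) →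
        (vol Z : ℝ) ≤ c * (n : ℝ) ^ d) :
    HasZeroDensity
      (⋃ k ∈ {k : ℕ | (A : ℝ) ^ ((k : ℝ) ^ d * γ) ≤ (Mk φ x k : ℝ)}, Lregion φ x k) := by
  refine .biUnion_of_eventually_subset hd ((h.hasZeroDensity_of_le_card_shell hd hφ hx).union
    (hasZeroDensity_of_pow_three_le hd (2 * d) fun k => k * q₁ k)) h.finite_Lregion ?_
  filter_upwards [h.eventually_shell_subset hA hd hφ hβγ hγ, eventually_ge_atTop 1] with k hk hk_pos
  exact fun hM => (h.Lregion_subset hk_pos).trans (hk hM)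

end IsScaleSeq

/-! ### Almost every configuration -/

lemma ae_forall_pos {Ω : Type*} [MeasurableSpace Ω] {μ : Measure Ω} {p : ℝ → Ω → Prop}
    (hmono : ∀ x, Monotone (p · x)) (h : ∀ c > 0, ∀ᵐ x ∂μ, p c x) :
    ∀ᵐ x ∂μ, ∀ c > 0, p c x := by
  have hcount := ae_all_iff.2 fun j : ℕ => h _ (Nat.one_div_pos_of_nat (n := j))
  filter_upwards [hcount] with x hx c hc
  obtain ⟨j, hj⟩ := exists_nat_one_div_lt hc
  exact hmono x hj.le (hx j)

namespace ErgodicShift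

variable {μ : Measure (Config A d)} [IsProbabilityMeasure μ]

lemma ae_forall_exists_vol_lt_of_isCopyPacking (hA : 2 ≤ A) (hd : 1 ≤ d) (hμ : ErgodicShift μ)
    {h α : ℝ} (hh : HasEntropyRate μ h) (hα : 0 < α) :
    ∀ᵐ x ∂μ, ∀ c > 0, ∃ k, ∀ᶠ n : ℕ in atTop, ∀ Z Z',
      IsCopyPacking x (h - α) k n Z Z' → (vol Z : ℝ) < c * (n : ℝ) ^ d := by
  refine ae_forall_pos (fun x c c' hcc ⟨k, hk⟩ => ⟨k, hk.mono fun n hn Z Z' hZ =>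
    (hn Z Z' hZ).trans_le (by gcongr)⟩) fun c hc => ?_
  obtain ⟨k, hk⟩ := (hμ.eventually_ae_vol_lt_of_isCopyPacking hA hd hh hα hc).exists
  exact hk.mono fun x hx => ⟨k, hx⟩

lemma ae_forall_exists_vol_atypical_le (hA : 2 ≤ A) (hd : 1 ≤ d) (hμ : ErgodicShift μ)
    {h η : ℝ} (hh : HasEntropyRate μ h) (hη : 0 < η) :
    ∀ᵐ x ∂μ, ∀ c > 0, ∃ T : (k : ℕ) → Finset (Word A d k),
      (∀ᶠ k : ℕ in atTop, ((T k).card : ℝ) ≤ (A : ℝ) ^ ((k : ℝ) ^ d * (h + η))) ∧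
      ∀ᶠ n : ℕ in atTop, ∀ Z, IsPacking Z n → (∀ b ∈ Z, wordAt x b.2 b.1 ∉ T b.2) →
        (vol Z : ℝ) ≤ c * (n : ℝ) ^ d := by
  refine ae_forall_pos (fun x c c' hcc ⟨T, hT, hx⟩ => ⟨T, hT, hx.mono fun n hn Z hZ hZT =>
    (hn Z hZ hZT).trans (by gcongr)⟩) fun c hc => ?_
  obtain ⟨T, hT, hT_ae⟩ := hμ.exists_ae_vol_atypical_le hA hd hh hη hc
  exact hT_ae.mono fun x hx => ⟨T, hT, hx⟩

end ErgodicShift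

/-- The regions parsed at scales `k` with an atypical number `M_k` of
distinct parsed `k`-words have upper asymptotic density zero, almost surely. -/
theorem sru_atypical_scales_null_density
    (A d : ℕ) (hA : 2 ≤ A) (hd : 1 ≤ d)
    (μ : Measure (Config A d)) [IsProbabilityMeasure μ] (hμ : ErgodicShift μ)
    (hμ' : ℝ) (hrate : HasEntropyRate μ hμ')
    (φ : ℝ) (hφ0 : 0 < φ) (hφ1 : φ < 1) (α0 : ℝ) (hα0 : 0 < α0) :
    ∀ᵐ x ∂μ,
      upperDensity (⋃ k ∈ {k : ℕ |
          (A : ℝ) ^ ((k : ℝ) ^ d * (hμ' + α0)) ≤ (Mk φ x k : ℝ) ∨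
          (Mk φ x k : ℝ) ≤ (A : ℝ) ^ ((k : ℝ) ^ d * (hμ' - α0))}, Lregion φ x k) = 0 := by
  filter_upwards [hμ.ae_forall_exists_vol_lt_of_isCopyPacking hA hd hrate hα0,
    hμ.ae_forall_exists_vol_atypical_le hA hd hrate (half_pos hα0)] with x hx_copy hx_atypical
  obtain ⟨q₀, q₁, hq⟩ := exists_isScaleSeq hd hφ0 hφ1 x
  have hrate_nonneg : 0 ≤ hμ' := hrate.nonneg hA
  have hmany := hq.hasZeroDensity_of_rpow_le_Mk hA hd hφ1 (β := hμ' + α0 / 2) (γ := hμ' + α0)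
    (by linarith) (by linarith) hx_atypical
  have hfew := hq.hasZeroDensity_of_Mk_le_rpow hd hφ0 hx_copy
  have hsplit := Set.biUnion_union {k : ℕ | (A : ℝ) ^ ((k : ℝ) ^ d * (hμ' + α0)) ≤ (Mk φ x k : ℝ)}
    {k : ℕ | (Mk φ x k : ℝ) ≤ (A : ℝ) ^ ((k : ℝ) ^ d * (hμ' - α0))} (Lregion φ x)
  exact ((hmany.union hfew).mono hsplit.subset).upperDensity_eq_zero

end SRU1408
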